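/- arXiv:1810.05707 — 6 statements merged into one kernel-verified Lean document; each statement's English description precedes it below -/
import Mathlib

section
/- Let λ ∈ (0,∞) and let 𝓕 be a family of λ-Lipschitz maps between metric spaces. The following are equivalent: (i) 𝓕 factors the Hamming cubes; (ii) 𝓕 crudely factors the Hamming cubes; (iii) limsup_n a_n(𝓕) > 0; (iv) for each 1 < p < ∞, limsup_n b_{p,n}(𝓕) > 0; (v) for some 1 < p < ∞, limsup_n b_{p,n}(𝓕) > 0. -/
/-!
The implications from factoring to crude factoring to `limsup a_n > 0` are direct, and every
constant admissible for `b_{p,n}` is admissible for `a_n` by Jensen's inequality (`mem_aSet`). The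
substance is that `limsup b_{p,n} > 0` for one `p > 1` makes `𝓕` factor the Hamming cubes
(`factors_of_limsup`).

For a pseudometric `ϱ` on `2^ι` let `U(ϱ) = |ι|^{p-1} ∑ᵢ 𝔼 ϱ(ε, dᵢε)^p` and
`V(ϱ) = 𝔼 ϱ(ε, -ε)^p`. Convexity of `x ↦ x^p` and the triangle inequality give `V ≤ U`. Strict
convexity shows that `V = U` only for multiples of the Hamming metric (`rigid`); by compactness of
the set of normalised pairs of pseudometrics on a fixed cube, if `U - V` is small relative to `U(ϱ)`
for both `ϱ_X^f` and `ϱ_Y^f`, then both are nearly multiples of the Hamming metric (`stability`).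

It remains to find `f` on `2^N` that is nearly extremal for both metrics at once, with
`U(ϱ_Y) ≥ τ U(ϱ_X)`. Cubes whose index set has `N^k` elements are viewed as `k` nested levels of
blocks of size `N`. Averaging over translates of subcubes, the quantities `U` computed at successive
levels form decreasing sequences for both metrics, and their successive differences are averages of
`U - V` over copies of `2^N`. If `U(ϱ_Y) - τ U(ϱ_X) ≤ K ((U - V)(ϱ_X) + (U - V)(ϱ_Y))` held for
every map on `2^N`, the right-hand sides would telescope over the levels (`iter`), giving
`k (V(ϱ_Y) - τ U(ϱ_X)) ≤ K (1 + λ^p) U(ϱ_X)`. For large `k` this contradicts the existence, in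
every dimension, of maps with `V(ϱ_Y) > θ U(ϱ_X)`, where `θ = 2τ`; such maps come from
`limsup b_{p,n} > 0` by grouping coordinates (`spread`).
-/

open Finset

noncomputable section

/-- Normalized Hamming distance on the cube `{±1}^n` (modeled as `Fin n → Bool`). -/
def hdist (n : ℕ) (ε δ : Fin n → Bool) : ℝ :=
  ((Finset.univ.filter fun i => ε i ≠ δ i).card : ℝ) / n

/-- `-ε`: flip all coordinates. -/
def negCube {n : ℕ} (ε : Fin n → Bool) : Fin n → Bool := fun i => !(ε i)

/-- `d_i ε`: flip the `i`-th coordinate. -/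
def flipCoord {n : ℕ} (i : Fin n) (ε : Fin n → Bool) : Fin n → Bool :=
  Function.update ε i (!(ε i))

/-- Expectation with respect to the uniform probability measure on the cube. -/
def cubeE (n : ℕ) (Φ : (Fin n → Bool) → ℝ) : ℝ :=
  (∑ ε : Fin n → Bool, Φ ε) / 2 ^ n

/-- Lipschitz constant of a map from the cube (with metric `hdist`) into a metric space,
with the convention `0 / 0 = 0`. -/
def cubeLip {n : ℕ} {X : Type} [MetricSpace X] (f : (Fin n → Bool) → X) : ℝ :=
  sSup { r : ℝ | ∃ ε δ, r = dist (f ε) (f δ) / hdist n ε δ }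

/-- A map between (bundled) metric spaces. -/
structure MetricMap where
  X : Type
  Y : Type
  mX : MetricSpace X
  mY : MetricSpace Y
  F : X → Y

attribute [instance] MetricMap.mX MetricMap.mY

/-- `a_n(𝓕)`: infimum of those `a > 0` such that for each `F : X → Y` in `𝓕` and each
`f : 2^n → X`, `𝔼 ϱ_Y^f(ε,−ε) ≤ a·Lip(f)`. -/
def aConst (𝓕 : Set MetricMap) (n : ℕ) : ℝ :=
  sInf { a : ℝ | 0 < a ∧ ∀ G ∈ 𝓕, ∀ f : (Fin n → Bool) → G.X,
    cubeE n (fun ε => dist (G.F (f ε)) (G.F (f (negCube ε)))) ≤ a * cubeLip f }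

/-- `b_{p,n}(𝓕)`: infimum of those `b > 0` such that for each `F : X → Y` in `𝓕` and each
`f : 2^n → X`, `𝔼 ϱ_Y^f(ε,−ε)^p ≤ b^p n^{p−1} ∑_i 𝔼 ϱ_X^f(ε,d_iε)^p`. -/
def bConst (𝓕 : Set MetricMap) (p : ℝ) (n : ℕ) : ℝ :=
  sInf { b : ℝ | 0 < b ∧ ∀ G ∈ 𝓕, ∀ f : (Fin n → Bool) → G.X,
    cubeE n (fun ε => dist (G.F (f ε)) (G.F (f (negCube ε))) ^ p)
      ≤ b ^ p * (n : ℝ) ^ (p - 1) *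
        ∑ i : Fin n, cubeE n (fun ε => dist (f ε) (f (flipCoord i ε)) ^ p) }

/-- `𝓕` factors the Hamming cubes. -/
def FactorsHammingCubes (𝓕 : Set MetricMap) : Prop :=
  ∃ c : ℝ, 0 < c ∧ ∀ D : ℝ, 1 < D → ∀ n : ℕ, 0 < n →
    ∃ G ∈ 𝓕, ∃ f : (Fin n → Bool) → G.X, ∃ a b : ℝ, 0 < a ∧ 0 < b ∧ a * c ≤ b ∧
      ∀ ε δ : Fin n → Bool,
        a / D * hdist n ε δ ≤ dist (f ε) (f δ) ∧
        dist (f ε) (f δ) ≤ a * D * hdist n ε δ ∧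
        b / D * hdist n ε δ ≤ dist (G.F (f ε)) (G.F (f δ)) ∧
        dist (G.F (f ε)) (G.F (f δ)) ≤ b * D * hdist n ε δ

/-- `𝓕` crudely factors the Hamming cubes. -/
def CrudelyFactorsHammingCubes (𝓕 : Set MetricMap) : Prop :=
  ∃ c D : ℝ, 0 < c ∧ 0 < D ∧ ∀ n : ℕ, 0 < n →
    ∃ G ∈ 𝓕, ∃ f : (Fin n → Bool) → G.X, ∃ a b : ℝ, 0 < a ∧ 0 < b ∧ a * c ≤ b ∧
      ∀ ε δ : Fin n → Bool,
        a / D * hdist n ε δ ≤ dist (f ε) (f δ) ∧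
        dist (f ε) (f δ) ≤ a * D * hdist n ε δ ∧
        b / D * hdist n ε δ ≤ dist (G.F (f ε)) (G.F (f δ)) ∧
        dist (G.F (f ε)) (G.F (f δ)) ≤ b * D * hdist n ε δ

set_option linter.unusedSectionVars false

namespace HCube

/-! ### Averages and translations on the cube -/

section Basic

variable {ι : Type} [Fintype ι] [DecidableEq ι]

/-- Translation of the cube by `w`: the coordinates in the support of `w` are flipped. -/
def tr (w ε : ι → Bool) : ι → Bool := fun i => xor (ε i) (w i)

lemma tr_comp (v w ε : ι → Bool) : tr (tr v w) ε = tr v (tr w ε) := by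
  funext i; simp [tr]

lemma tr_invol (w : ι → Bool) : Function.Involutive (tr w) := by
  intro ε; funext i; simp [tr]

/-- The indicator of a finite set of coordinates, as a point of the cube. -/
def ind (S : Finset ι) : ι → Bool := fun i => decide (i ∈ S)

/-- Expectation over the cube indexed by an arbitrary finite type. -/
def av (Φ : (ι → Bool) → ℝ) : ℝ := (∑ ε, Φ ε) / 2 ^ Fintype.card ι

lemma av_tr (w : ι → Bool) (Φ : (ι → Bool) → ℝ) : av (fun ε => Φ (tr w ε)) = av Φ := by
  unfold av
  congr 1
  exact Equiv.sum_comp (Function.Involutive.toPerm _ (tr_invol w)) Φ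

lemma card_cube : (∑ _ε : ι → Bool, (1 : ℝ)) = 2 ^ Fintype.card ι := by
  simp

lemma av_const (c : ℝ) : av (fun _ : ι → Bool => c) = c := by
  unfold av; simp

lemma av_mono {Φ Ψ : (ι → Bool) → ℝ} (h : ∀ ε, Φ ε ≤ Ψ ε) : av Φ ≤ av Ψ := by
  unfold av
  gcongr with ε
  exact h ε

lemma av_nonneg {Φ : (ι → Bool) → ℝ} (h : ∀ ε, 0 ≤ Φ ε) : 0 ≤ av Φ := by
  rw [← av_const (ι := ι) 0]; exact av_mono h

lemma av_add (Φ Ψ : (ι → Bool) → ℝ) : av (fun ε => Φ ε + Ψ ε) = av Φ + av Ψ := by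
  unfold av; rw [Finset.sum_add_distrib]; ring

lemma av_sub (Φ Ψ : (ι → Bool) → ℝ) : av (fun ε => Φ ε - Ψ ε) = av Φ - av Ψ := by
  unfold av; rw [Finset.sum_sub_distrib]; ring

lemma av_mul (c : ℝ) (Φ : (ι → Bool) → ℝ) : av (fun ε => c * Φ ε) = c * av Φ := by
  unfold av; rw [← Finset.mul_sum]; ring

lemma av_sum {κ : Type} (s : Finset κ) (Φ : κ → (ι → Bool) → ℝ) :
    av (fun ε => ∑ j ∈ s, Φ j ε) = ∑ j ∈ s, av (Φ j) := by
  unfold av; rw [Finset.sum_comm, Finset.sum_div]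

lemma av_comm {κ : Type} [Fintype κ] [DecidableEq κ] (Φ : (ι → Bool) → (κ → Bool) → ℝ) :
    av (fun ε => av (Φ ε)) = av (fun δ => av (fun ε => Φ ε δ)) := by
  unfold av
  rw [← Finset.sum_div, ← Finset.sum_div, Finset.sum_comm, div_right_comm]

lemma av_exists_lt {Φ Ψ : (ι → Bool) → ℝ} (h : av Φ < av Ψ) : ∃ ε, Φ ε < Ψ ε := by
  by_contra! hc
  exact absurd (av_mono hc) (not_le.mpr h)

/-- A pointwise inequality whose averages agree is an equality at every point. -/
lemma av_eq_pointwise {Φ Ψ : (ι → Bool) → ℝ} (h : ∀ ε, Φ ε ≤ Ψ ε) (he : av Ψ ≤ av Φ)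
    (ε : ι → Bool) : Φ ε = Ψ ε := by
  have h2 : ∑ ε, Φ ε = ∑ ε, Ψ ε := by
    apply le_antisymm (Finset.sum_le_sum fun ε _ => h ε)
    unfold av at he
    exact (div_le_div_iff_of_pos_right (by positivity)).mp he
  exact (Finset.sum_eq_sum_iff_of_le fun i _ => h i).mp h2 ε (Finset.mem_univ _)

lemma le_av_mul {Φ : (ι → Bool) → ℝ} (h : ∀ ε, 0 ≤ Φ ε) (ε : ι → Bool) :
    Φ ε ≤ 2 ^ Fintype.card ι * av Φ := by
  unfold av
  rw [mul_div_cancel₀ _ (by positivity)]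
  exact Finset.single_le_sum (fun i _ => h i) (Finset.mem_univ ε)

/-- Jensen's inequality on the cube. -/
lemma av_rpow_le {p : ℝ} (hp : 1 < p) {Φ : (ι → Bool) → ℝ} (h : ∀ ε, 0 ≤ Φ ε) :
    av Φ ^ p ≤ av (fun ε => Φ ε ^ p) := by
  have := Real.rpow_arith_mean_le_arith_mean_rpow Finset.univ
    (fun _ : ι → Bool => 1 / (2 : ℝ) ^ Fintype.card ι) Φ (fun _ _ => by positivity)
    (by rw [← Finset.sum_div, card_cube]; field_simp) (fun i _ => h i) hp.le
  unfold av
  rw [← Finset.mul_sum, ← Finset.mul_sum] at this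
  convert this using 2 <;> ring

/-- Pseudometrics on the cube, as functions of two variables. -/
structure PM (ϱ : (ι → Bool) → (ι → Bool) → ℝ) : Prop where
  nonneg : ∀ ε δ, 0 ≤ ϱ ε δ
  self : ∀ ε, ϱ ε ε = 0
  symm : ∀ ε δ, ϱ ε δ = ϱ δ ε
  tri : ∀ ε δ η, ϱ ε η ≤ ϱ ε δ + ϱ δ η

/-- The mean `p`-th power of the displacement `ϱ(ε, ε ⊕ w)`. -/
def q (p : ℝ) (ϱ : (ι → Bool) → (ι → Bool) → ℝ) (w : ι → Bool) : ℝ :=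
  av fun ε => ϱ ε (tr w ε) ^ p

/-- The edge side of the type inequality: `n^{p-1} ∑ᵢ 𝔼 ϱ(ε, dᵢε)^p`. -/
def U (p : ℝ) (ϱ : (ι → Bool) → (ι → Bool) → ℝ) : ℝ :=
  (Fintype.card ι : ℝ) ^ (p - 1) * ∑ i, q p ϱ (ind {i})

/-- The diagonal side of the type inequality: `𝔼 ϱ(ε, -ε)^p`. -/
def V (p : ℝ) (ϱ : (ι → Bool) → (ι → Bool) → ℝ) : ℝ := q p ϱ (ind Finset.univ)

lemma q_nonneg {p : ℝ} {ϱ : (ι → Bool) → (ι → Bool) → ℝ} (h : PM ϱ) (w : ι → Bool) :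
    0 ≤ q p ϱ w := av_nonneg fun _ => Real.rpow_nonneg (h.nonneg _ _) _

lemma U_nonneg {p : ℝ} {ϱ : (ι → Bool) → (ι → Bool) → ℝ} (h : PM ϱ) : 0 ≤ U p ϱ :=
  mul_nonneg (by positivity) (Finset.sum_nonneg fun _ _ => q_nonneg h _)

lemma q_le_mul {p l : ℝ} (hp : 1 < p) (hl : 0 < l) {ϱ σ : (ι → Bool) → (ι → Bool) → ℝ}
    (hϱ : PM ϱ) (hσ : PM σ) (h : ∀ ε δ, σ ε δ ≤ l * ϱ ε δ) (w : ι → Bool) :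
    q p σ w ≤ l ^ p * q p ϱ w := by
  unfold q
  rw [← av_mul]
  refine av_mono fun ε => ?_
  rw [← Real.mul_rpow hl.le (hϱ.nonneg _ _)]
  exact Real.rpow_le_rpow (hσ.nonneg _ _) (h _ _) (by linarith)

lemma U_le_mul {p l : ℝ} (hp : 1 < p) (hl : 0 < l) {ϱ σ : (ι → Bool) → (ι → Bool) → ℝ}
    (hϱ : PM ϱ) (hσ : PM σ) (h : ∀ ε δ, σ ε δ ≤ l * ϱ ε δ) :
    U p σ ≤ l ^ p * U p ϱ := by
  unfold U
  rw [mul_left_comm]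
  refine mul_le_mul_of_nonneg_left ?_ (by positivity)
  rw [Finset.mul_sum]
  exact Finset.sum_le_sum fun i _ => q_le_mul hp hl hϱ hσ h _

/-! ### The elementary convexity inequality and subadditivity over blocks -/

/-- The weighted power mean inequality for two terms, strict unless `x / a = y / b`. -/
lemma two_term {p a b x y : ℝ} (hp : 1 < p) (ha : 0 < a) (hb : 0 < b) (hx : 0 ≤ x)
    (hy : 0 ≤ y) :
    (x + y) ^ p ≤ (a + b) ^ (p - 1) * (x ^ p / a ^ (p - 1) + y ^ p / b ^ (p - 1)) ∧
    (x / a ≠ y / b →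
      (x + y) ^ p < (a + b) ^ (p - 1) * (x ^ p / a ^ (p - 1) + y ^ p / b ^ (p - 1))) := by
  have hs : 0 < a + b := by linarith
  have e1 : ∀ c : ℝ, 0 < c → c ^ p = c ^ (p - 1) * c := fun c hc => by
    rw [Real.rpow_sub_one hc.ne']; field_simp
  have key : (a / (a + b)) • (x / a) + (b / (a + b)) • (y / b) = (x + y) / (a + b) := by
    simp only [smul_eq_mul]; field_simp
  have hA : 0 < a ^ (p - 1) := Real.rpow_pos_of_pos ha _
  have hB : 0 < b ^ (p - 1) := Real.rpow_pos_of_pos hb _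
  have hS : 0 < (a + b) ^ (p - 1) := Real.rpow_pos_of_pos hs _
  have lhs : (a + b) ^ p * ((x + y) / (a + b)) ^ p = (x + y) ^ p := by
    rw [← Real.mul_rpow hs.le (by positivity), mul_div_cancel₀ _ hs.ne']
  have rhs : (a + b) ^ p * ((a / (a + b)) • (x / a) ^ p + (b / (a + b)) • (y / b) ^ p)
      = (a + b) ^ (p - 1) * (x ^ p / a ^ (p - 1) + y ^ p / b ^ (p - 1)) := by
    rw [Real.div_rpow hx ha.le, Real.div_rpow hy hb.le, e1 a ha, e1 b hb, e1 (a + b) hs]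
    simp only [smul_eq_mul]
    field_simp
  have hw : a / (a + b) + b / (a + b) = 1 := by field_simp
  have hP : 0 < (a + b) ^ p := Real.rpow_pos_of_pos hs _
  constructor
  · have := (strictConvexOn_rpow hp).convexOn.2 (Set.mem_Ici.2 (by positivity : 0 ≤ x / a))
      (Set.mem_Ici.2 (by positivity : 0 ≤ y / b)) (by positivity : 0 ≤ a / (a + b))
      (by positivity : 0 ≤ b / (a + b)) hw
    rw [key] at this
    rw [← lhs, ← rhs]
    exact mul_le_mul_of_nonneg_left this hP.le
  · intro hne
    have := (strictConvexOn_rpow hp).2 (Set.mem_Ici.2 (by positivity : 0 ≤ x / a))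
      (Set.mem_Ici.2 (by positivity : 0 ≤ y / b)) hne (by positivity : 0 < a / (a + b))
      (by positivity : 0 < b / (a + b)) hw
    rw [key] at this
    rw [← lhs, ← rhs]
    exact mul_lt_mul_of_pos_left this hP

/-- `two_term` for the displacements by `w` and then by `v`. -/
lemma step_le {p a b : ℝ} (hp : 1 < p) (ha : 0 < a) (hb : 0 < b)
    {ϱ : (ι → Bool) → (ι → Bool) → ℝ} (h : PM ϱ) (v w ε : ι → Bool) :
    ϱ ε (tr (tr v w) ε) ^ p ≤ (a + b) ^ (p - 1) * (ϱ ε (tr w ε) ^ p / a ^ (p - 1)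
      + ϱ (tr w ε) (tr v (tr w ε)) ^ p / b ^ (p - 1)) := by
  refine le_trans ?_ (two_term hp ha hb (h.nonneg _ _) (h.nonneg _ _)).1
  rw [tr_comp]
  exact Real.rpow_le_rpow (h.nonneg _ _) (h.tri _ _ _) (by linarith)

lemma av_step {p a b : ℝ} (ϱ : (ι → Bool) → (ι → Bool) → ℝ) (v w : ι → Bool) :
    av (fun ε => (a + b) ^ (p - 1) * (ϱ ε (tr w ε) ^ p / a ^ (p - 1)
      + ϱ (tr w ε) (tr v (tr w ε)) ^ p / b ^ (p - 1)))
    = (a + b) ^ (p - 1) * (q p ϱ w / a ^ (p - 1) + q p ϱ v / b ^ (p - 1)) := by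
  rw [av_mul]
  simp only [div_eq_inv_mul]
  rw [av_add, av_mul, av_mul, av_tr w (fun ε => ϱ ε (tr v ε) ^ p)]
  rfl

lemma ind_union {S T : Finset ι} (h : Disjoint S T) : ind (S ∪ T) = tr (ind T) (ind S) := by
  funext i
  have := Finset.disjoint_left.mp h
  by_cases h1 : i ∈ S <;> by_cases h2 : i ∈ T <;> simp_all [ind, tr]

/-- Flipping the block `S` costs at most `|S|^{p-1}` times the sum of the edge costs in `S`. -/
lemma q_ind_le {p : ℝ} (hp : 1 < p) {ϱ : (ι → Bool) → (ι → Bool) → ℝ} (h : PM ϱ)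
    (S : Finset ι) : q p ϱ (ind S) ≤ (S.card : ℝ) ^ (p - 1) * ∑ i ∈ S, q p ϱ (ind {i}) := by
  have hp0 : p ≠ 0 := by linarith
  induction S using Finset.induction_on with
  | empty =>
    have : ∀ ε : ι → Bool, tr (ind ∅) ε = ε := fun ε => by funext i; simp [tr, ind]
    simp [q, this, h.self, Real.zero_rpow hp0, av_const]
  | insert a S ha ih =>
    rcases S.eq_empty_or_nonempty with rfl | hS
    · simp
    have hc : (0 : ℝ) < S.card := by exact_mod_cast hS.card_pos
    have hC : (0 : ℝ) < (S.card : ℝ) ^ (p - 1) := Real.rpow_pos_of_pos hc _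
    rw [Finset.insert_eq, Finset.union_comm, ind_union (by simpa using ha),
      Finset.union_comm, ← Finset.insert_eq, Finset.sum_insert ha, Finset.card_insert_of_notMem ha]
    calc q p ϱ (tr (ind {a}) (ind S)) ≤ _ := av_mono fun ε => step_le hp hc one_pos h _ _ ε
      _ = _ := av_step _ _ _
      _ ≤ _ := by
        push_cast
        rw [Real.one_rpow, div_one, add_comm (q p ϱ (ind S) / _)]
        gcongr
        rw [div_le_iff₀' hC]
        exact ih

lemma V_le_U {p : ℝ} (hp : 1 < p) {ϱ : (ι → Bool) → (ι → Bool) → ℝ} (h : PM ϱ) :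
    V p ϱ ≤ U p ϱ := q_ind_le hp h _

end Basic

/-! ### Restriction to subcubes -/

section Blocks

variable {α κ : Type} [Fintype α] [DecidableEq α] [Fintype κ] [DecidableEq κ]

/-- The pullback of `ϱ` to the copy `δ ↦ ε ⊕ T δ` of a smaller cube. -/
def pb (ϱ : (α → Bool) → (α → Bool) → ℝ) (T : (κ → Bool) → α → Bool) (ε : α → Bool) :
    (κ → Bool) → (κ → Bool) → ℝ := fun δ δ' => ϱ (tr (T δ) ε) (tr (T δ') ε)

/-- Averaging the displacement by `w` over all translates of an additively embedded subcube gives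
the displacement by `T w` in the big cube. -/
lemma av_q_pb (p : ℝ) (ϱ : (α → Bool) → (α → Bool) → ℝ) (T : (κ → Bool) → α → Bool)
    (hT : ∀ v w, T (tr v w) = tr (T v) (T w)) (w : κ → Bool) :
    av (fun ε => q p (pb ϱ T ε) w) = q p ϱ (T w) := by
  unfold q
  rw [av_comm]
  have : ∀ δ : κ → Bool, av (fun ε => pb ϱ T ε δ (tr w δ) ^ p) = q p ϱ (T w) := by
    intro δ
    unfold pb
    simp only [hT, tr_comp]
    exact av_tr (T δ) (fun ε => ϱ ε (tr (T w) ε) ^ p)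
  simp only [this]
  exact av_const _

lemma av_U_pb (p : ℝ) (ϱ : (α → Bool) → (α → Bool) → ℝ) (T : (κ → Bool) → α → Bool)
    (hT : ∀ v w, T (tr v w) = tr (T v) (T w)) :
    av (fun ε => U p (pb ϱ T ε))
      = (Fintype.card κ : ℝ) ^ (p - 1) * ∑ i, q p ϱ (T (ind {i})) := by
  unfold U
  rw [av_mul, av_sum]
  simp only [av_q_pb p ϱ T hT]

lemma av_V_pb (p : ℝ) (ϱ : (α → Bool) → (α → Bool) → ℝ) (T : (κ → Bool) → α → Bool)
    (hT : ∀ v w, T (tr v w) = tr (T v) (T w)) :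
    av (fun ε => V p (pb ϱ T ε)) = q p ϱ (T (ind Finset.univ)) :=
  av_q_pb p ϱ T hT _

/-- The block map: coordinate `x` of the big cube copies coordinate `π x` of the small one. -/
def blk (π : α → κ) (δ : κ → Bool) : α → Bool := fun x => δ (π x)

lemma blk_tr (π : α → κ) (v w : κ → Bool) : blk π (tr v w) = tr (blk π v) (blk π w) := rfl

lemma blk_univ (π : α → κ) : blk π (ind Finset.univ) = ind Finset.univ := by
  funext x; simp [blk, ind]

lemma blk_single (π : α → κ) (j : κ) :
    blk π (ind {j}) = ind (Finset.univ.filter fun x => π x = j) := by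
  funext x; simp [blk, ind]

/-- The fibre map: the small cube is placed in the block `{j} × κ` of `2^{α × κ}`. -/
def fib (j : α) (δ : κ → Bool) : α × κ → Bool := fun x => decide (x.1 = j) && δ x.2

lemma fib_tr (j : α) (v w : κ → Bool) : fib j (tr v w) = tr (fib j v) (fib j w) := by
  funext x
  by_cases h : x.1 = j <;> simp [fib, tr, h]

lemma fib_univ (j : α) : fib j (ind (Finset.univ : Finset κ))
    = ind (Finset.univ.filter fun x : α × κ => x.1 = j) := by
  funext x; simp [fib, ind]

lemma fib_single (j : α) (b : κ) : fib j (ind {b}) = ind {(j, b)} := by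
  funext x
  obtain ⟨x, y⟩ := x
  simp [fib, ind]

/-- Grouping the coordinates into blocks of at most `m` coordinates costs at most a factor
`(|κ| m)^{p-1}` on the edge side. -/
lemma av_U_blk_le {p : ℝ} (hp : 1 < p) {ϱ : (α → Bool) → (α → Bool) → ℝ} (h : PM ϱ)
    (π : α → κ) (m : ℕ) (hm : ∀ j, (Finset.univ.filter fun x => π x = j).card ≤ m) :
    av (fun ε => U p (pb ϱ (blk π) ε))
      ≤ ((Fintype.card κ : ℝ) * m) ^ (p - 1) * ∑ i, q p ϱ (ind {i}) := by
  rw [av_U_pb p ϱ _ (blk_tr π), Real.mul_rpow (by positivity) (by positivity), mul_assoc]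
  refine mul_le_mul_of_nonneg_left ?_ (by positivity)
  rw [← Finset.sum_fiberwise (s := Finset.univ) (g := π), Finset.mul_sum]
  refine Finset.sum_le_sum fun j _ => ?_
  rw [blk_single]
  refine (q_ind_le hp h _).trans ?_
  refine mul_le_mul_of_nonneg_right ?_ (Finset.sum_nonneg fun _ _ => q_nonneg h _)
  exact Real.rpow_le_rpow (by positivity) (by exact_mod_cast hm j) (by linarith)

/-- The edge side of the big cube is the normalised sum of the edge sides over all fine blocks. -/
lemma U_nested {p : ℝ} (ϱ : (α × κ → Bool) → (α × κ → Bool) → ℝ) :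
    (Fintype.card α : ℝ) ^ (p - 1) * ∑ j : α, av (fun ε => U p (pb ϱ (fib (κ := κ) j) ε))
      = U p ϱ := by
  simp only [av_U_pb p ϱ _ (fib_tr _), fib_single]
  unfold U
  rw [Fintype.sum_prod_type, ← Finset.mul_sum, ← mul_assoc, Fintype.card_prod, Nat.cast_mul,
    Real.mul_rpow (by positivity) (by positivity)]

/-- The diagonals of the fine blocks are the edges of the coarse cube. -/
lemma V_nested {p : ℝ} (ϱ : (α × κ → Bool) → (α × κ → Bool) → ℝ) :
    (Fintype.card α : ℝ) ^ (p - 1) * ∑ j : α, av (fun ε => V p (pb ϱ (fib (κ := κ) j) ε))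
      = av (fun ε => U p (pb ϱ (blk Prod.fst) ε)) := by
  simp only [av_V_pb p ϱ _ (fib_tr _), av_U_pb p ϱ _ (blk_tr _), fib_univ, blk_single]

end Blocks

/-! ### The rigidity of the equality case -/

section Rigid

lemma negCube_eq {n : ℕ} (ε : Fin n → Bool) : negCube ε = tr (ind Finset.univ) ε := by
  funext i; simp [negCube, tr, ind]

lemma flipCoord_eq {n : ℕ} (i : Fin n) (ε : Fin n → Bool) : flipCoord i ε = tr (ind {i}) ε := by
  funext j
  by_cases h : j = i
  · subst h; simp [flipCoord, tr, ind]
  · simp [flipCoord, tr, ind, h]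

lemma cubeE_eq {n : ℕ} (Φ : (Fin n → Bool) → ℝ) : cubeE n Φ = av Φ := by
  simp [cubeE, av]

lemma hdist_symm {n : ℕ} (ε δ : Fin n → Bool) : hdist n ε δ = hdist n δ ε := by
  simp [hdist, ne_comm]

lemma hdist_pos {n : ℕ} {ε δ : Fin n → Bool} (h : ε ≠ δ) : 0 < hdist n ε δ := by
  obtain ⟨i, hi⟩ := Function.ne_iff.mp h
  have : 0 < n := Nat.lt_of_le_of_lt (Nat.zero_le _) i.2
  unfold hdist
  have h2 : 0 < (Finset.univ.filter fun i => ε i ≠ δ i).card :=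
    Finset.card_pos.mpr ⟨i, by simpa using hi⟩
  positivity

lemma hdist_self {n : ℕ} (ε : Fin n → Bool) : hdist n ε ε = 0 := by simp [hdist]

lemma hdist_neg {n : ℕ} (hn : 0 < n) (ε : Fin n → Bool) : hdist n ε (negCube ε) = 1 := by
  have : (n : ℝ) ≠ 0 := by positivity
  simp [hdist, negCube, this]

lemma hdist_flip {n : ℕ} (i : Fin n) (ε : Fin n → Bool) :
    hdist n ε (flipCoord i ε) = 1 / n := by
  have : (Finset.univ.filter fun j => ε j ≠ flipCoord i ε j) = {i} := by
    ext j
    rw [Finset.mem_filter, Finset.mem_singleton]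
    by_cases h : j = i
    · subst h; simp [flipCoord]
    · simp [flipCoord, h]
  unfold hdist
  rw [this]; simp

/-- If the type inequality is an equality, strict convexity forces every point `δ` to lie
metrically between `ε` and `-ε`, at the proportion given by the Hamming distance. -/
lemma rigid_point {n : ℕ} {p : ℝ} (hp : 1 < p) {ϱ : (Fin n → Bool) → (Fin n → Bool) → ℝ}
    (h : PM ϱ) (he : U p ϱ = V p ϱ) (ε δ : Fin n → Bool) :
    ϱ ε δ = hdist n ε δ * ϱ ε (negCube ε) := by
  set S := Finset.univ.filter fun i => ε i ≠ δ i with hS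
  have hδ : tr (ind S) ε = δ := by
    funext i
    by_cases hi : ε i = δ i
    · simp [tr, ind, hS, hi]
    · cases h1 : ε i <;> cases h2 : δ i <;> simp_all [tr, ind]
  rcases S.eq_empty_or_nonempty with h0 | hSn
  · have : ε = δ := by rw [← hδ, h0]; funext i; simp [tr, ind]
    subst this
    simp [hdist_self, h.self]
  rcases Sᶜ.eq_empty_or_nonempty with h1 | hTn
  · have hU : S = Finset.univ := by simpa using h1
    have hn : 0 < n := Nat.lt_of_le_of_lt (Nat.zero_le _) hSn.choose.2
    have : δ = negCube ε := by rw [negCube_eq, ← hδ, hU]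
    rw [this, hdist_neg hn, one_mul]
  have ha : (0 : ℝ) < S.card := by exact_mod_cast hSn.card_pos
  have hb : (0 : ℝ) < Sᶜ.card := by exact_mod_cast hTn.card_pos
  have hab : (S.card : ℝ) + Sᶜ.card = n := by
    have := Finset.card_add_card_compl S
    rw [Fintype.card_fin] at this
    exact_mod_cast this
  have hA : (0 : ℝ) < (S.card : ℝ) ^ (p - 1) := Real.rpow_pos_of_pos ha _
  have hB : (0 : ℝ) < (Sᶜ.card : ℝ) ^ (p - 1) := Real.rpow_pos_of_pos hb _
  have hu : ind (Finset.univ : Finset (Fin n)) = tr (ind Sᶜ) (ind S) := by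
    rw [← ind_union disjoint_compl_right, Finset.union_compl]
  have havg : av (fun ε => ((S.card : ℝ) + Sᶜ.card) ^ (p - 1) *
      (ϱ ε (tr (ind S) ε) ^ p / (S.card : ℝ) ^ (p - 1)
      + ϱ (tr (ind S) ε) (tr (ind Sᶜ) (tr (ind S) ε)) ^ p / (Sᶜ.card : ℝ) ^ (p - 1)))
      ≤ av (fun ε => ϱ ε (tr (tr (ind Sᶜ) (ind S)) ε) ^ p) := by
    rw [av_step]
    change _ ≤ q p ϱ _
    rw [← hu]
    change _ ≤ V p ϱ
    rw [← he, hab]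
    unfold U
    rw [Fintype.card_fin, ← Finset.sum_add_sum_compl S]
    gcongr
    · rw [div_le_iff₀' hA]; exact q_ind_le hp h S
    · rw [div_le_iff₀' hB]; exact q_ind_le hp h Sᶜ
  have hpt := av_eq_pointwise (fun ε => step_le hp ha hb h (ind Sᶜ) (ind S) ε) havg ε
  have hneg : tr (ind Sᶜ) δ = negCube ε := by
    rw [negCube_eq, hu, tr_comp, hδ]
  rw [tr_comp, hδ, hneg] at hpt
  have h2 := two_term hp ha hb (h.nonneg ε δ) (h.nonneg δ (negCube ε))
  have htri := h.tri ε δ (negCube ε)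
  have hprop : ϱ ε δ / S.card = ϱ δ (negCube ε) / Sᶜ.card := by
    by_contra hne
    have h3 := h2.2 hne
    rw [← hpt] at h3
    exact absurd (Real.rpow_le_rpow (h.nonneg _ _) htri (by linarith)) (not_le.mpr h3)
  have hsum : ϱ ε δ + ϱ δ (negCube ε) ≤ ϱ ε (negCube ε) := by
    have h3 := h2.1
    rw [← hpt] at h3
    exact (Real.rpow_le_rpow_iff (add_nonneg (h.nonneg _ _) (h.nonneg _ _)) (h.nonneg _ _)
      (by linarith)).mp h3
  have hsum' := le_antisymm hsum htri
  have hn : (n : ℝ) ≠ 0 := by rw [← hab]; positivity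
  unfold hdist
  rw [← hS, ← hsum', div_mul_eq_mul_div, eq_div_iff hn, ← hab]
  rw [div_eq_div_iff ha.ne' hb.ne'] at hprop
  linarith

/-- A pseudometric for which the type inequality is an equality is a multiple of the Hamming
metric. -/
lemma rigid {n : ℕ} {p : ℝ} (hp : 1 < p)
    {ϱ : (Fin n → Bool) → (Fin n → Bool) → ℝ} (h : PM ϱ) (he : U p ϱ = V p ϱ) :
    ∃ A : ℝ, 0 ≤ A ∧ A ^ p = U p ϱ ∧ ∀ ε δ, ϱ ε δ = A * hdist n ε δ := by
  let o : Fin n → Bool := fun _ => true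
  have hc : ∀ ε, ϱ ε (negCube ε) = ϱ o (negCube o) := by
    intro ε
    by_cases hne : ε = o
    · rw [hne]
    have h1 := rigid_point hp h he ε o
    rw [h.symm, rigid_point hp h he o ε, hdist_symm] at h1
    exact (mul_left_cancel₀ (hdist_pos hne).ne' h1).symm
  refine ⟨ϱ o (negCube o), h.nonneg _ _, ?_, fun ε δ => ?_⟩
  · rw [he]
    unfold V q
    simp only [← negCube_eq, hc]
    exact (av_const _).symm
  · rw [rigid_point hp h he, hc, mul_comm]

end Rigid

/-! ### Stability by compactness -/

section Stability

lemma q_smul {ι : Type} [Fintype ι] [DecidableEq ι] {p c : ℝ} (hc : 0 ≤ c)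
    {ϱ : (ι → Bool) → (ι → Bool) → ℝ} (h : PM ϱ) (w : ι → Bool) :
    q p (fun ε δ => c * ϱ ε δ) w = c ^ p * q p ϱ w := by
  unfold q
  rw [← av_mul]
  simp only [Real.mul_rpow hc (h.nonneg _ _)]

lemma U_smul {ι : Type} [Fintype ι] [DecidableEq ι] {p c : ℝ} (hc : 0 ≤ c)
    {ϱ : (ι → Bool) → (ι → Bool) → ℝ} (h : PM ϱ) :
    U p (fun ε δ => c * ϱ ε δ) = c ^ p * U p ϱ := by
  unfold U
  simp only [q_smul hc h]
  rw [← Finset.mul_sum]; ring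

lemma pm_smul {ι : Type} {c : ℝ} (hc : 0 ≤ c)
    {ϱ : (ι → Bool) → (ι → Bool) → ℝ} (h : PM ϱ) : PM (fun ε δ => c * ϱ ε δ) :=
  ⟨fun _ _ => mul_nonneg hc (h.nonneg _ _), fun _ => by simp [h.self],
    fun _ _ => by rw [h.symm], fun _ _ _ => by
      rw [← mul_add]; exact mul_le_mul_of_nonneg_left (h.tri _ _ _) hc⟩

variable {n : ℕ}

lemma continuous_q {p : ℝ} (hp : 1 < p) (w : Fin n → Bool) :
    Continuous fun ϱ : (Fin n → Bool) → (Fin n → Bool) → ℝ => q p ϱ w := by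
  unfold q av
  refine Continuous.div_const (continuous_finsetSum _ fun ε _ => ?_) _
  exact Continuous.rpow_const (by fun_prop) fun _ => Or.inr (by linarith)

lemma continuous_U {p : ℝ} (hp : 1 < p) :
    Continuous fun ϱ : (Fin n → Bool) → (Fin n → Bool) → ℝ => U p ϱ :=
  continuous_const.mul (continuous_finsetSum _ fun _ _ => continuous_q hp _)

lemma isClosed_PM : IsClosed {ϱ : (Fin n → Bool) → (Fin n → Bool) → ℝ | PM ϱ} := by
  have : {ϱ : (Fin n → Bool) → (Fin n → Bool) → ℝ | PM ϱ} =
      {ϱ | (∀ ε δ, 0 ≤ ϱ ε δ) ∧ (∀ ε, ϱ ε ε = 0) ∧ (∀ ε δ, ϱ ε δ = ϱ δ ε) ∧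
        ∀ ε δ η, ϱ ε η ≤ ϱ ε δ + ϱ δ η} := by
    ext ϱ
    exact ⟨fun h => ⟨h.1, h.2, h.3, h.4⟩, fun h => ⟨h.1, h.2.1, h.2.2.1, h.2.2.2⟩⟩
  rw [this]
  simp only [Set.ofPred_and, Set.ofPred_forall]
  refine IsClosed.inter ?_ (IsClosed.inter ?_ (IsClosed.inter ?_ ?_))
  · exact isClosed_iInter fun _ => isClosed_iInter fun _ => isClosed_le (by fun_prop) (by fun_prop)
  · exact isClosed_iInter fun _ => isClosed_eq (by fun_prop) (by fun_prop)
  · exact isClosed_iInter fun _ => isClosed_iInter fun _ => isClosed_eq (by fun_prop) (by fun_prop)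
  · exact isClosed_iInter fun _ => isClosed_iInter fun _ => isClosed_iInter fun _ =>
      isClosed_le (by fun_prop) (by fun_prop)

/-- A pseudometric with normalised edge side is bounded by the number of vertices. -/
lemma le_of_U_one {p : ℝ} (hp : 1 < p) {ϱ : (Fin n → Bool) → (Fin n → Bool) → ℝ} (h : PM ϱ)
    (hU : U p ϱ = 1) (ε δ : Fin n → Bool) : ϱ ε δ ≤ 2 ^ n := by
  set S := Finset.univ.filter fun i => ε i ≠ δ i with hS
  have hδ : tr (ind S) ε = δ := by
    funext i
    by_cases hi : ε i = δ i
    · simp [tr, ind, hS, hi]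
    · cases h1 : ε i <;> cases h2 : δ i <;> simp_all [tr, ind]
  have hq : q p ϱ (ind S) ≤ 1 := by
    rw [← hU]
    refine (q_ind_le hp h S).trans ?_
    unfold U
    refine mul_le_mul ?_ ?_ (Finset.sum_nonneg fun _ _ => q_nonneg h _) (by positivity)
    · exact Real.rpow_le_rpow (by positivity) (by exact_mod_cast Finset.card_le_univ S)
        (by linarith)
    · exact Finset.sum_le_sum_of_subset_of_nonneg (Finset.subset_univ _)
        fun _ _ _ => q_nonneg h _
  have h1 := le_av_mul (Φ := fun ε => ϱ ε (tr (ind S) ε) ^ p)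
    (fun _ => Real.rpow_nonneg (h.nonneg _ _) _) ε
  simp only [hδ, Fintype.card_fin] at h1
  have h2 : (1 : ℝ) ≤ 2 ^ n := one_le_pow₀ (by norm_num)
  have h3 : ϱ ε δ ^ p ≤ ((2 : ℝ) ^ n) ^ p := by
    calc ϱ ε δ ^ p ≤ 2 ^ n * q p ϱ (ind S) := h1
      _ ≤ 2 ^ n * 1 := by gcongr
      _ = ((2 : ℝ) ^ n) ^ (1 : ℝ) := by rw [mul_one, Real.rpow_one]
      _ ≤ _ := Real.rpow_le_rpow_of_exponent_le h2 hp.le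
  exact (Real.rpow_le_rpow_iff (h.nonneg _ _) (by positivity) (by linarith)).mp h3

/-- Pairs `(ϱ, σ)` of pseudometrics with `σ ≤ l ϱ`, normalised edge side for `ϱ`, and edge side
at least `τ` for `σ`. -/
def pairs (n : ℕ) (p l τ : ℝ) :
    Set (((Fin n → Bool) → (Fin n → Bool) → ℝ) × ((Fin n → Bool) → (Fin n → Bool) → ℝ)) :=
  {x | PM x.1 ∧ PM x.2 ∧ (∀ ε δ, x.2 ε δ ≤ l * x.1 ε δ) ∧ U p x.1 = 1 ∧ τ ≤ U p x.2}

/-- Pairs `(ϱ, σ)` such that `ϱ` is `D`-close to the Hamming metric and `σ` is `D`-close to a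
multiple of it by a factor exceeding `c`. -/
def nearHamming (n : ℕ) (D c : ℝ) :
    Set (((Fin n → Bool) → (Fin n → Bool) → ℝ) × ((Fin n → Bool) → (Fin n → Bool) → ℝ)) :=
  {x | (∀ ε δ, ε ≠ δ → hdist n ε δ / D < x.1 ε δ ∧ x.1 ε δ < D * hdist n ε δ) ∧
    ∃ b, c < b ∧ ∀ ε δ, ε ≠ δ → b / D * hdist n ε δ < x.2 ε δ ∧ x.2 ε δ < b * D * hdist n ε δ}

lemma isCompact_pairs {p l τ : ℝ} (hp : 1 < p) (hl : 0 < l) : IsCompact (pairs n p l τ) := by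
  refine IsCompact.of_isClosed_subset
    (isCompact_Icc (a := (fun _ _ => 0, fun _ _ => 0))
      (b := (fun _ _ => 2 ^ n, fun _ _ => l * 2 ^ n))) ?_ ?_
  · unfold pairs
    simp only [Set.ofPred_and, Set.ofPred_forall]
    refine IsClosed.inter (isClosed_PM.preimage continuous_fst)
      (IsClosed.inter (isClosed_PM.preimage continuous_snd)
      (IsClosed.inter ?_ (IsClosed.inter ?_ ?_)))
    · exact isClosed_iInter fun _ => isClosed_iInter fun _ =>
        isClosed_le (by fun_prop) (by fun_prop)
    · exact isClosed_eq ((continuous_U hp).comp continuous_fst) continuous_const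
    · exact isClosed_le continuous_const ((continuous_U hp).comp continuous_snd)
  · rintro ⟨ϱ, σ⟩ ⟨h1, h2, h3, h4, -⟩
    refine ⟨⟨fun ε δ => h1.nonneg ε δ, fun ε δ => h2.nonneg ε δ⟩,
      ⟨fun ε δ => le_of_U_one hp h1 h4 ε δ, fun ε δ => (h3 ε δ).trans ?_⟩⟩
    exact mul_le_mul_of_nonneg_left (le_of_U_one hp h1 h4 ε δ) hl.le

lemma isOpen_nearHamming {D c : ℝ} : IsOpen (nearHamming n D c) := by
  unfold nearHamming
  simp only [Set.ofPred_and, Set.ofPred_forall, Set.ofPred_exists]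
  refine IsOpen.inter ?_ (isOpen_iUnion fun b => IsOpen.inter isOpen_const ?_)
  · exact isOpen_iInter_of_finite fun _ => isOpen_iInter_of_finite fun _ =>
      isOpen_iInter_of_finite fun _ => IsOpen.inter
        (isOpen_lt (by fun_prop) (by fun_prop)) (isOpen_lt (by fun_prop) (by fun_prop))
  · exact isOpen_iInter_of_finite fun _ => isOpen_iInter_of_finite fun _ =>
      isOpen_iInter_of_finite fun _ => IsOpen.inter
        (isOpen_lt (by fun_prop) (by fun_prop)) (isOpen_lt (by fun_prop) (by fun_prop))

/-- On the compact set of normalised pairs outside `nearHamming`, the total defect `U - V` is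
bounded below by a positive constant. -/
lemma stability_normalized {p l τ D : ℝ} (hp : 1 < p) (hl : 0 < l) (hτ : 0 < τ) (hD : 1 < D) :
    ∃ m : ℝ, 0 < m ∧ ∀ x ∈ pairs n p l τ,
      (U p x.1 - V p x.1) + (U p x.2 - V p x.2) < m →
        x ∈ nearHamming n D (τ ^ (1 / p) / 2) := by
  have hp0 : 0 < p := by linarith
  have hcomp : IsCompact (pairs n p l τ \ nearHamming n D (τ ^ (1 / p) / 2)) :=
    (isCompact_pairs hp hl).diff isOpen_nearHamming
  rcases (pairs n p l τ \ nearHamming n D (τ ^ (1 / p) / 2)).eq_empty_or_nonempty with h0 | hne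
  · exact ⟨1, one_pos, fun x hx _ => by
      by_contra hc
      exact (Set.eq_empty_iff_forall_notMem.mp h0 x) ⟨hx, hc⟩⟩
  have hcont : Continuous fun x : ((Fin n → Bool) → (Fin n → Bool) → ℝ) ×
      ((Fin n → Bool) → (Fin n → Bool) → ℝ) =>
      (U p x.1 - V p x.1) + (U p x.2 - V p x.2) :=
    (((continuous_U hp).comp continuous_fst).sub ((continuous_q hp _).comp continuous_fst)).add
      (((continuous_U hp).comp continuous_snd).sub ((continuous_q hp _).comp continuous_snd))
  obtain ⟨y, ⟨hy, hyn⟩, hmin⟩ := hcomp.exists_isMinOn hne hcont.continuousOn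
  refine ⟨(U p y.1 - V p y.1) + (U p y.2 - V p y.2), ?_, fun x hx hlt => ?_⟩
  rotate_left
  · by_contra hc
    exact absurd (hmin ⟨hx, hc⟩) (not_le.mpr hlt)
  -- A minimiser with value zero would be rigid, hence lie in `nearHamming`.
  by_contra hpos
  apply hyn
  obtain ⟨h1, h2, h3, h4, h5⟩ := hy
  have hv1 := V_le_U hp h1
  have hv2 := V_le_U hp h2
  obtain ⟨A, hA, hAp, hAd⟩ := rigid hp h1 (by linarith)
  obtain ⟨B, hB, hBp, hBd⟩ := rigid hp h2 (by linarith)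
  have hA1 : A = 1 := by
    rw [h4, ← Real.one_rpow p] at hAp
    exact (Real.rpow_left_inj hA zero_le_one hp0.ne').mp hAp
  have hc0 : 0 < τ ^ (1 / p) := Real.rpow_pos_of_pos hτ _
  have hBτ : τ ^ (1 / p) ≤ B := by
    refine (Real.rpow_le_rpow_iff hc0.le hB hp0).mp ?_
    rw [hBp, ← Real.rpow_mul hτ.le, one_div_mul_cancel hp0.ne', Real.rpow_one]
    exact h5
  have hD0 : 0 < D := by linarith
  have hB0 : 0 < B := by linarith
  refine ⟨fun ε δ hne => ?_, B, by linarith, fun ε δ hne => ?_⟩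
  · have := hdist_pos hne
    rw [hAd, hA1]
    exact ⟨by rw [one_mul]; exact div_lt_self this hD, by gcongr⟩
  · have := hdist_pos hne
    rw [hBd]
    refine ⟨?_, ?_⟩
    · gcongr
      exact div_lt_self hB0 hD
    · gcongr
      exact lt_mul_of_one_lt_right hB0 hD

/-- Near-equality in the type inequality for both pseudometrics makes both of them nearly
isometric to multiples of the Hamming metric. -/
lemma stability {p l τ D : ℝ} (hp : 1 < p) (hl : 0 < l) (hτ : 0 < τ) (hD : 1 < D) :
    ∃ m : ℝ, 0 < m ∧ ∀ ϱ σ : (Fin n → Bool) → (Fin n → Bool) → ℝ, PM ϱ → PM σ →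
      (∀ ε δ, σ ε δ ≤ l * ϱ ε δ) → 0 < U p ϱ → τ * U p ϱ ≤ U p σ →
      (U p ϱ - V p ϱ) + (U p σ - V p σ) < m * U p ϱ →
      ∃ a b : ℝ, 0 < a ∧ 0 < b ∧ a * (τ ^ (1 / p) / 2) ≤ b ∧ ∀ ε δ,
        a / D * hdist n ε δ ≤ ϱ ε δ ∧ ϱ ε δ ≤ a * D * hdist n ε δ ∧
        b / D * hdist n ε δ ≤ σ ε δ ∧ σ ε δ ≤ b * D * hdist n ε δ := by
  obtain ⟨m, hm, H⟩ := stability_normalized (n := n) hp hl hτ hD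
  refine ⟨m, hm, fun ϱ σ hϱ hσ hσϱ hU hUτ hlt => ?_⟩
  have hp0 : 0 < p := by linarith
  set s := U p ϱ ^ (1 / p) with hs
  have hs0 : 0 < s := Real.rpow_pos_of_pos hU _
  have hsp : s⁻¹ ^ p = (U p ϱ)⁻¹ := by
    rw [Real.inv_rpow hs0.le, hs, ← Real.rpow_mul hU.le, one_div_mul_cancel hp0.ne', Real.rpow_one]
  have hi : 0 ≤ s⁻¹ := by positivity
  have hmem : ((fun ε δ => s⁻¹ * ϱ ε δ, fun ε δ => s⁻¹ * σ ε δ) : _ × _) ∈ pairs n p l τ := by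
    refine ⟨pm_smul hi hϱ, pm_smul hi hσ, fun ε δ => ?_, ?_, ?_⟩
    · have := mul_le_mul_of_nonneg_left (hσϱ ε δ) hi
      simp only
      linarith
    · rw [U_smul hi hϱ, hsp, inv_mul_cancel₀ hU.ne']
    · rw [U_smul hi hσ, hsp, inv_mul_eq_div, le_div_iff₀ hU]
      exact hUτ
  obtain ⟨h1, b, hb, h2⟩ := H _ hmem (by
    simp only [V]
    rw [U_smul hi hϱ, U_smul hi hσ, q_smul hi hϱ, q_smul hi hσ, hsp, ← mul_sub, ← mul_sub,
      ← mul_add, inv_mul_eq_div, div_lt_iff₀ hU]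
    exact hlt)
  have hb0 : 0 < b := lt_trans (by positivity) hb
  have hD0 : 0 < D := by linarith
  refine ⟨s, s * b, hs0, by positivity, mul_le_mul_of_nonneg_left hb.le hs0.le, fun ε δ => ?_⟩
  by_cases hne : ε = δ
  · subst hne
    simp [hdist_self, hϱ.self, hσ.self]
  obtain ⟨a1, a2⟩ := h1 ε δ hne
  obtain ⟨a3, a4⟩ := h2 ε δ hne
  simp only [inv_mul_eq_div] at a1 a2 a3 a4
  rw [lt_div_iff₀ hs0] at a1 a3
  rw [div_lt_iff₀ hs0] at a2 a4
  refine ⟨le_of_eq_of_le ?_ a1.le, a2.le.trans_eq ?_, le_of_eq_of_le ?_ a3.le, a4.le.trans_eq ?_⟩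
    <;> ring

end Stability

/-! ### Self-improvement along iterated blocks -/

section Iterate

/-- The pseudometric on the cube induced by `f` from the domain of `G`. -/
def dX (G : MetricMap) {ι : Type} (f : (ι → Bool) → G.X) : (ι → Bool) → (ι → Bool) → ℝ :=
  fun ε δ => dist (f ε) (f δ)

/-- The pseudometric on the cube induced by `G.F ∘ f` from the codomain of `G`. -/
def dY (G : MetricMap) {ι : Type} (f : (ι → Bool) → G.X) : (ι → Bool) → (ι → Bool) → ℝ :=
  fun ε δ => dist (G.F (f ε)) (G.F (f δ))

lemma pm_dist {ι X : Type} [MetricSpace X] (f : (ι → Bool) → X) :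
    PM (fun ε δ => dist (f ε) (f δ)) :=
  ⟨fun _ _ => dist_nonneg, fun _ => dist_self _, fun _ _ => dist_comm _ _,
    fun _ _ _ => dist_triangle _ _ _⟩

lemma pm_dX (G : MetricMap) {ι : Type} (f : (ι → Bool) → G.X) : PM (dX G f) := pm_dist f

lemma pm_dY (G : MetricMap) {ι : Type} (f : (ι → Bool) → G.X) : PM (dY G f) :=
  pm_dist fun ε => G.F (f ε)

/-- If no map on the `N`-cube is nearly extremal for both metrics (the hypothesis `H`), then
iterating blocks of size `N` yields, for every `k`, a cube on which the type constant is `O(1/k)`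
up to the term `τ U`. -/
lemma iter (𝓕 : Set MetricMap) {N : ℕ} (hN : 0 < N) {p K τ : ℝ} (hp : 1 < p) (hK : 0 ≤ K)
    (hτ : 0 ≤ τ)
    (H : ∀ G ∈ 𝓕, ∀ g : (Fin N → Bool) → G.X, U p (dY G g) - τ * U p (dX G g) ≤
      K * ((U p (dX G g) - V p (dX G g)) + (U p (dY G g) - V p (dY G g)))) (k : ℕ) :
    ∃ (ι : Type) (_ : Fintype ι) (_ : DecidableEq ι), Nonempty ι ∧
      ∀ G ∈ 𝓕, ∀ f : (ι → Bool) → G.X, k * V p (dY G f) ≤ k * (τ * U p (dX G f)) +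
        K * ((U p (dX G f) - V p (dX G f)) + (U p (dY G f) - V p (dY G f))) := by
  induction k with
  | zero =>
    refine ⟨Unit, inferInstance, inferInstance, inferInstance, fun G _ f => ?_⟩
    have h1 := V_le_U hp (pm_dX G f)
    have h2 := V_le_U hp (pm_dY G f)
    have := mul_nonneg hK (add_nonneg (sub_nonneg.2 h1) (sub_nonneg.2 h2))
    simpa using this
  | succ k ih =>
    obtain ⟨ι, _, _, hne, ih⟩ := ih
    have : NeZero N := ⟨hN.ne'⟩
    refine ⟨ι × Fin N, inferInstance, inferInstance, inferInstance, fun G hG f => ?_⟩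
    set bX := av (fun ε => U p (pb (dX G f) (blk Prod.fst) ε)) with hbX
    set bY := av (fun ε => U p (pb (dY G f) (blk Prod.fst) ε)) with hbY
    -- The inductive hypothesis, averaged over translates of the coarse cube.
    have hA : k * V p (dY G f) ≤ k * (τ * bX) +
        K * ((bX - V p (dX G f)) + (bY - V p (dY G f))) := by
      have h := av_mono fun ε => ih G hG fun δ => f (tr (blk Prod.fst δ) ε)
      simp only [av_add, av_mul, av_sub] at h
      have e1 : av (fun ε => V p (pb (dX G f) (blk Prod.fst) ε)) = V p (dX G f) := by
        rw [av_V_pb _ _ _ (blk_tr _), blk_univ]; rfl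
      have e2 : av (fun ε => V p (pb (dY G f) (blk Prod.fst) ε)) = V p (dY G f) := by
        rw [av_V_pb _ _ _ (blk_tr _), blk_univ]; rfl
      rw [← e1, ← e2]
      exact h
    set C := (Fintype.card ι : ℝ) ^ (p - 1)
    have hC : 0 ≤ C := by positivity
    have eUX := U_nested (p := p) (dX G f)
    have eUY := U_nested (p := p) (dY G f)
    have eVX := V_nested (p := p) (dX G f)
    have eVY := V_nested (p := p) (dY G f)
    -- The hypothesis `H`, averaged over all fine blocks.
    have hB : U p (dY G f) - τ * U p (dX G f) ≤
        K * ((U p (dX G f) - bX) + (U p (dY G f) - bY)) := by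
      have h : ∀ j : ι, _ := fun j => av_mono fun ε => H G hG fun δ => f (tr (fib j δ) ε)
      simp only [av_add, av_mul, av_sub] at h
      have h2 := mul_le_mul_of_nonneg_left (Finset.sum_le_sum fun j (_ : j ∈ Finset.univ) => h j) hC
      simp only [Finset.sum_sub_distrib, ← Finset.mul_sum, Finset.sum_add_distrib] at h2
      rw [hbX, hbY, ← eUX, ← eUY, ← eVX, ← eVY]
      rw [mul_sub, mul_left_comm C τ, mul_left_comm C K, mul_add, mul_sub, mul_sub] at h2
      exact h2
    have hX : bX ≤ U p (dX G f) := by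
      rw [hbX, ← eUX, ← eVX]
      refine mul_le_mul_of_nonneg_left (Finset.sum_le_sum fun j _ => av_mono fun ε => ?_) hC
      exact V_le_U hp (pm_dX G fun δ => f (tr (fib j δ) ε))
    have hV : V p (dY G f) ≤ U p (dY G f) := V_le_U hp (pm_dY G f)
    have hkτ := mul_le_mul_of_nonneg_left (mul_le_mul_of_nonneg_left hX hτ)
      (Nat.cast_nonneg (α := ℝ) k)
    push_cast
    linarith

/-- Positivity of the upper limit of the type constants, passed to cubes of every dimension by
grouping coordinates into blocks of nearly equal size. -/
lemma spread (𝓕 : Set MetricMap) {p : ℝ} (hp : 1 < p)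
    (h : 0 < Filter.limsup (fun n : ℕ => bConst 𝓕 p n) Filter.atTop) :
    ∃ θ : ℝ, 0 < θ ∧ ∀ (ι : Type) [Fintype ι] [DecidableEq ι] [Nonempty ι],
      ∃ G ∈ 𝓕, ∃ f : (ι → Bool) → G.X, θ * U p (dX G f) < V p (dY G f) := by
  obtain ⟨t, ht0, ht⟩ := exists_between h
  have hb0 : ∀ n, 0 ≤ bConst 𝓕 p n := fun n => Real.sInf_nonneg fun b hb => hb.1.le
  have hfreq := Filter.frequently_lt_of_lt_limsup
    (Filter.IsBoundedUnder.isCoboundedUnder_le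
      (Filter.isBoundedUnder_of_eventually_ge (Filter.Eventually.of_forall hb0))) ht
  have h2p : (0 : ℝ) < 2 ^ (p - 1) := by positivity
  refine ⟨t ^ p / 2 ^ (p - 1), by positivity, fun ι _ _ _ => ?_⟩
  set M := Fintype.card ι with hM
  have hM0 : 0 < M := Fintype.card_pos
  obtain ⟨n, hn, hnt⟩ := (Filter.frequently_atTop.mp hfreq) M
  have hnot : ¬ ∀ G ∈ 𝓕, ∀ f : (Fin n → Bool) → G.X,
      cubeE n (fun ε => dist (G.F (f ε)) (G.F (f (negCube ε))) ^ p)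
        ≤ t ^ p * (n : ℝ) ^ (p - 1) *
          ∑ i : Fin n, cubeE n (fun ε => dist (f ε) (f (flipCoord i ε)) ^ p) := by
    intro hall
    refine absurd ?_ (not_le.mpr hnt)
    exact csInf_le ⟨0, fun b hb => hb.1.le⟩ ⟨ht0, hall⟩
  push Not at hnot
  obtain ⟨G, hG, f, hf⟩ := hnot
  simp only [cubeE_eq, negCube_eq, flipCoord_eq] at hf
  have hf' : t ^ p * (n : ℝ) ^ (p - 1) * ∑ i, q p (dX G f) (ind {i}) < V p (dY G f) := hf
  let e := Fintype.equivFin ι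
  let π : Fin n → ι := fun x => e.symm ⟨x.1 % M, Nat.mod_lt _ hM0⟩
  have hπ : ∀ j, (Finset.univ.filter fun x => π x = j).card ≤ n / M + 1 := by
    intro j
    rw [← Finset.card_range (n / M + 1)]
    refine Finset.card_le_card_of_injOn (fun x => x.1 / M) ?_ ?_
    · intro x _
      simp only [Finset.coe_range, Set.mem_Iio]
      exact Nat.lt_succ_of_le (Nat.div_le_div_right x.2.le)
    · intro x hx y hy hxy
      simp only [Finset.coe_filter, Finset.mem_univ, true_and, Set.mem_ofPred_eq] at hx hy
      have h1 := e.symm.injective (hx.trans hy.symm)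
      have h2 : x.1 % M = y.1 % M := congrArg Fin.val h1
      have h3 : x.1 / M = y.1 / M := hxy
      apply Fin.ext
      rw [← Nat.div_add_mod x.1 M, ← Nat.div_add_mod y.1 M, h2, h3]
  have hU := av_U_blk_le hp (pm_dX G f) π _ hπ
  have hsize : (M : ℝ) * ((n / M + 1 : ℕ) : ℝ) ≤ 2 * n := by
    have : M * (n / M + 1) ≤ 2 * n := by
      have := Nat.mul_div_le n M
      rw [Nat.mul_add, Nat.mul_one]; omega
    exact_mod_cast this
  have hS : 0 ≤ ∑ i, q p (dX G f) (ind {i}) := Finset.sum_nonneg fun _ _ => q_nonneg (pm_dX G f) _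
  have hU2 : av (fun ε => U p (pb (dX G f) (blk π) ε))
      ≤ 2 ^ (p - 1) * ((n : ℝ) ^ (p - 1) * ∑ i, q p (dX G f) (ind {i})) := by
    refine hU.trans ?_
    rw [← mul_assoc, ← Real.mul_rpow (by norm_num) (by positivity)]
    exact mul_le_mul_of_nonneg_right
      (Real.rpow_le_rpow (by positivity) hsize (by linarith)) hS
  have hlt : av (fun ε => t ^ p / 2 ^ (p - 1) * U p (pb (dX G f) (blk π) ε))
      < av (fun ε => V p (pb (dY G f) (blk π) ε)) := by
    rw [av_mul, av_V_pb _ _ _ (blk_tr _), blk_univ]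
    refine lt_of_le_of_lt ?_ hf'
    calc t ^ p / 2 ^ (p - 1) * _ ≤ t ^ p / 2 ^ (p - 1) *
        (2 ^ (p - 1) * ((n : ℝ) ^ (p - 1) * ∑ i, q p (dX G f) (ind {i}))) :=
          mul_le_mul_of_nonneg_left hU2 (by positivity)
      _ = _ := by field_simp
  obtain ⟨ε, hε⟩ := av_exists_lt hlt
  exact ⟨G, hG, fun δ => f (tr (blk π δ) ε), hε⟩

/-- The constant `τ^{1/p} / 2` with `τ = θ / 2` depends on neither `D` nor `N`; only the penalty `K`
in the search for a nearly extremal map does. -/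
theorem factors_of_limsup {lam : ℝ} (hlam : 0 < lam) {𝓕 : Set MetricMap}
    (hLip : ∀ G ∈ 𝓕, ∀ x y : G.X, dist (G.F x) (G.F y) ≤ lam * dist x y) {p : ℝ} (hp : 1 < p)
    (h : 0 < Filter.limsup (fun n : ℕ => bConst 𝓕 p n) Filter.atTop) :
    FactorsHammingCubes 𝓕 := by
  obtain ⟨θ, hθ, hspread⟩ := spread 𝓕 hp h
  have hτ : 0 < θ / 2 := by positivity
  refine ⟨(θ / 2) ^ (1 / p) / 2, by positivity, fun D hD N hN => ?_⟩
  obtain ⟨m, hm, hstab⟩ := stability (n := N) hp hlam hτ hD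
  have hl : 0 < lam ^ p := Real.rpow_pos_of_pos hlam _
  set K := lam ^ p / m with hKdef
  have hK : 0 < K := by positivity
  by_cases H : ∀ G ∈ 𝓕, ∀ g : (Fin N → Bool) → G.X, U p (dY G g) - θ / 2 * U p (dX G g) ≤
      K * ((U p (dX G g) - V p (dX G g)) + (U p (dY G g) - V p (dY G g)))
  · exfalso
    obtain ⟨k, hk⟩ := exists_nat_gt (K * (1 + lam ^ p) / (θ / 2))
    rw [div_lt_iff₀ hτ] at hk
    obtain ⟨ι, _, _, _, hι⟩ := iter 𝓕 hN hp hK.le hτ.le H k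
    obtain ⟨G, hG, f, hf⟩ := hspread ι
    have h1 := hι G hG f
    have hUU : U p (dY G f) ≤ lam ^ p * U p (dX G f) :=
      U_le_mul hp hlam (pm_dX G f) (pm_dY G f) fun ε δ => hLip G hG _ _
    have hVX : 0 ≤ V p (dX G f) := q_nonneg (pm_dX G f) _
    have hVY : 0 ≤ V p (dY G f) := q_nonneg (pm_dY G f) _
    have hVU := V_le_U hp (pm_dY G f)
    have hU0 : 0 < U p (dX G f) := by
      rcases (U_nonneg (p := p) (pm_dX G f)).lt_or_eq with h0 | h0
      · exact h0
      · rw [← h0] at hf hUU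
        linarith
    have h2 : (U p (dX G f) - V p (dX G f)) + (U p (dY G f) - V p (dY G f))
        ≤ (1 + lam ^ p) * U p (dX G f) := by linarith
    have h3 := mul_le_mul_of_nonneg_left h2 hK.le
    have h4 := mul_le_mul_of_nonneg_left hf.le (Nat.cast_nonneg (α := ℝ) k)
    have h5 := mul_lt_mul_of_pos_right hk hU0
    linarith
  · push Not at H
    obtain ⟨G, hG, g, hg⟩ := H
    have hdd : ∀ ε δ, dY G g ε δ ≤ lam * dX G g ε δ := fun ε δ => hLip G hG _ _
    have hUU := U_le_mul hp hlam (pm_dX G g) (pm_dY G g) hdd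
    have hX := V_le_U hp (pm_dX G g)
    have hY := V_le_U hp (pm_dY G g)
    have hφ : 0 ≤ (U p (dX G g) - V p (dX G g)) + (U p (dY G g) - V p (dY G g)) := by linarith
    have hUn := U_nonneg (p := p) (pm_dX G g)
    have hKφ := mul_nonneg hK.le hφ
    have hU0 : 0 < U p (dX G g) := by
      rcases hUn.lt_or_eq with h0 | h0
      · exact h0
      · rw [← h0] at hUU
        rw [← h0] at hg hKφ
        linarith
    obtain ⟨a, b, ha, hb, hab, hall⟩ := hstab (dX G g) (dY G g) (pm_dX G g) (pm_dY G g) hdd hU0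
      (by linarith) (by
        have h1 : K * ((U p (dX G g) - V p (dX G g)) + (U p (dY G g) - V p (dY G g)))
            < lam ^ p * U p (dX G g) := by
          have := mul_nonneg hτ.le hUn
          linarith
        rw [hKdef, div_mul_eq_mul_div, div_lt_iff₀ hm, mul_assoc] at h1
        have := lt_of_mul_lt_mul_left h1 hl.le
        linarith)
    exact ⟨G, hG, g, a, b, ha, hb, hab, hall⟩

end Iterate

/-! ### Comparison of the constants -/

section Constants

variable {lam : ℝ} {𝓕 : Set MetricMap}

lemma V_dY {p : ℝ} {n : ℕ} (G : MetricMap) (f : (Fin n → Bool) → G.X) :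
    cubeE n (fun ε => dist (G.F (f ε)) (G.F (f (negCube ε))) ^ p) = V p (dY G f) := by
  simp only [cubeE_eq, negCube_eq]; rfl

lemma U_dX {p : ℝ} {n : ℕ} (G : MetricMap) (f : (Fin n → Bool) → G.X) :
    (n : ℝ) ^ (p - 1) * ∑ i : Fin n, cubeE n (fun ε => dist (f ε) (f (flipCoord i ε)) ^ p)
      = U p (dX G f) := by
  simp only [cubeE_eq, flipCoord_eq, U, Fintype.card_fin]; rfl

lemma dist_le_cubeLip {n : ℕ} {X : Type} [MetricSpace X] (f : (Fin n → Bool) → X)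
    {ε δ : Fin n → Bool} (h : 0 < hdist n ε δ) :
    dist (f ε) (f δ) ≤ cubeLip f * hdist n ε δ := by
  rw [← div_le_iff₀ h]
  refine le_csSup ?_ ⟨ε, δ, rfl⟩
  have : { r : ℝ | ∃ ε δ, r = dist (f ε) (f δ) / hdist n ε δ } =
      Set.range fun x : (Fin n → Bool) × (Fin n → Bool) =>
        dist (f x.1) (f x.2) / hdist n x.1 x.2 := by
    ext r
    constructor
    · rintro ⟨a, b, rfl⟩; exact ⟨(a, b), rfl⟩
    · rintro ⟨⟨a, b⟩, rfl⟩; exact ⟨a, b, rfl⟩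
  rw [this]
  exact (Set.finite_range _).bddAbove

lemma cubeLip_nonneg {n : ℕ} {X : Type} [MetricSpace X] (f : (Fin n → Bool) → X) :
    0 ≤ cubeLip f := by
  refine Real.sSup_nonneg ?_
  rintro r ⟨ε, δ, rfl⟩
  exact div_nonneg dist_nonneg (by unfold hdist; positivity)

/-- The `λ`-Lipschitz condition makes `λ` admissible for `b_{p,n}`. -/
lemma lam_mem (hlam : 0 < lam)
    (hLip : ∀ G ∈ 𝓕, ∀ x y : G.X, dist (G.F x) (G.F y) ≤ lam * dist x y) {p : ℝ} (hp : 1 < p)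
    (n : ℕ) : lam ∈ { b : ℝ | 0 < b ∧ ∀ G ∈ 𝓕, ∀ f : (Fin n → Bool) → G.X,
      cubeE n (fun ε => dist (G.F (f ε)) (G.F (f (negCube ε))) ^ p)
      ≤ b ^ p * (n : ℝ) ^ (p - 1) *
        ∑ i : Fin n, cubeE n (fun ε => dist (f ε) (f (flipCoord i ε)) ^ p) } := by
  refine ⟨hlam, fun G hG f => ?_⟩
  rw [mul_assoc, V_dY, U_dX]
  exact (V_le_U hp (pm_dY G f)).trans
    (U_le_mul hp hlam (pm_dX G f) (pm_dY G f) fun ε δ => hLip G hG _ _)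

/-- Every constant admissible for `b_{p,n}` is admissible for `a_n`: edges of the cube have length
`1/n`, so the edge side is at most `Lip(f)^p`, and Jensen's inequality lowers the exponent. -/
lemma mem_aSet {p : ℝ} (hp : 1 < p) {n : ℕ} (hn : 0 < n) {b : ℝ}
    (hb : b ∈ { b : ℝ | 0 < b ∧ ∀ G ∈ 𝓕, ∀ f : (Fin n → Bool) → G.X,
      cubeE n (fun ε => dist (G.F (f ε)) (G.F (f (negCube ε))) ^ p)
      ≤ b ^ p * (n : ℝ) ^ (p - 1) *
        ∑ i : Fin n, cubeE n (fun ε => dist (f ε) (f (flipCoord i ε)) ^ p) }) :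
    b ∈ { a : ℝ | 0 < a ∧ ∀ G ∈ 𝓕, ∀ f : (Fin n → Bool) → G.X,
      cubeE n (fun ε => dist (G.F (f ε)) (G.F (f (negCube ε)))) ≤ a * cubeLip f } := by
  obtain ⟨hb0, hb⟩ := hb
  refine ⟨hb0, fun G hG f => ?_⟩
  have hL := cubeLip_nonneg f
  have hn' : (0 : ℝ) < n := by exact_mod_cast hn
  have h1 := hb G hG f
  have h2 : ∑ i : Fin n, cubeE n (fun ε => dist (f ε) (f (flipCoord i ε)) ^ p)
      ≤ n * (cubeLip f * (1 / n)) ^ p := by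
    have : ∀ i ∈ (Finset.univ : Finset (Fin n)),
        cubeE n (fun ε => dist (f ε) (f (flipCoord i ε)) ^ p) ≤ (cubeLip f * (1 / n)) ^ p := by
      intro i _
      rw [cubeE_eq, ← av_const (ι := Fin n) ((cubeLip f * (1 / n)) ^ p)]
      refine av_mono fun ε => Real.rpow_le_rpow dist_nonneg ?_ (by linarith)
      have hd := hdist_flip i ε
      rw [← hd]
      exact dist_le_cubeLip f (by rw [hd]; positivity)
    simpa using Finset.sum_le_card_nsmul _ _ _ this
  have h3 : (n : ℝ) ^ (p - 1) * (n * (cubeLip f * (1 / n)) ^ p) = cubeLip f ^ p := by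
    rw [← mul_assoc, ← Real.rpow_add_one hn'.ne', sub_add_cancel,
      ← Real.mul_rpow hn'.le (by positivity)]
    congr 1
    field_simp
  have h4 : cubeE n (fun ε => dist (G.F (f ε)) (G.F (f (negCube ε))) ^ p)
      ≤ (b * cubeLip f) ^ p := by
    rw [Real.mul_rpow hb0.le hL, ← h3, ← mul_assoc]
    exact h1.trans (mul_le_mul_of_nonneg_left h2 (by positivity))
  rw [cubeE_eq] at h4 ⊢
  have h5 := (av_rpow_le hp (Φ := fun ε => dist (G.F (f ε)) (G.F (f (negCube ε))))
    fun _ => dist_nonneg).trans h4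
  exact (Real.rpow_le_rpow_iff (av_nonneg fun _ => dist_nonneg) (by positivity)
    (by linarith)).mp h5

lemma bConst_le (hlam : 0 < lam)
    (hLip : ∀ G ∈ 𝓕, ∀ x y : G.X, dist (G.F x) (G.F y) ≤ lam * dist x y) {p : ℝ} (hp : 1 < p)
    (n : ℕ) : bConst 𝓕 p n ≤ lam :=
  csInf_le ⟨0, fun _ hb => hb.1.le⟩ (lam_mem hlam hLip hp n)

lemma aConst_le_bConst (hlam : 0 < lam)
    (hLip : ∀ G ∈ 𝓕, ∀ x y : G.X, dist (G.F x) (G.F y) ≤ lam * dist x y) {p : ℝ} (hp : 1 < p)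
    {n : ℕ} (hn : 0 < n) : aConst 𝓕 n ≤ bConst 𝓕 p n :=
  csInf_le_csInf ⟨0, fun _ hb => hb.1.le⟩ ⟨lam, lam_mem hlam hLip hp n⟩
    fun _ hb => mem_aSet hp hn hb

lemma aConst_nonneg (n : ℕ) : 0 ≤ aConst 𝓕 n := Real.sInf_nonneg fun _ ha => ha.1.le

/-- A crude factorisation of `2^n` with constants `c`, `D` bounds `a_n` from below. -/
lemma aConst_ge (hlam : 0 < lam)
    (hLip : ∀ G ∈ 𝓕, ∀ x y : G.X, dist (G.F x) (G.F y) ≤ lam * dist x y)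
    {c D : ℝ} (hD : 0 < D) {n : ℕ} (hn : 0 < n)
    (h : ∃ G ∈ 𝓕, ∃ f : (Fin n → Bool) → G.X, ∃ a b : ℝ, 0 < a ∧ 0 < b ∧ a * c ≤ b ∧
      ∀ ε δ : Fin n → Bool,
        a / D * hdist n ε δ ≤ dist (f ε) (f δ) ∧
        dist (f ε) (f δ) ≤ a * D * hdist n ε δ ∧
        b / D * hdist n ε δ ≤ dist (G.F (f ε)) (G.F (f δ)) ∧
        dist (G.F (f ε)) (G.F (f δ)) ≤ b * D * hdist n ε δ) :
    c / D ^ 2 ≤ aConst 𝓕 n := by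
  refine le_csInf ⟨lam, mem_aSet one_lt_two hn (lam_mem hlam hLip one_lt_two n)⟩ ?_
  rintro a' ⟨ha', hall⟩
  obtain ⟨G, hG, f, a, b, ha, hb, hab, hf⟩ := h
  have h1 := hall G hG f
  have h2 : b / D ≤ cubeE n (fun ε => dist (G.F (f ε)) (G.F (f (negCube ε)))) := by
    rw [cubeE_eq, ← av_const (ι := Fin n) (b / D)]
    refine av_mono fun ε => ?_
    have := (hf ε (negCube ε)).2.2.1
    rwa [hdist_neg hn, mul_one] at this
  have h3 : cubeLip f ≤ a * D := by
    refine Real.sSup_le ?_ (by positivity)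
    rintro r ⟨ε, δ, rfl⟩
    by_cases hne : ε = δ
    · subst hne; simp; positivity
    · rw [div_le_iff₀ (hdist_pos hne)]
      exact (hf ε δ).2.1
  have h4 : a * c / D ≤ a' * (a * D) := by
    calc a * c / D ≤ b / D := by gcongr
      _ ≤ a' * cubeLip f := h2.trans h1
      _ ≤ _ := by gcongr
  rw [div_le_iff₀ hD] at h4
  rw [div_le_iff₀ (by positivity)]
  refine le_of_mul_le_mul_left ?_ ha
  linarith

end Constants

end HCube

/-- Main theorem: the five conditions are equivalent for a family `𝓕` of `λ`-Lipschitz maps. -/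
theorem main_theorem (lam : ℝ) (hlam : 0 < lam) (𝓕 : Set MetricMap)
    (hLip : ∀ G ∈ 𝓕, ∀ x y : G.X, dist (G.F x) (G.F y) ≤ lam * dist x y) :
    [FactorsHammingCubes 𝓕,
     CrudelyFactorsHammingCubes 𝓕,
     0 < Filter.limsup (fun n : ℕ => aConst 𝓕 n) Filter.atTop,
     ∀ p : ℝ, 1 < p → 0 < Filter.limsup (fun n : ℕ => bConst 𝓕 p n) Filter.atTop,
     ∃ p : ℝ, 1 < p ∧ 0 < Filter.limsup (fun n : ℕ => bConst 𝓕 p n) Filter.atTop].TFAE := by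
  have hbdd : ∀ p : ℝ, 1 < p →
      Filter.IsBoundedUnder (· ≤ ·) Filter.atTop (fun n : ℕ => bConst 𝓕 p n) := fun p hp =>
    Filter.isBoundedUnder_of_eventually_le
      (Filter.Eventually.of_forall (HCube.bConst_le hlam hLip hp))
  have hab : ∀ p : ℝ, 1 < p → ∀ᶠ n : ℕ in Filter.atTop, aConst 𝓕 n ≤ bConst 𝓕 p n :=
    fun p hp => (Filter.eventually_gt_atTop 0).mono fun n hn =>
      HCube.aConst_le_bConst hlam hLip hp hn
  tfae_have 1 → 2 := by
    rintro ⟨c, hc, h⟩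
    exact ⟨c, 2, hc, two_pos, h 2 one_lt_two⟩
  tfae_have 2 → 3 := by
    rintro ⟨c, D, hc, hD, h⟩
    refine lt_of_lt_of_le (by positivity : 0 < c / D ^ 2)
      (Filter.le_limsup_of_frequently_le ?_ ?_)
    · exact ((Filter.eventually_gt_atTop 0).mono fun n hn =>
        HCube.aConst_ge hlam hLip hD hn (h n hn)).frequently
    · exact Filter.isBoundedUnder_of_eventually_le (a := lam)
        ((hab 2 one_lt_two).mono fun n hn => hn.trans (HCube.bConst_le hlam hLip one_lt_two n))
  tfae_have 3 → 4 := by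
    intro h p hp
    refine lt_of_lt_of_le h (Filter.limsup_le_limsup (hab p hp) ?_ (hbdd p hp))
    exact Filter.IsBoundedUnder.isCoboundedUnder_le
      (Filter.isBoundedUnder_of_eventually_ge (Filter.Eventually.of_forall HCube.aConst_nonneg))
  tfae_have 4 → 5 := fun h => ⟨2, one_lt_two, h 2 one_lt_two⟩
  tfae_have 5 → 1 := fun ⟨_, hp, h⟩ => HCube.factors_of_limsup hlam hLip hp h
  tfae_finish
end
end

section
/- Let λ ∈ (0,∞), let 𝓕 be a family of λ-Lipschitz maps between metric spaces, and let 1 < p < ∞. Then limsup_n b_{p,n}(𝓕) ≥ c(𝓕) ≥ limsup_n b_{p,2^n}(𝓕) ≥ 2^{1/p−1}·limsup_n b_{p,n}(𝓕). -/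
/-!
Write `M(S)` for the sum over the cube of `ρ(ε, flip_S ε) ^ p`. Since flips preserve the counting
measure, Minkowski's inequality makes `M(S) ^ (1/p)` subadditive in disjoint unions, whence
`M(⋃ t_j) ≤ k ^ (p-1) ∑ M(t_j)` for `k` disjoint blocks (`energy_biUnion`). Applying the inequality
that defines `b_{p,k}` to the subcubes spanned by `k` blocks gives
`M_Y(⋃ t_j) ≤ b_{p,k} ^ p k ^ (p-1) ∑ M_X(t_j)` (`Admissible.biUnion`).

With blocks of at most two elements this shows that `b_{p,2^n}` is decreasing and that
`b_{p,n} ≤ 2 ^ (1-1/p) b_{p,k}` for `k ≤ n ≤ 2k`, which is the last inequality of the theorem. The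
first one follows by testing the definition of `b_{p,n}` on an almost isometric copy of the cube.

For the middle one let `β` be the limit of `b_{p,2^n}` and `c < β`. Take a nearly extremal map on a
cube of dimension `k * m * k`, where `m` is a given power of two and `k` a power of two so large
that `b_{p,k}` is close to `β`. Estimating through groups of `m` blocks of `k` coordinates, once
with the inequality for `b_{p,k}` outside and once inside, every intermediate triangle inequality
must be nearly an equality on average. So some `m`-dimensional subcube has antipodal energy nearly
equal to its upper bound in terms of edges, for the source and for the target metric, with ratio of
energies at least `c ^ p` (`exists_extremal_subcube`). By strict convexity a pseudometric attaining
that bound is a multiple of the Hamming metric (`eq_hdist_of_energy`), and by compactness one that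
nearly attains it is within a factor `D` of a multiple (`stability`).
-/

open Finset

noncomputable section

/-- `c(𝓕)`: the supremum of those `c > 0` witnessing the factorization of the Hamming cubes
(`sSup ∅ = 0` in `ℝ`, matching the convention `c(𝓕) = 0` if no such `c` exists). -/
def cConst (𝓕 : Set MetricMap) : ℝ :=
  sSup { c : ℝ | 0 < c ∧ ∀ D : ℝ, 1 < D → ∀ n : ℕ, 0 < n →
    ∃ G ∈ 𝓕, ∃ f : (Fin n → Bool) → G.X, ∃ a b : ℝ, 0 < a ∧ 0 < b ∧ a * c ≤ b ∧
      ∀ ε δ : Fin n → Bool,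
        a / D * hdist n ε δ ≤ dist (f ε) (f δ) ∧
        dist (f ε) (f δ) ≤ a * D * hdist n ε δ ∧
        b / D * hdist n ε δ ≤ dist (G.F (f ε)) (G.F (f δ)) ∧
        dist (G.F (f ε)) (G.F (f δ)) ≤ b * D * hdist n ε δ }

/-! ### Flips, energies and subcubes -/

/-- `ρ` is a pseudometric, given as a bare real-valued function so that pseudometrics can be
rescaled and topologised as points of `V → V → ℝ`. -/
structure IsPM {V : Type*} (ρ : V → V → ℝ) : Prop where
  self : ∀ x, ρ x x = 0
  symm : ∀ x y, ρ x y = ρ y x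
  tri : ∀ x y z, ρ x z ≤ ρ x y + ρ y z
  nonneg : ∀ x y, 0 ≤ ρ x y

lemma isPM_dist {V X : Type*} [PseudoMetricSpace X] (f : V → X) :
    IsPM (fun x y => dist (f x) (f y)) :=
  ⟨fun _ => dist_self _, fun _ _ => dist_comm _ _, fun _ _ _ => dist_triangle _ _ _,
    fun _ _ => dist_nonneg⟩

section Flip

set_option linter.unusedSectionVars false

variable {ι κ : Type*} [Fintype ι] [DecidableEq ι] [Fintype κ] [DecidableEq κ]

/-- Flip the coordinates of `ε` that belong to `S`. -/
def flipSet (S : Finset ι) (ε : ι → Bool) : ι → Bool := fun i => xor (ε i) (decide (i ∈ S))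

lemma flipSet_flipSet (S : Finset ι) (ε : ι → Bool) : flipSet S (flipSet S ε) = ε := by
  funext i; simp [flipSet]

lemma flipSet_union {S T : Finset ι} (h : Disjoint S T) (ε : ι → Bool) :
    flipSet (S ∪ T) ε = flipSet T (flipSet S ε) := by
  funext i
  have : i ∈ S → i ∉ T := fun h' => Finset.disjoint_left.1 h h'
  by_cases hS : i ∈ S <;> by_cases hT : i ∈ T <;> simp_all [flipSet]

/-- `flipSet S` as an involutive permutation of the cube. -/
def flipEquiv (S : Finset ι) : (ι → Bool) ≃ (ι → Bool) where
  toFun := flipSet S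
  invFun := flipSet S
  left_inv := flipSet_flipSet S
  right_inv := flipSet_flipSet S

lemma sum_flipSet (S : Finset ι) (Φ : (ι → Bool) → ℝ) :
    ∑ ε, Φ (flipSet S ε) = ∑ ε, Φ ε :=
  Equiv.sum_comp (flipEquiv S) Φ

/-- The sum over all points `ε` of the cube of `ρ(ε, flip_S ε) ^ p`; singletons `S` give edges in
one direction, `S = univ` gives the antipodes. -/
def energy (p : ℝ) (ρ : (ι → Bool) → (ι → Bool) → ℝ) (S : Finset ι) : ℝ :=
  ∑ ε, ρ ε (flipSet S ε) ^ p

lemma energy_nonneg {p : ℝ} {ρ : (ι → Bool) → (ι → Bool) → ℝ} (hρ : IsPM ρ) (S : Finset ι) :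
    0 ≤ energy p ρ S :=
  Finset.sum_nonneg fun _ _ => Real.rpow_nonneg (hρ.nonneg _ _) _

lemma energy_empty {p : ℝ} (hp : 1 < p) {ρ : (ι → Bool) → (ι → Bool) → ℝ} (hρ : IsPM ρ) :
    energy p ρ ∅ = 0 := by
  have : ∀ ε : ι → Bool, flipSet ∅ ε = ε := fun ε => by funext i; simp [flipSet]
  simp [energy, this, hρ.self, Real.zero_rpow (by linarith : p ≠ 0)]

/-- Minkowski's inequality, as flips preserve the counting measure on the cube. -/
lemma energy_union {p : ℝ} (hp : 1 < p) {ρ : (ι → Bool) → (ι → Bool) → ℝ} (hρ : IsPM ρ)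
    {S T : Finset ι} (h : Disjoint S T) :
    energy p ρ (S ∪ T) ^ (1 / p) ≤ energy p ρ S ^ (1 / p) + energy p ρ T ^ (1 / p) := by
  have hT : energy p ρ T = ∑ ε, ρ (flipSet S ε) (flipSet T (flipSet S ε)) ^ p :=
    (sum_flipSet S fun ε => ρ ε (flipSet T ε) ^ p).symm
  rw [hT]
  refine le_trans ?_ (Real.Lp_add_le_of_nonneg Finset.univ hp.le
    (fun ε _ => hρ.nonneg ε (flipSet S ε))
    (fun ε _ => hρ.nonneg (flipSet S ε) (flipSet T (flipSet S ε))))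
  refine Real.rpow_le_rpow (energy_nonneg hρ _) ?_ (by positivity)
  refine Finset.sum_le_sum fun ε _ => Real.rpow_le_rpow (hρ.nonneg _ _) ?_ (by linarith)
  rw [flipSet_union h]
  exact hρ.tri _ _ _

lemma energy_biUnion_root {p : ℝ} (hp : 1 < p) {ρ : (ι → Bool) → (ι → Bool) → ℝ} (hρ : IsPM ρ)
    (t : κ → Finset ι) (ht : Pairwise fun a b => Disjoint (t a) (t b)) (s : Finset κ) :
    energy p ρ (s.biUnion t) ^ (1 / p) ≤ ∑ j ∈ s, energy p ρ (t j) ^ (1 / p) := by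
  induction s using Finset.induction_on with
  | empty =>
    simp only [Finset.biUnion_empty, energy_empty hp hρ, Finset.sum_empty]
    rw [Real.zero_rpow (by positivity)]
  | insert a s ha ih =>
    rw [Finset.biUnion_insert, Finset.sum_insert ha]
    refine (energy_union hp hρ ?_).trans (by linarith)
    rw [Finset.disjoint_biUnion_right]
    exact fun i hi => ht (by rintro rfl; exact ha hi)

lemma energy_biUnion {p : ℝ} (hp : 1 < p) {ρ : (ι → Bool) → (ι → Bool) → ℝ} (hρ : IsPM ρ)
    (t : κ → Finset ι) (ht : Pairwise fun a b => Disjoint (t a) (t b)) (s : Finset κ) :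
    energy p ρ (s.biUnion t) ≤ (s.card : ℝ) ^ (p - 1) * ∑ j ∈ s, energy p ρ (t j) := by
  have hp0 : p ≠ 0 := by linarith
  have key : ∀ S, (energy p ρ S ^ (1 / p)) ^ p = energy p ρ S := fun S => by
    rw [← Real.rpow_mul (energy_nonneg hρ _), one_div_mul_cancel hp0, Real.rpow_one]
  have h := Real.rpow_le_rpow (Real.rpow_nonneg (energy_nonneg hρ _) _)
    (energy_biUnion_root hp hρ t ht s) (by linarith : 0 ≤ p)
  rw [key] at h
  refine h.trans ?_
  have h2 := Real.rpow_sum_le_const_mul_sum_rpow_of_nonneg s hp.le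
    (f := fun j => energy p ρ (t j) ^ (1 / p))
    (fun j _ => Real.rpow_nonneg (energy_nonneg hρ _) _)
  simpa only [key] using h2

lemma energy_le_singletons {p : ℝ} (hp : 1 < p) {ρ : (ι → Bool) → (ι → Bool) → ℝ} (hρ : IsPM ρ)
    (s : Finset ι) :
    energy p ρ s ≤ (s.card : ℝ) ^ (p - 1) * ∑ i ∈ s, energy p ρ {i} := by
  have := energy_biUnion hp hρ (fun i : ι => ({i} : Finset ι))
    (fun a b hab => by simpa using hab) s
  simpa using this

/-- The `κ`-dimensional subcube of the `ι`-cube with base point `ε` whose `j`-th coordinate flips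
the whole block `t j`. -/
def subcube (t : κ → Finset ι) (ε : ι → Bool) (δ : κ → Bool) : ι → Bool :=
  flipSet ((Finset.univ.filter fun j => δ j = true).biUnion t) ε

lemma subcube_flipSet (t : κ → Finset ι) (ht : Pairwise fun a b => Disjoint (t a) (t b))
    (ε : ι → Bool) (δ : κ → Bool) (S : Finset κ) :
    subcube t ε (flipSet S δ) = flipSet (S.biUnion t) (subcube t ε δ) := by
  funext i
  by_cases h : ∃ j, i ∈ t j
  · obtain ⟨j, hj⟩ := h
    have hu : ∀ j', i ∈ t j' ↔ j' = j := fun j' => by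
      constructor
      · intro h'
        by_contra hne
        exact Finset.disjoint_left.1 (ht hne) h' hj
      · rintro rfl; exact hj
    by_cases hS : j ∈ S <;> by_cases hd : δ j <;> simp [subcube, flipSet, hu, hS, hd]
  · push Not at h
    simp [subcube, flipSet, h]

/-- Summing over the base points, every vertex `δ` of the subcube contributes the same amount, the
energy of the corresponding union of blocks. -/
lemma sum_energy_subcube (p : ℝ) (ρ : (ι → Bool) → (ι → Bool) → ℝ)
    (t : κ → Finset ι) (ht : Pairwise fun a b => Disjoint (t a) (t b)) (S : Finset κ) :
    ∑ ε, energy p (fun δ δ' => ρ (subcube t ε δ) (subcube t ε δ')) S =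
      2 ^ Fintype.card κ * energy p ρ (S.biUnion t) := by
  simp only [energy, subcube_flipSet t ht]
  rw [Finset.sum_comm]
  have : ∀ δ : κ → Bool, ∑ ε, ρ (subcube t ε δ) (flipSet (S.biUnion t) (subcube t ε δ)) ^ p =
      ∑ ε, ρ ε (flipSet (S.biUnion t) ε) ^ p := fun δ =>
    sum_flipSet _ (fun ε => ρ ε (flipSet (S.biUnion t) ε) ^ p)
  simp [this]

end Flip

/-! ### Admissible constants -/

lemma flipCoord_eq {n : ℕ} (i : Fin n) (ε : Fin n → Bool) : flipCoord i ε = flipSet {i} ε := by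
  funext j
  by_cases h : j = i
  · subst h; simp [flipCoord, flipSet]
  · simp [flipCoord, flipSet, h]

lemma negCube_eq {n : ℕ} (ε : Fin n → Bool) : negCube ε = flipSet Finset.univ ε := by
  funext j; simp [negCube, flipSet]

/-- The inequality defining `bConst` with constant `b`; both sides are multiplied by `2 ^ n`, so
that expectations become energies. -/
def Admissible (𝓕 : Set MetricMap) (p : ℝ) (n : ℕ) (b : ℝ) : Prop :=
  ∀ G ∈ 𝓕, ∀ f : (Fin n → Bool) → G.X,
    energy p (fun ε δ => dist (G.F (f ε)) (G.F (f δ))) Finset.univ ≤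
      b ^ p * (n : ℝ) ^ (p - 1) *
        ∑ i : Fin n, energy p (fun ε δ => dist (f ε) (f δ)) {i}

lemma bConst_eq (𝓕 : Set MetricMap) (p : ℝ) (n : ℕ) :
    bConst 𝓕 p n = sInf {b : ℝ | 0 < b ∧ Admissible 𝓕 p n b} := by
  unfold bConst Admissible
  congr 1
  ext b
  simp only [Set.mem_ofPred_eq, cubeE, negCube_eq, flipCoord_eq, energy]
  refine and_congr_right fun _ => forall_congr' fun G => forall_congr' fun _ =>
    forall_congr' fun f => ?_
  rw [← Finset.sum_div, mul_div_assoc', div_le_div_iff_of_pos_right (by positivity)]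

section Consts

variable {𝓕 : Set MetricMap} {p : ℝ} {lam : ℝ}

lemma Admissible.mono (hp : 1 < p) {n : ℕ} {b b' : ℝ} (hb : 0 < b) (hbb : b ≤ b')
    (h : Admissible 𝓕 p n b) : Admissible 𝓕 p n b' := by
  intro G hG f
  refine (h G hG f).trans ?_
  have : 0 ≤ ∑ i : Fin n, energy p (fun ε δ => dist (f ε) (f δ)) {i} :=
    Finset.sum_nonneg fun _ _ => energy_nonneg (isPM_dist f) _
  gcongr

lemma energy_lip (hp : 1 < p) (hlam : 0 < lam) {G : MetricMap}
    (hG : ∀ x y : G.X, dist (G.F x) (G.F y) ≤ lam * dist x y)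
    {ι : Type*} [Fintype ι] [DecidableEq ι] (f : (ι → Bool) → G.X) (S : Finset ι) :
    energy p (fun ε δ => dist (G.F (f ε)) (G.F (f δ))) S ≤
      lam ^ p * energy p (fun ε δ => dist (f ε) (f δ)) S := by
  unfold energy
  rw [Finset.mul_sum]
  refine Finset.sum_le_sum fun ε _ => ?_
  rw [← Real.mul_rpow hlam.le dist_nonneg]
  exact Real.rpow_le_rpow dist_nonneg (hG _ _) (by linarith)

lemma admissible_lam (hp : 1 < p) (hlam : 0 < lam)
    (hLip : ∀ G ∈ 𝓕, ∀ x y : G.X, dist (G.F x) (G.F y) ≤ lam * dist x y) (n : ℕ) :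
    Admissible 𝓕 p n lam := by
  intro G hG f
  refine (energy_lip hp hlam (hLip G hG) f _).trans ?_
  rw [mul_assoc]
  gcongr
  simpa using energy_le_singletons hp (isPM_dist f) Finset.univ

lemma bConst_nonneg (n : ℕ) : 0 ≤ bConst 𝓕 p n := by
  rw [bConst_eq]
  exact Real.sInf_nonneg fun b hb => hb.1.le

lemma bConst_le {n : ℕ} {b : ℝ} (hb : 0 < b) (h : Admissible 𝓕 p n b) : bConst 𝓕 p n ≤ b := by
  rw [bConst_eq]
  exact csInf_le ⟨0, fun b hb => hb.1.le⟩ ⟨hb, h⟩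

lemma admissible_of_lt (hp : 1 < p) (hlam : 0 < lam)
    (hLip : ∀ G ∈ 𝓕, ∀ x y : G.X, dist (G.F x) (G.F y) ≤ lam * dist x y) {n : ℕ} {b : ℝ}
    (hb : bConst 𝓕 p n < b) : Admissible 𝓕 p n b := by
  rw [bConst_eq] at hb
  obtain ⟨b', ⟨h0, h'⟩, hlt⟩ := exists_lt_of_csInf_lt
    (s := {b : ℝ | 0 < b ∧ Admissible 𝓕 p n b}) ⟨lam, hlam, admissible_lam hp hlam hLip n⟩ hb
  exact h'.mono hp h0 hlt.le

/-- The defining inequality in dimension `k`, applied to all subcubes spanned by `k` disjoint blocks. -/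
lemma Admissible.biUnion {k : ℕ} {b : ℝ} (h : Admissible 𝓕 p k b) {G : MetricMap} (hG : G ∈ 𝓕)
    {ι : Type*} [Fintype ι] [DecidableEq ι] (f : (ι → Bool) → G.X)
    (t : Fin k → Finset ι) (ht : Pairwise fun a b => Disjoint (t a) (t b)) :
    energy p (fun ε δ => dist (G.F (f ε)) (G.F (f δ))) (Finset.univ.biUnion t) ≤
      b ^ p * (k : ℝ) ^ (p - 1) * ∑ j, energy p (fun ε δ => dist (f ε) (f δ)) (t j) := by
  have h1 := Finset.sum_le_sum fun ε (_ : ε ∈ (Finset.univ : Finset (ι → Bool))) =>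
    h G hG (fun δ => f (subcube t ε δ))
  rw [← Finset.mul_sum, Finset.sum_comm,
    sum_energy_subcube p (fun ε δ => dist (G.F (f ε)) (G.F (f δ))) t ht] at h1
  simp only [sum_energy_subcube p (fun ε δ => dist (f ε) (f δ)) t ht,
    Finset.singleton_biUnion, ← Finset.mul_sum] at h1
  have h2 : (0 : ℝ) < 2 ^ Fintype.card (Fin k) := by positivity
  refine le_of_mul_le_mul_left (h1.trans_eq ?_) h2
  ring

/-- Split `n` coordinates into `k` blocks of at most two elements each (residue classes modulo
`k`) and apply the inequality in dimension `k` to the blocks. -/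
lemma bConst_le_of_blocks (hp : 1 < p) (hlam : 0 < lam)
    (hLip : ∀ G ∈ 𝓕, ∀ x y : G.X, dist (G.F x) (G.F y) ≤ lam * dist x y) {n k : ℕ}
    (hn : n ≤ 2 * k) {q : ℝ} (hq : 0 < q) (hkq : (k : ℝ) * 2 ≤ q * n) :
    bConst 𝓕 p n ≤ q ^ (1 - 1 / p) * bConst 𝓕 p k := by
  have hp0 : p ≠ 0 := by linarith
  have hq' : 0 < q ^ (1 - 1 / p) := by positivity
  rw [← div_le_iff₀' hq']
  refine le_of_forall_gt_imp_ge_of_dense fun b hb => ?_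
  have hb0 : 0 < b := (bConst_nonneg k).trans_lt hb
  rw [div_le_iff₀' hq']
  refine bConst_le (by positivity) ?_
  intro G hG f
  have hA := admissible_of_lt hp hlam hLip hb
  let t : Fin k → Finset (Fin n) := fun j => Finset.univ.filter fun i => i.val % k = j.val
  have ht : Pairwise fun a b => Disjoint (t a) (t b) := by
    intro a b hab
    rw [Finset.disjoint_left]
    intro i hi hi'
    simp only [t, Finset.mem_filter, Finset.mem_univ, true_and] at hi hi'
    exact hab (Fin.ext (hi.symm.trans hi'))
  have hk : 0 < n → 0 < k := fun h => by omega
  have hU : Finset.univ.biUnion t = Finset.univ := by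
    ext i
    simp only [t, Finset.mem_biUnion, Finset.mem_univ, Finset.mem_filter, true_and, iff_true]
    exact ⟨⟨i.val % k, Nat.mod_lt _ (hk i.pos)⟩, rfl⟩
  have hcard : ∀ j, (t j).card ≤ 2 := by
    intro j
    have : ((t j).image Fin.val) ⊆ {j.val, j.val + k} := by
      intro x hx
      simp only [t, Finset.mem_image, Finset.mem_filter, Finset.mem_univ, true_and] at hx
      obtain ⟨i, hi, rfl⟩ := hx
      have h1 := Nat.div_add_mod i.val k
      have h2 : i.val / k < 2 := by
        rw [Nat.div_lt_iff_lt_mul (hk i.pos)]; omega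
      simp only [Finset.mem_insert, Finset.mem_singleton]
      interval_cases i.val / k <;> omega
    rw [← Finset.card_image_of_injective _ Fin.val_injective]
    exact (Finset.card_le_card this).trans Finset.card_le_two
  have h1 := hA.biUnion hG f t ht
  rw [hU] at h1
  set ρ : (Fin n → Bool) → (Fin n → Bool) → ℝ := fun ε δ => dist (f ε) (f δ) with hρdef
  have hρ : IsPM ρ := isPM_dist f
  have h2 : ∑ j, energy p ρ (t j) ≤ 2 ^ (p - 1) * ∑ i, energy p ρ {i} := by
    rw [← hU, Finset.sum_biUnion (fun a _ b _ hab => ht hab), Finset.mul_sum]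
    refine Finset.sum_le_sum fun j _ => (energy_le_singletons hp hρ _).trans ?_
    have : 0 ≤ ∑ i ∈ t j, energy p ρ {i} := Finset.sum_nonneg fun _ _ => energy_nonneg hρ _
    have hc : ((t j).card : ℝ) ≤ 2 := by exact_mod_cast hcard j
    have := Real.rpow_le_rpow (Nat.cast_nonneg _) hc (by linarith : 0 ≤ p - 1)
    gcongr
  have hE : 0 ≤ ∑ i, energy p ρ {i} := Finset.sum_nonneg fun _ _ => energy_nonneg hρ _
  have h3 : (k : ℝ) ^ (p - 1) * 2 ^ (p - 1) ≤ q ^ (p - 1) * (n : ℝ) ^ (p - 1) := by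
    rw [← Real.mul_rpow (by positivity) (by positivity),
      ← Real.mul_rpow (by positivity) (by positivity)]
    exact Real.rpow_le_rpow (by positivity) hkq (by linarith)
  have h4 : (q ^ (1 - 1 / p) * b) ^ p = q ^ (p - 1) * b ^ p := by
    rw [Real.mul_rpow (by positivity) hb0.le, ← Real.rpow_mul hq.le]
    congr 2; field_simp
  calc _ ≤ _ := h1
    _ ≤ b ^ p * (k : ℝ) ^ (p - 1) * (2 ^ (p - 1) * ∑ i, energy p ρ {i}) := by gcongr
    _ = b ^ p * ((k : ℝ) ^ (p - 1) * 2 ^ (p - 1)) * ∑ i, energy p ρ {i} := by ring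
    _ ≤ b ^ p * (q ^ (p - 1) * (n : ℝ) ^ (p - 1)) * ∑ i, energy p ρ {i} := by gcongr
    _ = _ := by rw [h4]; ring

end Consts

/-! ### Rigidity and stability of the Hamming metric -/

/-- Strict convexity of `t ↦ t ^ p` at the weights `1 / M` and `(M - 1) / M`. -/
lemma two_block_strict {p : ℝ} (hp : 1 < p) {M u w : ℝ} (hM : 1 < M) (hu : 0 ≤ u) (hw : 0 ≤ w)
    (huw : u ≠ w) : (u + (M - 1) * w) ^ p < M ^ (p - 1) * (u ^ p + (M - 1) * w ^ p) := by
  have hM0 : 0 < M := by linarith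
  have ha : 0 < 1 / M := by positivity
  have hb : 0 < (M - 1) / M := div_pos (by linarith) hM0
  have h := (strictConvexOn_rpow hp).2 (Set.mem_Ici.2 hu) (Set.mem_Ici.2 hw) huw ha hb
    (by field_simp; ring)
  simp only [smul_eq_mul] at h
  have e1 : 1 / M * u + (M - 1) / M * w = (u + (M - 1) * w) / M := by field_simp
  have hnn : 0 ≤ u + (M - 1) * w := add_nonneg hu (mul_nonneg (by linarith) hw)
  rw [e1, Real.div_rpow hnn hM0.le, div_lt_iff₀ (by positivity)] at h
  refine h.trans_eq ?_
  rw [Real.rpow_sub_one hM0.ne']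
  field_simp

lemma two_block_le {p : ℝ} (hp : 1 < p) {M u w : ℝ} (hM : 1 < M) (hu : 0 ≤ u) (hw : 0 ≤ w) :
    (u + (M - 1) * w) ^ p ≤ M ^ (p - 1) * (u ^ p + (M - 1) * w ^ p) := by
  have hM0 : 0 < M := by linarith
  rcases eq_or_ne u w with rfl | h
  · refine le_of_eq ?_
    rw [show u + (M - 1) * u = M * u by ring, Real.mul_rpow hM0.le hu,
      Real.rpow_sub_one hM0.ne']
    field_simp
    ring
  · exact (two_block_strict hp hM hu hw h).le

section Rigidity

variable {m : ℕ} {p : ℝ} {ρ : (Fin m → Bool) → (Fin m → Bool) → ℝ}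

/-- If the antipodal energy reaches its upper bound in terms of edges, then every edge at `x` has
length `ρ x (-x) / m`: compare the two-step path from `x` to `-x` whose first step is the edge in
direction `i` with the estimate for the remaining `m - 1` coordinates. -/
lemma antipode_eq_of_energy (hm : 2 ≤ m) (hp : 1 < p) (hρ : IsPM ρ)
    (hE : (m : ℝ) ^ (p - 1) * ∑ l, energy p ρ {l} ≤ energy p ρ Finset.univ)
    (x : Fin m → Bool) (i : Fin m) :
    ρ x (flipSet Finset.univ x) = m * ρ x (flipSet {i} x) := by
  by_contra hne
  have hM : (1 : ℝ) < m := by exact_mod_cast hm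
  have hM1 : (0 : ℝ) < (m : ℝ) - 1 := by linarith
  let v : (Fin m → Bool) → ℝ := fun δ => ρ (flipSet {i} δ) (flipSet ({i}ᶜ) (flipSet {i} δ))
  let u : (Fin m → Bool) → ℝ := fun δ => ρ δ (flipSet {i} δ)
  have hu : ∀ δ, 0 ≤ u δ := fun δ => hρ.nonneg _ _
  have hv : ∀ δ, 0 ≤ v δ := fun δ => hρ.nonneg _ _
  have hw : ∀ δ, 0 ≤ v δ / (m - 1) := fun δ => div_nonneg (hv δ) hM1.le
  have hvw : ∀ δ, ((m : ℝ) - 1) * (v δ / (m - 1)) = v δ := fun δ => by field_simp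
  have hsplit : ∀ δ : Fin m → Bool,
      flipSet Finset.univ δ = flipSet ({i}ᶜ) (flipSet {i} δ) := fun δ => by
    rw [← flipSet_union disjoint_compl_right, Finset.union_compl]
  have htri : ∀ δ, ρ δ (flipSet Finset.univ δ) ≤ u δ + (m - 1) * (v δ / (m - 1)) := fun δ => by
    rw [hvw, hsplit]; exact hρ.tri _ _ _
  have hle : ∀ δ, ρ δ (flipSet Finset.univ δ) ^ p ≤
      (m : ℝ) ^ (p - 1) * (u δ ^ p + (m - 1) * (v δ / (m - 1)) ^ p) := fun δ =>
    (Real.rpow_le_rpow (hρ.nonneg _ _) (htri δ) (by linarith)).trans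
      (two_block_le hp hM (hu δ) (hw δ))
  have hlt : ρ x (flipSet Finset.univ x) ^ p <
      (m : ℝ) ^ (p - 1) * (u x ^ p + (m - 1) * (v x / (m - 1)) ^ p) := by
    rcases eq_or_ne (u x) (v x / (m - 1)) with h | h
    · refine lt_of_lt_of_le (Real.rpow_lt_rpow (hρ.nonneg _ _) (lt_of_le_of_ne (htri x) ?_)
        (by linarith)) (two_block_le hp hM (hu x) (hw x))
      rw [← h]
      intro h'
      apply hne
      rw [h']
      ring
    · exact (Real.rpow_le_rpow (hρ.nonneg _ _) (htri x) (by linarith)).trans_lt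
        (two_block_strict hp hM (hu x) (hw x) h)
  have hsum : energy p ρ Finset.univ <
      ∑ δ, (m : ℝ) ^ (p - 1) * (u δ ^ p + (m - 1) * (v δ / (m - 1)) ^ p) :=
    Finset.sum_lt_sum (fun δ _ => hle δ) ⟨x, Finset.mem_univ _, hlt⟩
  have hU : ∑ δ, u δ ^ p = energy p ρ {i} := rfl
  have hV : ∑ δ, v δ ^ p = energy p ρ ({i}ᶜ) :=
    sum_flipSet {i} (fun δ => ρ δ (flipSet ({i}ᶜ) δ) ^ p)
  have hc : ((({i}ᶜ : Finset (Fin m)).card : ℕ) : ℝ) = (m : ℝ) - 1 := by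
    rw [Finset.card_compl, Finset.card_singleton, Fintype.card_fin, Nat.cast_sub (by omega)]
    simp
  have hV2 := energy_le_singletons hp hρ ({i}ᶜ)
  rw [hc] at hV2
  have hsumw : ∑ δ, ((m : ℝ) - 1) * (v δ / (m - 1)) ^ p ≤ ∑ l ∈ ({i}ᶜ), energy p ρ {l} := by
    have : ∀ δ, ((m : ℝ) - 1) * (v δ / (m - 1)) ^ p = v δ ^ p / ((m : ℝ) - 1) ^ (p - 1) :=
      fun δ => by
        rw [Real.div_rpow (hv δ) hM1.le, Real.rpow_sub_one hM1.ne']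
        field_simp
    simp only [this]
    rw [← Finset.sum_div, hV, div_le_iff₀' (by positivity)]
    exact hV2
  rw [← Finset.mul_sum, Finset.sum_add_distrib, hU] at hsum
  have htot : ∑ l, energy p ρ {l} = energy p ρ {i} + ∑ l ∈ ({i}ᶜ), energy p ρ {l} := by
    rw [← Finset.sum_add_sum_compl ({i} : Finset (Fin m)), Finset.sum_singleton]
  have : (m : ℝ) ^ (p - 1) * (energy p ρ {i} + ∑ δ, ((m : ℝ) - 1) * (v δ / (m - 1)) ^ p) ≤
      (m : ℝ) ^ (p - 1) * ∑ l, energy p ρ {l} := by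
    rw [htot]; gcongr
  linarith

lemma eq_flipSet (x y : Fin m → Bool) :
    y = flipSet (Finset.univ.filter fun i => x i ≠ y i) x := by
  funext i
  by_cases h : x i = y i
  · simp [flipSet, h]
  · cases hx : x i <;> cases hy : y i <;> simp_all [flipSet]

/-- Rigidity: a pseudometric of normalised edge energy and maximal antipodal energy is the
normalized Hamming metric. All edges have length `1 / m` since adjacent points share an edge, and
antipodes have distance `1`, which bounds the other distances from both sides. -/
lemma eq_hdist_of_energy (hm : 2 ≤ m) (hp : 1 < p) (hρ : IsPM ρ)
    (hE1 : (m : ℝ) ^ (p - 1) * ∑ l, energy p ρ {l} = 2 ^ m)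
    (hE2 : 2 ^ m ≤ energy p ρ Finset.univ) (x y : Fin m → Bool) :
    ρ x y = hdist m x y := by
  have hm0 : (0 : ℝ) < m := by exact_mod_cast (by omega : 0 < m)
  have hA := antipode_eq_of_energy hm hp hρ (hE1.trans_le hE2)
  have hAle := energy_le_singletons hp hρ Finset.univ
  rw [Finset.card_univ, Fintype.card_fin, hE1] at hAle
  have hE3 := le_antisymm hAle hE2
  have hstep : ∀ (i : Fin m) x, ρ (flipSet {i} x) (flipSet Finset.univ (flipSet {i} x)) =
      ρ x (flipSet Finset.univ x) := fun i x => by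
    rw [hA _ i, hA x i, flipSet_flipSet, hρ.symm]
  have hins : ∀ {i : Fin m} {S : Finset (Fin m)}, i ∉ S → ∀ x : Fin m → Bool,
      flipSet (insert i S) x = flipSet {i} (flipSet S x) := fun hi x => by
    rw [← flipSet_union (Finset.disjoint_singleton_right.2 hi), Finset.insert_eq, Finset.union_comm]
  have hconst : ∀ (S : Finset (Fin m)), ρ (flipSet S x) (flipSet Finset.univ (flipSet S x)) =
      ρ x (flipSet Finset.univ x) := fun S => by
    induction S using Finset.induction_on with
    | empty =>
      have : flipSet ∅ x = x := by funext i; simp [flipSet]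
      rw [this]
    | insert i S hi ih => rw [hins hi, hstep, ih]
  have hW : ∀ z, ρ z (flipSet Finset.univ z) = ρ x (flipSet Finset.univ x) := fun z => by
    have h := hconst (Finset.univ.filter fun i => x i ≠ z i)
    rwa [← eq_flipSet x z] at h
  have hone : ∀ z, ρ z (flipSet Finset.univ z) = 1 := by
    have h : energy p ρ Finset.univ = 2 ^ m * ρ x (flipSet Finset.univ x) ^ p := by
      unfold energy
      simp [hW]
    rw [hE3] at h
    have h1 : ρ x (flipSet Finset.univ x) ^ p = 1 := by
      have : (0 : ℝ) < 2 ^ m := by positivity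
      field_simp at h
      exact h.symm
    have h2 := (Real.rpow_left_inj (hρ.nonneg _ _) zero_le_one (by linarith : p ≠ 0)).1
      (h1.trans (Real.one_rpow p).symm)
    exact fun z => (hW z).trans h2
  have hedge : ∀ z (i : Fin m), ρ z (flipSet {i} z) = 1 / m := fun z i => by
    have := hA z i
    rw [hone] at this
    field_simp
    linarith
  have hup : ∀ z (S : Finset (Fin m)), ρ z (flipSet S z) ≤ S.card / m := fun z S => by
    induction S using Finset.induction_on with
    | empty =>
      have : flipSet ∅ z = z := by funext i; simp [flipSet]
      simp [this, hρ.self]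
    | insert i S hi ih =>
      rw [hins hi, Finset.card_insert_of_notMem hi]
      have := hρ.tri z (flipSet S z) (flipSet {i} (flipSet S z))
      rw [hedge] at this
      push_cast
      rw [add_div]
      linarith
  have hS := eq_flipSet x y
  unfold hdist
  set S := Finset.univ.filter fun i => x i ≠ y i
  rw [hS]
  refine le_antisymm (hup x S) ?_
  have hsp : flipSet Sᶜ (flipSet S x) = flipSet Finset.univ x := by
    rw [← flipSet_union disjoint_compl_right, Finset.union_compl]
  have h1 := hρ.tri x (flipSet S x) (flipSet Sᶜ (flipSet S x))
  have h2 := hup (flipSet S x) Sᶜ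
  have hc : ((Sᶜ.card : ℕ) : ℝ) = m - S.card := by
    rw [Finset.card_compl, Fintype.card_fin, Nat.cast_sub (by simpa using Finset.card_le_univ S)]
  rw [hc, sub_div, div_self hm0.ne'] at h2
  rw [hsp] at h1 h2
  rw [hone x] at h1
  linarith

/-- Stability of the rigidity statement, for normalised edge energy. The normalised pseudometrics
that are not within a factor `D` of the Hamming metric form a compact set, on which the antipodal
energy stays strictly below its bound `2 ^ m`. -/
lemma stability_normalized (hm : 2 ≤ m) (hp : 1 < p) {D : ℝ} (hD : 1 < D) :
    ∃ κ : ℝ, 0 < κ ∧ ∀ ρ : (Fin m → Bool) → (Fin m → Bool) → ℝ, IsPM ρ →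
      (m : ℝ) ^ (p - 1) * ∑ l, energy p ρ {l} = 2 ^ m →
      (1 - κ) * 2 ^ m < energy p ρ Finset.univ →
      ∀ x y, x ≠ y → 1 / D * hdist m x y < ρ x y ∧ ρ x y < D * hdist m x y := by
  have hp0 : p ≠ 0 := by linarith
  have hm0 : (0 : ℝ) < m := by exact_mod_cast (by omega : 0 < m)
  have hm1 : (1 : ℝ) ≤ m := by exact_mod_cast (by omega : 1 ≤ m)
  have hcont : ∀ S : Finset (Fin m),
      Continuous fun ρ : (Fin m → Bool) → (Fin m → Bool) → ℝ => energy p ρ S := fun S => by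
    unfold energy
    refine continuous_finsetSum _ fun ε _ => ?_
    exact (continuous_apply_apply ε (flipSet S ε)).rpow_const fun _ => Or.inr (by linarith)
  let bad : Set ((Fin m → Bool) → (Fin m → Bool) → ℝ) :=
    {ρ | IsPM ρ} ∩ ({ρ | (m : ℝ) ^ (p - 1) * ∑ l, energy p ρ {l} = 2 ^ m} ∩
      ⋃ x, ⋃ y, {ρ | x ≠ y ∧ (ρ x y ≤ 1 / D * hdist m x y ∨ D * hdist m x y ≤ ρ x y)})
  have hev : ∀ x y, Continuous fun ρ : (Fin m → Bool) → (Fin m → Bool) → ℝ => ρ x y :=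
    fun x y => continuous_apply_apply x y
  have hclosed : IsClosed bad := by
    refine IsClosed.inter ?_ (IsClosed.inter ?_ ?_)
    · have : {ρ : (Fin m → Bool) → (Fin m → Bool) → ℝ | IsPM ρ} =
          {ρ | ∀ x, ρ x x = 0} ∩ ({ρ | ∀ x y, ρ x y = ρ y x} ∩
            ({ρ | ∀ x y z, ρ x z ≤ ρ x y + ρ y z} ∩ {ρ | ∀ x y, 0 ≤ ρ x y})) := by
        ext ρ
        exact ⟨fun h => ⟨h.1, h.2, h.3, h.4⟩, fun h => ⟨h.1, h.2.1, h.2.2.1, h.2.2.2⟩⟩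
      rw [this]
      refine IsClosed.inter ?_ (IsClosed.inter ?_ (IsClosed.inter ?_ ?_))
      · simp only [Set.ofPred_forall]
        exact isClosed_iInter fun x => isClosed_eq (hev _ _) continuous_const
      · simp only [Set.ofPred_forall]
        exact isClosed_iInter fun x => isClosed_iInter fun y => isClosed_eq (hev _ _) (hev _ _)
      · simp only [Set.ofPred_forall]
        exact isClosed_iInter fun x => isClosed_iInter fun y => isClosed_iInter fun z =>
          isClosed_le (hev _ _) ((hev _ _).add (hev _ _))
      · simp only [Set.ofPred_forall]
        exact isClosed_iInter fun x => isClosed_iInter fun y =>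
          isClosed_le continuous_const (hev _ _)
    · exact isClosed_eq (continuous_const.mul (continuous_finsetSum _ fun l _ => hcont _))
        continuous_const
    · refine isClosed_iUnion_of_finite fun x => isClosed_iUnion_of_finite fun y => ?_
      refine isClosed_const.and ?_
      exact (isClosed_le (hev _ _) continuous_const).union
        (isClosed_le continuous_const (hev _ _))
  have hbdd : bad ⊆ Metric.closedBall 0 ((2 ^ m : ℝ) ^ (1 / p)) := by
    rintro ρ ⟨hρ, hE, -⟩
    have hρ : IsPM ρ := hρ
    have hE : (m : ℝ) ^ (p - 1) * ∑ l, energy p ρ {l} = 2 ^ m := hE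
    rw [Metric.mem_closedBall]
    refine (dist_pi_le_iff (by positivity)).2 fun x => (dist_pi_le_iff (by positivity)).2 fun y => ?_
    simp only [Pi.zero_apply, dist_zero_right, Real.norm_eq_abs, abs_of_nonneg (hρ.nonneg x y)]
    refine (Real.rpow_le_rpow_iff (hρ.nonneg x y) (by positivity) (by linarith : 0 < p)).1 ?_
    rw [← Real.rpow_mul (by positivity), one_div_mul_cancel hp0, Real.rpow_one, ← hE]
    set S := Finset.univ.filter fun i => x i ≠ y i with hS
    calc ρ x y ^ p = ρ x (flipSet S x) ^ p := by rw [hS, ← eq_flipSet]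
      _ ≤ energy p ρ S := Finset.single_le_sum (f := fun ε => ρ ε (flipSet S ε) ^ p)
          (fun ε _ => Real.rpow_nonneg (hρ.nonneg _ _) _) (Finset.mem_univ x)
      _ ≤ (S.card : ℝ) ^ (p - 1) * ∑ i ∈ S, energy p ρ {i} := energy_le_singletons hp hρ S
      _ ≤ (m : ℝ) ^ (p - 1) * ∑ i, energy p ρ {i} := by
        have h1 : (S.card : ℝ) ≤ m := by
          exact_mod_cast (Finset.card_le_univ S).trans_eq (Fintype.card_fin m)
        have h2 := Real.rpow_le_rpow (Nat.cast_nonneg _) h1 (by linarith : 0 ≤ p - 1)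
        have h3 : ∑ i ∈ S, energy p ρ {i} ≤ ∑ i, energy p ρ {i} :=
          Finset.sum_le_univ_sum_of_nonneg fun i => energy_nonneg hρ _
        have h4 : 0 ≤ ∑ i ∈ S, energy p ρ {i} := Finset.sum_nonneg fun i _ => energy_nonneg hρ _
        gcongr
  have hcompact : IsCompact bad := (isCompact_closedBall _ _).of_isClosed_subset hclosed hbdd
  obtain ⟨κ, hκ, hbad⟩ : ∃ κ : ℝ, 0 < κ ∧ ∀ ρ ∈ bad, energy p ρ Finset.univ ≤ (1 - κ) * 2 ^ m := by
    rcases bad.eq_empty_or_nonempty with h | h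
    · exact ⟨1, one_pos, by simp [h]⟩
    · obtain ⟨ρ₀, hρ₀, hmax⟩ := hcompact.exists_isMaxOn h (hcont Finset.univ).continuousOn
      have hlt : energy p ρ₀ Finset.univ < 2 ^ m := by
        by_contra! hge
        obtain ⟨hPM, hE, hxy⟩ := hρ₀
        simp only [Set.mem_iUnion] at hxy
        obtain ⟨x, y, hne, hor⟩ := hxy
        rw [eq_hdist_of_energy hm hp hPM hE hge x y] at hor
        have hpos : 0 < hdist m x y := by
          obtain ⟨i, hi⟩ := Function.ne_iff.1 hne
          unfold hdist
          refine div_pos (Nat.cast_pos.2 (Finset.card_pos.2 ⟨i, by simpa using hi⟩)) hm0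
        rcases hor with h1 | h1
        · have : 1 / D < 1 := by rw [div_lt_one (by linarith)]; exact hD
          nlinarith
        · nlinarith
      have h2 : (0 : ℝ) < 2 ^ m := by positivity
      refine ⟨1 - energy p ρ₀ Finset.univ / 2 ^ m, ?_, fun ρ hρ => ?_⟩
      · rw [sub_pos, div_lt_one h2]; exact hlt
      · rw [sub_sub_cancel, div_mul_cancel₀ _ h2.ne']
        exact isMaxOn_iff.1 hmax ρ hρ
  refine ⟨κ, hκ, fun ρ hρ hE hen x y hne => ?_⟩
  by_contra hnot
  rw [not_and_or, not_lt, not_lt] at hnot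
  exact hen.not_ge (hbad ρ ⟨hρ, hE, Set.mem_iUnion.2 ⟨x, Set.mem_iUnion.2 ⟨y, hne, hnot⟩⟩⟩)

/-- `stability_normalized` after rescaling `ρ` by the `p`-th root of the mean edge energy. -/
lemma stability (hm : 2 ≤ m) (hp : 1 < p) {D : ℝ} (hD : 1 < D) :
    ∃ κ : ℝ, 0 < κ ∧ ∀ ρ : (Fin m → Bool) → (Fin m → Bool) → ℝ, IsPM ρ →
      0 < (m : ℝ) ^ (p - 1) * ∑ l, energy p ρ {l} →
      (1 - κ) * ((m : ℝ) ^ (p - 1) * ∑ l, energy p ρ {l}) < energy p ρ Finset.univ →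
      ∀ x y,
        ((m : ℝ) ^ (p - 1) * (∑ l, energy p ρ {l}) / 2 ^ m) ^ (1 / p) / D * hdist m x y ≤ ρ x y ∧
        ρ x y ≤ ((m : ℝ) ^ (p - 1) * (∑ l, energy p ρ {l}) / 2 ^ m) ^ (1 / p) * D * hdist m x y
      := by
  have hp0 : p ≠ 0 := by linarith
  obtain ⟨κ, hκ, hgap⟩ := stability_normalized hm hp hD
  refine ⟨κ, hκ, fun ρ hρ hpos hen x y => ?_⟩
  set P := (m : ℝ) ^ (p - 1) * ∑ l, energy p ρ {l} with hP
  set a := (P / 2 ^ m) ^ (1 / p) with ha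
  have h2 : (0 : ℝ) < 2 ^ m := by positivity
  have hP2 : 0 < P / 2 ^ m := div_pos hpos h2
  have ha0 : 0 < a := Real.rpow_pos_of_pos hP2 _
  have hap : a ^ p = P / 2 ^ m := by
    rw [ha, ← Real.rpow_mul hP2.le, one_div_mul_cancel hp0, Real.rpow_one]
  rcases eq_or_ne x y with rfl | hne
  · simp [hρ.self, hdist]
  let σ : (Fin m → Bool) → (Fin m → Bool) → ℝ := fun x y => ρ x y / a
  have hσ : IsPM σ := ⟨fun x => by simp [σ, hρ.self], fun x y => by simp [σ, hρ.symm x y],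
    fun x y z => by
      simp only [σ]
      rw [← add_div]
      exact div_le_div_of_nonneg_right (hρ.tri _ _ _) ha0.le,
    fun x y => div_nonneg (hρ.nonneg _ _) ha0.le⟩
  have hσe : ∀ S, energy p σ S = energy p ρ S / a ^ p := fun S => by
    simp only [energy, σ, Real.div_rpow (hρ.nonneg _ _) ha0.le, Finset.sum_div]
  have hσU : (1 - κ) * 2 ^ m < energy p σ Finset.univ := by
    rw [hσe, hap, lt_div_iff₀ hP2]
    have : (1 - κ) * 2 ^ m * (P / 2 ^ m) = (1 - κ) * P := by field_simp
    linarith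
  have hσE : (m : ℝ) ^ (p - 1) * ∑ l, energy p σ {l} = 2 ^ m := by
    simp only [hσe]
    rw [← Finset.sum_div, mul_div_assoc', ← hP, hap]
    field_simp
  have hnot := hgap σ hσ hσE hσU x y hne
  have hs : ρ x y = a * σ x y := by simp only [σ]; field_simp
  rw [hs]
  constructor
  · calc a / D * hdist m x y = a * (1 / D * hdist m x y) := by ring
      _ ≤ _ := mul_le_mul_of_nonneg_left hnot.1.le ha0.le
  · rw [mul_assoc]
    exact mul_le_mul_of_nonneg_left hnot.2.le ha0.le

end Rigidity

/-! ### Nearly extremal subcubes and the embedding of Hamming cubes -/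

section Embedding

variable {𝓕 : Set MetricMap} {p : ℝ} {lam : ℝ}

/-- By continuity at `c' = b' = β`, where the displayed expression equals `β ^ p - c ^ p > 0`. -/
lemma exists_close_constants (hp : 1 < p) {c K β : ℝ} (hc : 0 < c) (hcβ : c < β) :
    ∃ c' b' : ℝ, 0 < c' ∧ c' < β ∧ β < b' ∧
      0 < c' ^ p - c ^ p - K * (1 - (c' / b') ^ p) - K * (b' ^ p - c' ^ p) := by
  have hβ : 0 < β := hc.trans hcβ
  let h : ℝ → ℝ := fun t => (β - t) ^ p - c ^ p - K * (1 - ((β - t) / (β + t)) ^ p) -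
    K * ((β + t) ^ p - (β - t) ^ p)
  have hcont : ContinuousAt h 0 := by
    have h1 : ContinuousAt (fun t : ℝ => β - t) 0 := by fun_prop
    have h2 : ContinuousAt (fun t : ℝ => β + t) 0 := by fun_prop
    have hp0 : 0 ≤ p := by linarith
    have e1 := h1.rpow_const (p := p) (Or.inr hp0)
    have e2 := h2.rpow_const (p := p) (Or.inr hp0)
    have e3 := (h1.div h2 (by simpa using hβ.ne')).rpow_const (p := p) (Or.inr hp0)
    exact ((e1.sub continuousAt_const).sub
      (continuousAt_const.mul (continuousAt_const.sub e3))).sub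
      (continuousAt_const.mul (e2.sub e1))
  have h0 : 0 < h 0 := by
    have := Real.rpow_lt_rpow hc.le hcβ (by linarith : 0 < p)
    simp only [h, sub_zero, add_zero, div_self hβ.ne', Real.one_rpow, sub_self, mul_zero]
    linarith
  have hev : ∀ᶠ t in nhdsWithin (0 : ℝ) (Set.Ioi 0), 0 < h t :=
    (hcont.eventually (lt_mem_nhds h0)).filter_mono nhdsWithin_le_nhds
  have hev2 : ∀ᶠ t in nhdsWithin (0 : ℝ) (Set.Ioi 0), t ∈ Set.Ioo 0 β :=
    Ioo_mem_nhdsGT hβ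
  obtain ⟨t, ht, ht2⟩ := (hev.and hev2).exists
  exact ⟨β - t, β + t, by linarith [ht2.2], by linarith [ht2.1], by linarith [ht2.1], ht⟩

/-- Let `β` be the limit of `b_{p,2^n}`, and write `X, Y` for the normalised edge energies of an
`m`-dimensional cube in the source and target, and `XD, YD` for its antipodal energies. For every
`K` some cube satisfies `c ^ p * X + K * (X - XD) + K * (Y - YD) < YD` (displayed without
subtractions). It is found inside a near-extremal `k * m * k`-dimensional cube, `k` a large power
of two: the coordinates are split into `k` groups of `m` blocks of size `k`, each group together
with a base point spans an `m`-cube, and the inequality holds on average over these `m`-cubes. -/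
lemma exists_extremal_subcube (hp : 1 < p) (hlam : 0 < lam)
    (hLip : ∀ G ∈ 𝓕, ∀ x y : G.X, dist (G.F x) (G.F y) ≤ lam * dist x y)
    {c K β : ℝ} (hc : 0 < c) (hcβ : c < β) (hK : 0 < K)
    (hβ : ∀ n, β ≤ bConst 𝓕 p (2 ^ n)) (hlim : ∀ b, β < b → ∃ n, bConst 𝓕 p (2 ^ n) < b)
    {m : ℕ} (hm : ∃ μ, m = 2 ^ μ) :
    ∃ G ∈ 𝓕, ∃ g : (Fin m → Bool) → G.X,
      (c ^ p + K) * ((m : ℝ) ^ (p - 1) * ∑ l, energy p (fun x y => dist (g x) (g y)) {l}) +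
        K * ((m : ℝ) ^ (p - 1) * ∑ l, energy p (fun x y => dist (G.F (g x)) (G.F (g y))) {l}) <
      K * energy p (fun x y => dist (g x) (g y)) Finset.univ +
        (1 + K) * energy p (fun x y => dist (G.F (g x)) (G.F (g y))) Finset.univ := by
  obtain ⟨c', b', hc', hc'β, hb', hpos⟩ := exists_close_constants (K := K) hp hc hcβ
  have hb0 : 0 < b' := by linarith
  obtain ⟨n₁, hn₁⟩ := hlim b' hb'
  obtain ⟨μ, hμ⟩ := hm
  have hm0 : (0 : ℝ) < m := by rw [hμ]; positivity
  obtain ⟨k, hk⟩ : ∃ k, k = 2 ^ n₁ := ⟨_, rfl⟩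
  have hk0 : (0 : ℝ) < k := by rw [hk]; positivity
  rw [← hk] at hn₁
  have hAdm : Admissible 𝓕 p k b' := admissible_of_lt hp hlam hLip hn₁
  have hN : k * (m * k) = 2 ^ (n₁ + (μ + n₁)) := by rw [hk, hμ]; ring
  have hnot : ¬ Admissible 𝓕 p (k * (m * k)) c' := by
    intro h
    have h1 := bConst_le hc' h
    have h2 := hβ (n₁ + (μ + n₁))
    rw [← hN] at h2
    linarith
  unfold Admissible at hnot
  push Not at hnot
  obtain ⟨G, hG, f, hT⟩ := hnot
  refine ⟨G, hG, ?_⟩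
  let e : Fin (k * (m * k)) ≃ Fin k × Fin m × Fin k :=
    finProdFinEquiv.symm.trans ((Equiv.refl _).prodCongr finProdFinEquiv.symm)
  set ρX : (Fin (k * (m * k)) → Bool) → (Fin (k * (m * k)) → Bool) → ℝ :=
    fun x y => dist (f x) (f y) with hρX
  set ρY : (Fin (k * (m * k)) → Bool) → (Fin (k * (m * k)) → Bool) → ℝ :=
    fun x y => dist (G.F (f x)) (G.F (f y)) with hρY
  have hX : IsPM ρX := isPM_dist f
  have hY : IsPM ρY := isPM_dist (fun x => G.F (f x))
  let B : Fin k → Fin m → Finset (Fin (k * (m * k))) := fun j l =>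
    Finset.univ.filter fun i => (e i).1 = j ∧ (e i).2.1 = l
  let A : Fin k → Finset (Fin (k * (m * k))) := fun j => Finset.univ.biUnion (B j)
  have hB : ∀ j, Pairwise fun a b => Disjoint (B j a) (B j b) := fun j a b hab => by
    refine Finset.disjoint_left.2 fun i hi hi' => ?_
    simp only [B, Finset.mem_filter] at hi hi'
    exact hab (hi.2.2.symm.trans hi'.2.2)
  have hA : Pairwise fun a b => Disjoint (A a) (A b) := fun a b hab => by
    refine Finset.disjoint_left.2 fun i hi hi' => ?_
    simp only [A, B, Finset.mem_filter, Finset.mem_biUnion] at hi hi'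
    obtain ⟨_, _, _, h1, _⟩ := hi
    obtain ⟨_, _, _, h2, _⟩ := hi'
    exact hab (h1.symm.trans h2)
  have hAU : Finset.univ.biUnion A = Finset.univ := by
    ext i
    simp [A, B]
  have hBs : ∀ j l, B j l = Finset.univ.biUnion fun s : Fin k => {e.symm (j, l, s)} := by
    intro j l
    ext i
    simp only [B, Finset.mem_filter, Finset.mem_univ, true_and, Finset.mem_biUnion,
      Finset.mem_singleton, Equiv.eq_symm_apply]
    constructor
    · rintro ⟨rfl, rfl⟩
      exact ⟨(e i).2.2, rfl⟩
    · rintro ⟨s, hs⟩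
      rw [hs]
      exact ⟨rfl, rfl⟩
  have hs : ∀ j l, Pairwise fun a b : Fin k =>
      Disjoint ({e.symm (j, l, a)} : Finset (Fin (k * (m * k)))) {e.symm (j, l, b)} := by
    intro j l a b hab
    simpa using hab
  have hsum : ∑ j, ∑ l, ∑ s, energy p ρX {e.symm (j, l, s)} = ∑ i, energy p ρX {i} := by
    rw [← Equiv.sum_comp e.symm, Fintype.sum_prod_type]
    exact Finset.sum_congr rfl fun j _ => by rw [Fintype.sum_prod_type]
  set E := ∑ i, energy p ρX {i} with hE
  have hE0 : 0 ≤ E := Finset.sum_nonneg fun _ _ => energy_nonneg hX _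
  -- `h1`, `h3` bound the energy through source distances of groups and blocks, `h2`, `h4` through
  -- target distances. As `b'` is close to `c'`, each of the four is nearly an equality.
  have h1 := hAdm.biUnion hG f A hA
  rw [hAU] at h1
  have h2 := energy_biUnion hp hY A hA Finset.univ
  rw [hAU, Finset.card_univ, Fintype.card_fin] at h2
  have h3 : ∑ j, ∑ l, energy p ρX (B j l) ≤ (k : ℝ) ^ (p - 1) * E := by
    rw [← hsum, Finset.mul_sum]
    refine Finset.sum_le_sum fun j _ => ?_
    rw [Finset.mul_sum]
    refine Finset.sum_le_sum fun l _ => ?_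
    have := energy_biUnion hp hX _ (hs j l) Finset.univ
    rwa [← hBs, Finset.card_univ, Fintype.card_fin] at this
  have h4 : ∑ j, ∑ l, energy p ρY (B j l) ≤ b' ^ p * (k : ℝ) ^ (p - 1) * E := by
    rw [← hsum, Finset.mul_sum]
    refine Finset.sum_le_sum fun j _ => ?_
    rw [Finset.mul_sum]
    refine Finset.sum_le_sum fun l _ => ?_
    have := hAdm.biUnion hG f _ (hs j l)
    rwa [← hBs] at this
  set SXD := ∑ j, energy p ρX (A j)
  set SYD := ∑ j, energy p ρY (A j)
  set kp := (k : ℝ) ^ (p - 1) with hkp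
  set mp := (m : ℝ) ^ (p - 1) with hmp
  have hkp0 : 0 < kp := Real.rpow_pos_of_pos hk0 _
  have hmp0 : 0 < mp := Real.rpow_pos_of_pos hm0 _
  have hNp : ((k * (m * k) : ℕ) : ℝ) ^ (p - 1) = kp * (mp * kp) := by
    push_cast
    rw [Real.mul_rpow hk0.le (by positivity), Real.mul_rpow hm0.le hk0.le]
  rw [hNp] at hT
  have h5 : c' ^ p * (mp * (kp * E)) < SYD := by
    refine lt_of_mul_lt_mul_left (a := kp) ((lt_of_eq_of_lt ?_ hT).trans_le h2) hkp0.le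
    ring
  have h6 : c' ^ p * (mp * (kp * E)) < b' ^ p * SXD := by
    refine lt_of_mul_lt_mul_left (a := kp)
      ((lt_of_eq_of_lt ?_ hT).trans_le (h1.trans_eq ?_)) hkp0.le
    · ring
    · ring
  have hbp : 0 < b' ^ p := Real.rpow_pos_of_pos hb0 _
  rw [Real.div_rpow hc'.le hb0.le] at hpos
  have h7 : c' ^ p / b' ^ p * (mp * (kp * E)) < SXD := by
    rw [div_mul_eq_mul_div, div_lt_iff₀' hbp]
    exact h6
  set a₀ := mp * (kp * E) with ha₀
  have ha : 0 ≤ a₀ := by rw [ha₀]; exact mul_nonneg hmp0.le (mul_nonneg hkp0.le hE0)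
  have hSX : mp * ∑ j, ∑ l, energy p ρX (B j l) ≤ a₀ := mul_le_mul_of_nonneg_left h3 hmp0.le
  have hSY : mp * ∑ j, ∑ l, energy p ρY (B j l) ≤ b' ^ p * a₀ :=
    (mul_le_mul_of_nonneg_left h4 hmp0.le).trans_eq (by rw [ha₀]; ring)
  have hcp : 0 < c ^ p := Real.rpow_pos_of_pos hc _
  have hkey : (c ^ p + K) * (mp * ∑ j, ∑ l, energy p ρX (B j l)) +
      K * (mp * ∑ j, ∑ l, energy p ρY (B j l)) < K * SXD + (1 + K) * SYD := by
    have e1 := mul_le_mul_of_nonneg_left hSX (add_pos hcp hK).le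
    have e2 := mul_le_mul_of_nonneg_left hSY hK.le
    have e3 := mul_lt_mul_of_pos_left h7 hK
    have e4 := mul_lt_mul_of_pos_left h5 (by linarith : 0 < 1 + K)
    have e5 := mul_nonneg ha hpos.le
    linarith
  -- Averaging over the groups `j` and the base points `ε` turns `hkey` into the claim for one cube.
  by_contra hcon
  push Not at hcon
  have hall : ∀ j ε, _ := fun j ε => hcon (fun δ => f (subcube (B j) ε δ))
  have hS := Finset.sum_le_sum fun j (_ : j ∈ (Finset.univ : Finset (Fin k))) =>
    Finset.sum_le_sum fun ε (_ : ε ∈ (Finset.univ : Finset (Fin (k * (m * k)) → Bool))) => hall j ε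
  have sX := fun j S => sum_energy_subcube p ρX (B j) (hB j) S
  have sY := fun j S => sum_energy_subcube p ρY (B j) (hB j) S
  simp only [ρX] at sX
  simp only [ρY] at sY
  have sX1 : ∀ j, ∑ ε, ∑ l, energy p (fun x y => dist (f (subcube (B j) ε x))
      (f (subcube (B j) ε y))) {l} = 2 ^ m * ∑ l, energy p ρX (B j l) := fun j => by
    rw [Finset.sum_comm]
    simp only [sX, Finset.singleton_biUnion, Fintype.card_fin, ← Finset.mul_sum, ρX]
  have sY1 : ∀ j, ∑ ε, ∑ l, energy p (fun x y => dist (G.F (f (subcube (B j) ε x)))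
      (G.F (f (subcube (B j) ε y)))) {l} = 2 ^ m * ∑ l, energy p ρY (B j l) := fun j => by
    rw [Finset.sum_comm]
    simp only [sY, Finset.singleton_biUnion, Fintype.card_fin, ← Finset.mul_sum, ρY]
  simp only [Finset.sum_add_distrib, ← Finset.mul_sum, sX1, sY1, sX, sY, Fintype.card_fin] at hS
  have h2m : (0 : ℝ) < 2 ^ m := by positivity
  have hS' : 2 ^ m * (K * SXD + (1 + K) * SYD) ≤
      2 ^ m * ((c ^ p + K) * (mp * ∑ j, ∑ l, energy p ρX (B j l)) +
      K * (mp * ∑ j, ∑ l, energy p ρY (B j l))) := by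
    refine (le_of_eq ?_).trans (hS.trans_eq ?_)
    · simp only [SXD, SYD, A, ρX, ρY]
      ring
    · ring
  exact absurd (le_of_mul_le_mul_left hS' h2m) (not_le.2 hkey)

/-- Extension of a point of the `n`-cube to the `m`-cube by `false` in the further coordinates. -/
def padCube {n m : ℕ} (δ : Fin n → Bool) : Fin m → Bool :=
  fun i => if h : i.val < n then δ ⟨i.val, h⟩ else false

lemma hdist_padCube {n m : ℕ} (hn : 0 < n) (hnm : n ≤ m) (x y : Fin n → Bool) :
    hdist m (padCube x) (padCube y) = (n : ℝ) / m * hdist n x y := by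
  have hc : (Finset.univ.filter fun i : Fin m => (padCube x : Fin m → Bool) i ≠ padCube y i).card =
      (Finset.univ.filter fun i : Fin n => x i ≠ y i).card := by
    rw [← Finset.card_map (Fin.castLEEmb hnm)]
    congr 1
    ext i
    rw [Finset.mem_filter, Finset.mem_map]
    simp only [Finset.mem_filter, Finset.mem_univ, true_and, padCube]
    constructor
    · intro h
      by_cases hi : i.val < n
      · exact ⟨⟨i.val, hi⟩, by simpa [hi] using h, by ext; simp⟩
      · simp [hi] at h
    · rintro ⟨j, hj, rfl⟩
      simpa using hj
  have hn0 : (0 : ℝ) < n := by exact_mod_cast hn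
  unfold hdist
  rw [hc]
  field_simp

/-- Every `c` below the limit `β` of `b_{p,2^n}` is a factorization constant for the Hamming cubes:
stability applies to the source and the target metric of an extremal `2^n`-dimensional cube, which
contains the `n`-dimensional one. -/
lemma exists_embedding (hp : 1 < p) (hlam : 0 < lam)
    (hLip : ∀ G ∈ 𝓕, ∀ x y : G.X, dist (G.F x) (G.F y) ≤ lam * dist x y)
    {c β : ℝ} (hc : 0 < c) (hcβ : c < β)
    (hβ : ∀ n, β ≤ bConst 𝓕 p (2 ^ n)) (hlim : ∀ b, β < b → ∃ n, bConst 𝓕 p (2 ^ n) < b)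
    {D : ℝ} (hD : 1 < D) {n : ℕ} (hn : 0 < n) :
    ∃ G ∈ 𝓕, ∃ f : (Fin n → Bool) → G.X, ∃ a b : ℝ, 0 < a ∧ 0 < b ∧ a * c ≤ b ∧
      ∀ ε δ : Fin n → Bool,
        a / D * hdist n ε δ ≤ dist (f ε) (f δ) ∧
        dist (f ε) (f δ) ≤ a * D * hdist n ε δ ∧
        b / D * hdist n ε δ ≤ dist (G.F (f ε)) (G.F (f δ)) ∧
        dist (G.F (f ε)) (G.F (f δ)) ≤ b * D * hdist n ε δ := by
  obtain ⟨m, hm⟩ : ∃ m, m = 2 ^ n := ⟨_, rfl⟩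
  have hm2 : 2 ≤ m := by rw [hm]; exact Nat.le_self_pow hn.ne' 2
  have hnm : n ≤ m := by rw [hm]; exact Nat.lt_two_pow_self.le
  obtain ⟨κ, hκ, hstab⟩ := stability (m := m) hm2 hp hD
  have hlp : 0 < lam ^ p := Real.rpow_pos_of_pos hlam _
  have hK : 0 < (lam ^ p + 1) / κ := by positivity
  obtain ⟨G, hG, g, hg⟩ := exists_extremal_subcube hp hlam hLip hc hcβ hK hβ hlim ⟨n, hm⟩
  have hcp : 0 < c ^ p := Real.rpow_pos_of_pos hc _
  have hX : IsPM (fun x y => dist (g x) (g y)) := isPM_dist g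
  have hY : IsPM (fun x y => dist (G.F (g x)) (G.F (g y))) := isPM_dist (fun x => G.F (g x))
  have hXX := energy_le_singletons hp hX Finset.univ
  have hYY := energy_le_singletons hp hY Finset.univ
  have hYX := energy_lip hp hlam (hLip G hG) g Finset.univ
  rw [Finset.card_univ, Fintype.card_fin] at hXX hYY
  have hXD := energy_nonneg (p := p) hX Finset.univ
  have hYD := energy_nonneg (p := p) hY Finset.univ
  have hsX := hstab _ hX
  have hsY := hstab _ hY
  set X := (m : ℝ) ^ (p - 1) * ∑ l, energy p (fun x y => dist (g x) (g y)) {l}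
  set Y := (m : ℝ) ^ (p - 1) * ∑ l, energy p (fun x y => dist (G.F (g x)) (G.F (g y))) {l}
  set XD := energy p (fun x y => dist (g x) (g y)) Finset.univ
  set YD := energy p (fun x y => dist (G.F (g x)) (G.F (g y))) Finset.univ
  clear_value X Y XD YD
  obtain ⟨K, hKdef⟩ : ∃ K, K = (lam ^ p + 1) / κ := ⟨_, rfl⟩
  rw [← hKdef] at hg hK
  have d1 : 0 ≤ K * (X - XD) := mul_nonneg hK.le (by linarith)
  have d2 : 0 ≤ K * (Y - YD) := mul_nonneg hK.le (by linarith)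
  have d3 : 0 ≤ c ^ p * X := mul_nonneg hcp.le (by linarith)
  have hYDpos : 0 < YD := by linarith
  have hXpos : 0 < X := by
    by_contra! h
    have : XD ≤ 0 := by linarith
    nlinarith
  have hYpos : 0 < Y := by linarith
  have hcXY : c ^ p * X ≤ Y := by linarith
  have hclose : ∀ Z Δ : ℝ, 0 < Z → K * Δ < (lam ^ p + 1) * Z → Δ < κ * Z := by
    intro Z Δ hZ h
    rw [hKdef, div_mul_eq_mul_div, div_lt_iff₀ hκ, mul_assoc] at h
    rw [mul_comm]
    exact lt_of_mul_lt_mul_left h (by linarith)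
  have hX2 : (1 - κ) * X < XD := by
    have := hclose X (X - XD) hXpos (by nlinarith)
    linarith
  have hY2 : (1 - κ) * Y < YD := by
    have := hclose Y (Y - YD) hYpos (by nlinarith)
    linarith
  have hsX := hsX hXpos hX2
  have hsY := hsY hYpos hY2
  have h2m : (0 : ℝ) < 2 ^ m := by positivity
  have hn0 : (0 : ℝ) < n := by exact_mod_cast hn
  have hm0 : (0 : ℝ) < m := by exact_mod_cast hn.trans_le hnm
  have ha : 0 < (X / 2 ^ m) ^ (1 / p) := Real.rpow_pos_of_pos (div_pos hXpos h2m) _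
  have hb : 0 < (Y / 2 ^ m) ^ (1 / p) := Real.rpow_pos_of_pos (div_pos hYpos h2m) _
  have hac : (X / 2 ^ m) ^ (1 / p) * c ≤ (Y / 2 ^ m) ^ (1 / p) := by
    have : c = (c ^ p) ^ (1 / p) := by
      rw [← Real.rpow_mul hc.le, mul_one_div_cancel (by linarith), Real.rpow_one]
    nth_rw 1 [this]
    rw [← Real.mul_rpow (by positivity) hcp.le]
    refine Real.rpow_le_rpow (by positivity) ?_ (by positivity)
    rw [div_mul_eq_mul_div, mul_comm X]
    exact div_le_div_of_nonneg_right hcXY h2m.le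
  set a := (X / 2 ^ m) ^ (1 / p)
  set b := (Y / 2 ^ m) ^ (1 / p)
  clear_value a b
  refine ⟨G, hG, fun δ => g (padCube δ), a * (n / m), b * (n / m), by positivity, by positivity,
    ?_, fun ε δ => ?_⟩
  · calc a * (n / m) * c = a * c * (n / m) := by ring
      _ ≤ _ := by gcongr
  · have h1 := hsX (padCube ε) (padCube δ)
    have h2 := hsY (padCube ε) (padCube δ)
    rw [hdist_padCube hn hnm] at h1 h2
    refine ⟨(le_of_eq ?_).trans h1.1, h1.2.trans_eq ?_, (le_of_eq ?_).trans h2.1,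
      h2.2.trans_eq ?_⟩ <;> ring

end Embedding

/-! ### Comparison of the constants -/

section Main

variable {𝓕 : Set MetricMap} {p : ℝ} {lam : ℝ}

/-- Testing the inequality defining `b_{p,n}` on an almost isometric copy of the cube, whose
antipodal target distances are at least `b / D` and whose edges have length at most `a * D / n`. -/
lemma le_bConst_of_embedding (hp : 1 < p) (hlam : 0 < lam)
    (hLip : ∀ G ∈ 𝓕, ∀ x y : G.X, dist (G.F x) (G.F y) ≤ lam * dist x y) {c : ℝ}
    {n : ℕ} (hn : 0 < n)
    (h : ∀ D : ℝ, 1 < D → ∃ G ∈ 𝓕, ∃ f : (Fin n → Bool) → G.X, ∃ a b : ℝ,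
      0 < a ∧ 0 < b ∧ a * c ≤ b ∧ ∀ ε δ : Fin n → Bool,
        a / D * hdist n ε δ ≤ dist (f ε) (f δ) ∧
        dist (f ε) (f δ) ≤ a * D * hdist n ε δ ∧
        b / D * hdist n ε δ ≤ dist (G.F (f ε)) (G.F (f δ)) ∧
        dist (G.F (f ε)) (G.F (f δ)) ≤ b * D * hdist n ε δ) :
    c ≤ bConst 𝓕 p n := by
  refine le_of_forall_gt_imp_ge_of_dense fun β hβ => ?_
  have hβ0 : 0 < β := (bConst_nonneg n).trans_lt hβ
  have hn0 : (0 : ℝ) < n := by exact_mod_cast hn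
  have hAdm := admissible_of_lt hp hlam hLip hβ
  have hD : ∀ D : ℝ, 1 < D → c ≤ β * D ^ 2 := by
    intro D hD
    have hD0 : 0 < D := by linarith
    obtain ⟨G, hG, f, a, b, ha, hb, hab, hf⟩ := h D hD
    have h1 := hAdm G hG f
    have hlow : 2 ^ n * (b / D) ^ p ≤
        energy p (fun ε δ => dist (G.F (f ε)) (G.F (f δ))) Finset.univ := by
      have : ∀ ε : Fin n → Bool, (b / D) ^ p ≤
          dist (G.F (f ε)) (G.F (f (flipSet Finset.univ ε))) ^ p := fun ε => by
        refine Real.rpow_le_rpow (by positivity) ?_ (by linarith)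
        have h2 := (hf ε (flipSet Finset.univ ε)).2.2.1
        have h3 : hdist n ε (flipSet Finset.univ ε) = 1 := by
          simp [hdist, flipSet, hn0.ne']
        rwa [h3, mul_one] at h2
      have := Finset.sum_le_sum fun ε (_ : ε ∈ (Finset.univ : Finset (Fin n → Bool))) => this ε
      simpa [energy] using this
    have hup : ∀ i, energy p (fun ε δ => dist (f ε) (f δ)) {i} ≤ 2 ^ n * (a * D / n) ^ p := by
      intro i
      have : ∀ ε : Fin n → Bool, dist (f ε) (f (flipSet {i} ε)) ^ p ≤ (a * D / n) ^ p :=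
        fun ε => by
          refine Real.rpow_le_rpow dist_nonneg ?_ (by linarith)
          have h2 := (hf ε (flipSet {i} ε)).2.1
          have h3 : hdist n ε (flipSet {i} ε) = 1 / n := by
            have : (Finset.univ.filter fun j => ε j ≠ flipSet {i} ε j) = {i} := by
              ext j
              by_cases hj : j = i <;> simp [flipSet, hj]
            rw [hdist, this]
            simp
          rwa [h3, mul_one_div] at h2
      have := Finset.sum_le_sum fun ε (_ : ε ∈ (Finset.univ : Finset (Fin n → Bool))) => this ε
      simpa [energy] using this
    have hup2 : ∑ i, energy p (fun ε δ => dist (f ε) (f δ)) {i} ≤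
        n * (2 ^ n * (a * D / n) ^ p) := by
      have := Finset.sum_le_sum fun i (_ : i ∈ (Finset.univ : Finset (Fin n))) => hup i
      simpa using this
    have h4 : 2 ^ n * (b / D) ^ p ≤ 2 ^ n * (β * (a * D)) ^ p := by
      calc _ ≤ _ := hlow
        _ ≤ _ := h1
        _ ≤ β ^ p * (n : ℝ) ^ (p - 1) * (n * (2 ^ n * (a * D / n) ^ p)) := by gcongr
        _ = _ := by
          rw [Real.div_rpow (by positivity) hn0.le, Real.rpow_sub_one hn0.ne',
            Real.mul_rpow hβ0.le (by positivity)]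
          field_simp
    have h5 := le_of_mul_le_mul_left h4 (by positivity)
    rw [Real.rpow_le_rpow_iff (by positivity) (by positivity) (by linarith),
      div_le_iff₀ hD0] at h5
    refine le_of_mul_le_mul_left (a := a) ?_ ha
    linarith
  have hlim : Filter.Tendsto (fun D : ℝ => β * D ^ 2) (nhdsWithin 1 (Set.Ioi 1)) (nhds β) := by
    have : Filter.Tendsto (fun D : ℝ => β * D ^ 2) (nhds 1) (nhds (β * 1 ^ 2)) :=
      Continuous.tendsto (by fun_prop) 1
    rw [one_pow, mul_one] at this
    exact this.mono_left nhdsWithin_le_nhds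
  exact ge_of_tendsto hlim (Filter.eventually_of_mem self_mem_nhdsWithin fun D hD' => hD D hD')

end Main

/-- Quantitative relations between `c(𝓕)` and the limsups of the subtype constants
`b_{p,n}(𝓕)` and `b_{p,2^n}(𝓕)`. -/
theorem cConst_limsup_bConst (lam : ℝ) (hlam : 0 < lam) (𝓕 : Set MetricMap)
    (hLip : ∀ G ∈ 𝓕, ∀ x y : G.X, dist (G.F x) (G.F y) ≤ lam * dist x y)
    (p : ℝ) (hp : 1 < p) :
    cConst 𝓕 ≤ Filter.limsup (fun n : ℕ => bConst 𝓕 p n) Filter.atTop ∧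
    Filter.limsup (fun n : ℕ => bConst 𝓕 p (2 ^ n)) Filter.atTop ≤ cConst 𝓕 ∧
    (2 : ℝ) ^ (1 / p - 1) * Filter.limsup (fun n : ℕ => bConst 𝓕 p n) Filter.atTop ≤
      Filter.limsup (fun n : ℕ => bConst 𝓕 p (2 ^ n)) Filter.atTop := by
  have hub : ∀ n, bConst 𝓕 p n ≤ lam := fun n => bConst_le hlam (admissible_lam hp hlam hLip n)
  have hbdd : ∀ u : ℕ → ℕ, Filter.IsBoundedUnder (· ≤ ·) Filter.atTop
      fun n => bConst 𝓕 p (u n) := fun u =>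
    Filter.isBoundedUnder_of ⟨lam, fun n => hub _⟩
  have hcob : ∀ u : ℕ → ℕ, Filter.IsCoboundedUnder (· ≤ ·) Filter.atTop
      fun n => bConst 𝓕 p (u n) := fun u =>
    Filter.IsBoundedUnder.isCoboundedUnder_le
      (Filter.isBoundedUnder_of ⟨0, fun n => bConst_nonneg _⟩)
  have hanti : Antitone fun n : ℕ => bConst 𝓕 p (2 ^ n) := by
    refine antitone_nat_of_succ_le fun n => ?_
    have := bConst_le_of_blocks hp hlam hLip (n := 2 ^ (n + 1)) (k := 2 ^ n)
      (by rw [pow_succ]; omega) one_pos (by push_cast; rw [pow_succ]; linarith)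
    simpa using this
  obtain ⟨β, hβdef⟩ : ∃ β, β = Filter.limsup (fun n : ℕ => bConst 𝓕 p (2 ^ n)) Filter.atTop :=
    ⟨_, rfl⟩
  have hβ : ∀ n, β ≤ bConst 𝓕 p (2 ^ n) := fun n => by
    rw [hβdef]
    exact Filter.limsup_le_of_le (hcob _)
      ((Filter.eventually_ge_atTop n).mono fun k hk => hanti hk)
  have hev : ∀ b, β < b → ∀ᶠ n in Filter.atTop, bConst 𝓕 p (2 ^ n) < b := fun b hb => by
    rw [hβdef] at hb
    exact Filter.eventually_lt_of_limsup_lt hb (hbdd _)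
  have hmem : ∀ c ∈ { c : ℝ | 0 < c ∧ ∀ D : ℝ, 1 < D → ∀ n : ℕ, 0 < n →
      ∃ G ∈ 𝓕, ∃ f : (Fin n → Bool) → G.X, ∃ a b : ℝ, 0 < a ∧ 0 < b ∧ a * c ≤ b ∧
      ∀ ε δ : Fin n → Bool,
        a / D * hdist n ε δ ≤ dist (f ε) (f δ) ∧
        dist (f ε) (f δ) ≤ a * D * hdist n ε δ ∧
        b / D * hdist n ε δ ≤ dist (G.F (f ε)) (G.F (f δ)) ∧
        dist (G.F (f ε)) (G.F (f δ)) ≤ b * D * hdist n ε δ }, ∀ n, 0 < n → c ≤ bConst 𝓕 p n :=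
    fun c hc n hn => le_bConst_of_embedding hp hlam hLip hn fun D hD => hc.2 D hD n hn
  rw [← hβdef]
  refine ⟨?_, ?_, ?_⟩
  · have hle : ∀ n, 0 < n → cConst 𝓕 ≤ bConst 𝓕 p n := fun n hn =>
      Real.sSup_le (fun c hc => hmem c hc n hn) (bConst_nonneg n)
    exact Filter.le_limsup_of_frequently_le
      ((Filter.eventually_gt_atTop 0).mono fun n hn => hle n hn).frequently (hbdd id)
  · refine le_of_forall_lt_imp_le_of_dense fun c hcβ => ?_
    rcases le_or_gt c 0 with hc | hc
    · exact hc.trans (Real.sSup_nonneg fun c hc => hc.1.le)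
    · refine le_csSup ⟨bConst 𝓕 p 1, fun c hc => hmem c hc 1 one_pos⟩
        ⟨hc, fun D hD n hn => ?_⟩
      exact exists_embedding hp hlam hLip hc hcβ hβ (fun b hb => (hev b hb).exists) hD hn
  · have hpos : (0 : ℝ) < 2 ^ (1 - 1 / p) := by positivity
    rw [show (1 / p - 1 : ℝ) = -(1 - 1 / p) by ring, Real.rpow_neg zero_le_two,
      inv_mul_le_iff₀ hpos]
    rw [← div_le_iff₀' hpos]
    refine le_of_forall_gt_imp_ge_of_dense fun b hb => ?_
    rw [div_le_iff₀' hpos]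
    have hlog : Filter.Tendsto (Nat.log 2) Filter.atTop Filter.atTop :=
      Filter.tendsto_atTop.2 fun l => (Filter.eventually_ge_atTop (2 ^ l)).mono fun n hn =>
        Nat.le_log_of_pow_le one_lt_two hn
    refine Filter.limsup_le_of_le (hcob id) ?_
    filter_upwards [hlog.eventually (hev b hb), Filter.eventually_gt_atTop 0] with n hn hn0
    have h1 := Nat.pow_log_le_self 2 hn0.ne'
    have h2 := Nat.lt_pow_succ_log_self one_lt_two n
    rw [pow_succ] at h2
    have h3 : ((2 ^ Nat.log 2 n : ℕ) : ℝ) ≤ n := by exact_mod_cast h1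
    refine (bConst_le_of_blocks hp hlam hLip (n := n) (k := 2 ^ Nat.log 2 n) (by omega)
      two_pos (by linarith)).trans ?_
    gcongr
end
end

section
/- Let λ ∈ (0,∞), let 𝓕 be a family of λ-Lipschitz maps between metric spaces, let 1 < p < ∞, and let k, l ∈ ℕ satisfy l/2 ≤ k ≤ l. Then b_{p,k}(𝓕) ≤ 2^{1−1/p}·b_{p,l}(𝓕). More precisely, for any metric spaces (X,d_X),(Y,d_Y), any map F : X → Y, and any b > 0 such that every g : 2^l → X satisfies 𝔼 ϱ_Y^g(ε,−ε)^p ≤ b^p l^{p−1} ∑_{i=1}^l 𝔼 ϱ_X^g(ε,d_iε)^p, every f : 2^k → X satisfies 𝔼 ϱ_Y^f(ε,−ε)^p ≤ 2^{p−1} b^p k^{p−1} ∑_{i=1}^k 𝔼 ϱ_X^f(ε,d_iε)^p. -/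
/-!
A map `f` on the `k`-cube is pulled back to the `l`-cube along the restriction to the first `k`
coordinates. Restriction preserves the uniform measure and commutes with `ε ↦ -ε`; it turns a flip
of one of the first `k` coordinates into the corresponding flip, and it does not see flips of the
others. So the inequality for the pullback is the inequality for `f`, with `l ^ (p - 1)` in place
of `k ^ (p - 1)`, and `l ≤ 2 * k` gives the factor `2 ^ (p - 1)`
(`cubeE_inequality_of_le`).

To pass to the infima, the set of admissible constants for `l` must be nonempty, as the infimum of
the empty set of reals is `0`. The Lipschitz hypothesis provides this: the Lipschitz constant is
itself admissible (`cubeE_inequality_of_lipschitz`), by the triangle inequality along the path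
from `ε` to `-ε` flipping one coordinate at a time and the power mean inequality.
-/

open Finset

noncomputable section

/-- Restriction of a sign vector to its first `k` coordinates. -/
def restrictCube {k : ℕ} (m : ℕ) (ε : Fin (k + m) → Bool) : Fin k → Bool :=
  fun i => ε (Fin.castAdd m i)

lemma cubeE_restrictCube (k m : ℕ) (Φ : (Fin k → Bool) → ℝ) :
    cubeE (k + m) (fun ε => Φ (restrictCube m ε)) = cubeE k Φ := by
  unfold cubeE
  rw [← (Fin.appendEquiv (α := Bool) k m).sum_comp, Fintype.sum_prod_type]
  have h : ∀ (x : Fin k → Bool) (y : Fin m → Bool),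
      restrictCube m (Fin.appendEquiv k m (x, y)) = x := by
    intro x y
    funext i
    simp [restrictCube, Fin.appendEquiv]
  simp only [h]
  simp only [sum_const, card_univ, Fintype.card_fun, Fintype.card_bool, Fintype.card_fin,
    nsmul_eq_mul, ← Finset.mul_sum, pow_add]
  push_cast
  field_simp

lemma restrictCube_negCube {k m : ℕ} (ε : Fin (k + m) → Bool) :
    restrictCube m (negCube ε) = negCube (restrictCube m ε) := rfl

lemma restrictCube_flipCoord_castAdd {k m : ℕ} (i : Fin k) (ε : Fin (k + m) → Bool) :
    restrictCube m (flipCoord (Fin.castAdd m i) ε) = flipCoord i (restrictCube m ε) := by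
  funext j
  by_cases h : j = i
  · subst h
    simp [restrictCube, flipCoord]
  · simp [restrictCube, flipCoord, h]

lemma restrictCube_flipCoord_natAdd {k m : ℕ} (i : Fin m) (ε : Fin (k + m) → Bool) :
    restrictCube m (flipCoord (Fin.natAdd k i) ε) = restrictCube m ε := by
  funext j
  have h : Fin.castAdd m j ≠ Fin.natAdd k i := by
    intro h
    have := congrArg Fin.val h
    simp at this
    omega
  simp [restrictCube, flipCoord, Function.update_of_ne h]

lemma cubeE_nonneg (n : ℕ) {Φ : (Fin n → Bool) → ℝ} (h : ∀ ε, 0 ≤ Φ ε) : 0 ≤ cubeE n Φ :=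
  div_nonneg (Finset.sum_nonneg fun ε _ => h ε) (by positivity)

lemma cubeE_mono (n : ℕ) {Φ Ψ : (Fin n → Bool) → ℝ} (h : ∀ ε, Φ ε ≤ Ψ ε) :
    cubeE n Φ ≤ cubeE n Ψ :=
  div_le_div_of_nonneg_right (Finset.sum_le_sum fun ε _ => h ε) (by positivity)

/-- The inequality on the `l`-cube, applied to pullbacks along the restriction map, yields the
inequality on the `k`-cube with an additional factor `2 ^ (p - 1)`. -/
lemma cubeE_inequality_of_le {p : ℝ} (hp : 1 < p) {k l : ℕ} (hkl : k ≤ l) (hlk : l ≤ 2 * k)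
    {X Y : Type} [MetricSpace X] [MetricSpace Y] (F : X → Y) {b : ℝ} (hb : 0 < b)
    (H : ∀ g : (Fin l → Bool) → X,
        cubeE l (fun ε => dist (F (g ε)) (F (g (negCube ε))) ^ p)
          ≤ b ^ p * (l : ℝ) ^ (p - 1) *
            ∑ i : Fin l, cubeE l (fun ε => dist (g ε) (g (flipCoord i ε)) ^ p))
    (f : (Fin k → Bool) → X) :
    cubeE k (fun ε => dist (F (f ε)) (F (f (negCube ε))) ^ p)
      ≤ (2 : ℝ) ^ (p - 1) * b ^ p * (k : ℝ) ^ (p - 1) *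
        ∑ i : Fin k, cubeE k (fun ε => dist (f ε) (f (flipCoord i ε)) ^ p) := by
  obtain ⟨m, rfl⟩ := Nat.exists_eq_add_of_le hkl
  have h := H (fun ε => f (restrictCube m ε))
  have hp0 : p ≠ 0 := by linarith
  have hzero : cubeE (k + m) (fun _ => 0) = 0 := by simp [cubeE]
  simp only [restrictCube_negCube, Fin.sum_univ_add, restrictCube_flipCoord_castAdd,
    restrictCube_flipCoord_natAdd, dist_self, Real.zero_rpow hp0, hzero, sum_const_zero,
    add_zero] at h
  rw [cubeE_restrictCube k m (fun ε => dist (F (f ε)) (F (f (negCube ε))) ^ p)] at h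
  simp only [fun i => cubeE_restrictCube k m
    (fun ε => dist (f ε) (f (flipCoord i ε)) ^ p)] at h
  refine h.trans (mul_le_mul_of_nonneg_right ?_
    (Finset.sum_nonneg fun i _ => cubeE_nonneg k fun ε => Real.rpow_nonneg dist_nonneg p))
  have hlk' : ((k + m : ℕ) : ℝ) ≤ 2 * k := by exact_mod_cast hlk
  have hpow : ((k + m : ℕ) : ℝ) ^ (p - 1) ≤ 2 ^ (p - 1) * (k : ℝ) ^ (p - 1) := by
    rw [← Real.mul_rpow (by norm_num) (Nat.cast_nonneg k)]
    exact Real.rpow_le_rpow (Nat.cast_nonneg _) hlk' (by linarith)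
  calc b ^ p * ((k + m : ℕ) : ℝ) ^ (p - 1)
      ≤ b ^ p * (2 ^ (p - 1) * (k : ℝ) ^ (p - 1)) :=
        mul_le_mul_of_nonneg_left hpow (Real.rpow_nonneg hb.le p)
    _ = 2 ^ (p - 1) * b ^ p * (k : ℝ) ^ (p - 1) := by ring

/-- Flip the first `j` coordinates: the `j`-th point of the path from `ε` to `-ε`. -/
def flipFirst {n : ℕ} (j : ℕ) (ε : Fin n → Bool) : Fin n → Bool :=
  fun i => if (i : ℕ) < j then !(ε i) else ε i

lemma flipFirst_involutive {n : ℕ} (j : ℕ) :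
    Function.Involutive (flipFirst j : (Fin n → Bool) → Fin n → Bool) := by
  intro ε
  funext i
  by_cases h : (i : ℕ) < j <;> simp [flipFirst, h]

lemma flipFirst_zero {n : ℕ} (ε : Fin n → Bool) : flipFirst 0 ε = ε := by
  funext i
  simp [flipFirst]

lemma flipFirst_self {n : ℕ} (ε : Fin n → Bool) : flipFirst n ε = negCube ε := by
  funext i
  simp [flipFirst, negCube]

lemma flipFirst_succ {n : ℕ} (i : Fin n) (ε : Fin n → Bool) :
    flipFirst ((i : ℕ) + 1) ε = flipCoord i (flipFirst i ε) := by
  funext j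
  by_cases h : j = i
  · subst h
    simp [flipFirst, flipCoord]
  · have h' : (j : ℕ) ≠ i := fun e => h (Fin.ext e)
    have h'' : (j : ℕ) < (i : ℕ) + 1 ↔ (j : ℕ) < i := by omega
    simp [flipFirst, flipCoord, Function.update_of_ne h, h'']

lemma cubeE_flipFirst {n : ℕ} (j : ℕ) (Φ : (Fin n → Bool) → ℝ) :
    cubeE n (fun ε => Φ (flipFirst j ε)) = cubeE n Φ := by
  unfold cubeE
  exact congrArg (· / 2 ^ n) (Equiv.sum_comp (flipFirst_involutive (n := n) j).toPerm Φ)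

/-- The Lipschitz constant of `F` is admissible in the definition of `b_{p,n}`. -/
lemma cubeE_inequality_of_lipschitz {p : ℝ} (hp : 1 < p) (n : ℕ) {X Y : Type} [MetricSpace X]
    [MetricSpace Y] (F : X → Y) {lam : ℝ} (hlam : 0 < lam)
    (hF : ∀ x y, dist (F x) (F y) ≤ lam * dist x y) (f : (Fin n → Bool) → X) :
    cubeE n (fun ε => dist (F (f ε)) (F (f (negCube ε))) ^ p)
      ≤ lam ^ p * (n : ℝ) ^ (p - 1) *
        ∑ i : Fin n, cubeE n (fun ε => dist (f ε) (f (flipCoord i ε)) ^ p) := by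
  have hpt : ∀ ε, dist (F (f ε)) (F (f (negCube ε))) ^ p ≤ lam ^ p * (n : ℝ) ^ (p - 1) *
      ∑ i : Fin n, dist (f (flipFirst i ε)) (f (flipCoord i (flipFirst i ε))) ^ p := by
    intro ε
    have hpath : dist (f ε) (f (negCube ε)) ≤
        ∑ i : Fin n, dist (f (flipFirst i ε)) (f (flipCoord i (flipFirst i ε))) := by
      have h := dist_le_range_sum_dist (fun j => f (flipFirst j ε)) n
      rw [← Fin.sum_univ_eq_sum_range
        (fun j => dist (f (flipFirst j ε)) (f (flipFirst (j + 1) ε))) n] at h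
      simpa only [flipFirst_zero, flipFirst_self, flipFirst_succ] using h
    have hmean := Real.rpow_sum_le_const_mul_sum_rpow_of_nonneg (Finset.univ : Finset (Fin n))
      (f := fun i => dist (f (flipFirst i ε)) (f (flipCoord i (flipFirst i ε)))) hp.le
      (fun i _ => dist_nonneg)
    rw [Finset.card_univ, Fintype.card_fin] at hmean
    have hp0 : 0 ≤ p := by linarith
    calc dist (F (f ε)) (F (f (negCube ε))) ^ p
        ≤ (lam * dist (f ε) (f (negCube ε))) ^ p :=
          Real.rpow_le_rpow dist_nonneg (hF _ _) hp0
      _ = lam ^ p * dist (f ε) (f (negCube ε)) ^ p := Real.mul_rpow hlam.le dist_nonneg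
      _ ≤ lam ^ p * ((n : ℝ) ^ (p - 1) *
          ∑ i : Fin n, dist (f (flipFirst i ε)) (f (flipCoord i (flipFirst i ε))) ^ p) :=
          mul_le_mul_of_nonneg_left
            ((Real.rpow_le_rpow dist_nonneg hpath hp0).trans hmean) (Real.rpow_nonneg hlam.le p)
      _ = _ := by ring
  refine (cubeE_mono n hpt).trans_eq ?_
  -- Each point of the path is uniformly distributed when `ε` is.
  rw [← Finset.sum_congr rfl fun (i : Fin n) _ => cubeE_flipFirst (i : ℕ)
    (fun ε => dist (f ε) (f (flipCoord i ε)) ^ p)]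
  unfold cubeE
  rw [← Finset.mul_sum, Finset.sum_comm, ← Finset.sum_div, mul_div_assoc]

/-- If `l/2 ≤ k ≤ l` then `b_{p,k}(𝓕) ≤ 2^{1−1/p}·b_{p,l}(𝓕)`, together with the precise
pointwise statement. -/
theorem bConst_doubling (lam : ℝ) (hlam : 0 < lam) (𝓕 : Set MetricMap)
    (hLip : ∀ G ∈ 𝓕, ∀ x y : G.X, dist (G.F x) (G.F y) ≤ lam * dist x y)
    (p : ℝ) (hp : 1 < p) (k l : ℕ) (hk : 0 < k) (hkl : k ≤ l) (hlk : l ≤ 2 * k) :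
    bConst 𝓕 p k ≤ (2 : ℝ) ^ (1 - 1 / p) * bConst 𝓕 p l ∧
    ∀ (X Y : Type) [MetricSpace X] [MetricSpace Y] (F : X → Y) (b : ℝ), 0 < b →
      (∀ g : (Fin l → Bool) → X,
        cubeE l (fun ε => dist (F (g ε)) (F (g (negCube ε))) ^ p)
          ≤ b ^ p * (l : ℝ) ^ (p - 1) *
            ∑ i : Fin l, cubeE l (fun ε => dist (g ε) (g (flipCoord i ε)) ^ p)) →
      ∀ f : (Fin k → Bool) → X,
        cubeE k (fun ε => dist (F (f ε)) (F (f (negCube ε))) ^ p)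
          ≤ (2 : ℝ) ^ (p - 1) * b ^ p * (k : ℝ) ^ (p - 1) *
            ∑ i : Fin k, cubeE k (fun ε => dist (f ε) (f (flipCoord i ε)) ^ p) := by
  refine ⟨?_, fun X Y _ _ F b hb H f => cubeE_inequality_of_le hp hkl hlk F hb H f⟩
  have hc : (0 : ℝ) < 2 ^ (1 - 1 / p) := Real.rpow_pos_of_pos (by norm_num) _
  rw [← div_le_iff₀' hc]
  refine le_csInf
    ⟨lam, hlam, fun G hG f => cubeE_inequality_of_lipschitz hp l G.F hlam (hLip G hG) f⟩ ?_
  rintro b ⟨hb, H⟩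
  rw [div_le_iff₀' hc]
  refine csInf_le ⟨0, fun _ h => h.1.le⟩ ⟨mul_pos hc hb, fun G hG f => ?_⟩
  have hpow : ((2 : ℝ) ^ (1 - 1 / p) * b) ^ p = 2 ^ (p - 1) * b ^ p := by
    rw [Real.mul_rpow hc.le hb.le, ← Real.rpow_mul (by norm_num)]
    congr 2
    field_simp
  rw [hpow]
  exact cubeE_inequality_of_le hp hkl hlk G.F hb (H G hG) f
end
end

section
/- For every 1 < p < ∞, every n ∈ ℕ, and every Φ > 1, there exists φ = φ(p,n,Φ) ∈ (0,1) such that: whenever a = (a_1,…,a_n) ∈ ℝ^n satisfies (∑_{i=1}^n |a_i|)^p > φ·n^{p−1}·∑_{i=1}^n |a_i|^p, then max_{1≤i≤n} |a_i| ≤ Φ·min_{1≤i≤n} |a_i|. -/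
open Finset

noncomputable section

/-!
By homogeneity it suffices to treat vectors `b` of the standard simplex, where the claim concerns
the function `F b = n^{p-1} ∑ b_i^p`. Strict convexity of `x ↦ x^p` gives `F b > 1` for every
nonconstant `b` (`one_lt_of_not_flat`). The non-flat vectors `b` (those with `Φ b_j ≤ b_i` for some
`i, j`) form a compact subset of the simplex without constant vectors, so `F` is bounded below on
it by some `m > 1` (`exists_gap`), and `φ = 1 / m` works.
-/

/-- Strict power-mean inequality on the simplex, away from the constant vector. -/
lemma one_lt_of_not_flat {p : ℝ} (hp : 1 < p) {n : ℕ} (hn : 0 < n) {Φ : ℝ} (hΦ : 1 < Φ)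
    {b : Fin n → ℝ} (hb : b ∈ stdSimplex ℝ (Fin n)) {i j : Fin n} (hij : Φ * b j ≤ b i) :
    1 < (n : ℝ) ^ (p - 1) * ∑ k, b k ^ p := by
  obtain ⟨hb0, hb1⟩ := hb
  have hn' : (0 : ℝ) < n := by exact_mod_cast hn
  have hw : ∑ _k : Fin n, (n : ℝ)⁻¹ = 1 := by simp [hn'.ne']
  have hne : ∃ k ∈ (univ : Finset (Fin n)), ∃ l ∈ (univ : Finset (Fin n)), b k ≠ b l := by
    by_contra! h
    -- A constant vector on the simplex is positive, hence cannot satisfy `Φ b_j ≤ b_i`.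
    have hpos : 0 < b j := by
      refine (hb0 j).lt_of_ne' fun h0 => ?_
      have : ∑ k, b k = 0 :=
        sum_eq_zero fun k _ => (h k (mem_univ k) j (mem_univ j)).trans h0
      linarith
    have := h i (mem_univ i) j (mem_univ j)
    nlinarith
  have key := ((strictConvexOn_rpow hp).map_sum_lt_iff_of_pos (t := univ)
    (w := fun _ => (n : ℝ)⁻¹) (p := b) (fun _ _ => inv_pos.2 hn') hw (fun k _ => hb0 k)).2 hne
  simp only [smul_eq_mul, ← mul_sum, hb1, mul_one] at key
  rw [Real.inv_rpow hn'.le] at key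
  have hnp : 0 < (n : ℝ) ^ p := Real.rpow_pos_of_pos hn' p
  rw [Real.rpow_sub_one hn'.ne']
  calc (1 : ℝ) = (n : ℝ) ^ p * ((n : ℝ) ^ p)⁻¹ := (mul_inv_cancel₀ hnp.ne').symm
    _ < (n : ℝ) ^ p * ((n : ℝ)⁻¹ * ∑ k, b k ^ p) := by gcongr
    _ = _ := by ring

/-- Uniform version of `one_lt_of_not_flat`, by compactness of the set of non-flat vectors. -/
lemma exists_gap {p : ℝ} (hp : 1 < p) {n : ℕ} (hn : 0 < n) {Φ : ℝ} (hΦ : 1 < Φ) :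
    ∃ m : ℝ, 1 < m ∧ ∀ b ∈ stdSimplex ℝ (Fin n), ∀ i j : Fin n, Φ * b j ≤ b i →
      m ≤ (n : ℝ) ^ (p - 1) * ∑ k, b k ^ p := by
  let K : Set (Fin n → ℝ) :=
    stdSimplex ℝ (Fin n) ∩ ⋃ i : Fin n, ⋃ j : Fin n, {b | Φ * b j ≤ b i}
  have hK : IsCompact K := by
    refine (isCompact_stdSimplex ℝ (Fin n)).inter_right ?_
    refine isClosed_iUnion_of_finite fun i => isClosed_iUnion_of_finite fun j => ?_
    exact isClosed_le (by fun_prop) (by fun_prop)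
  have hF : Continuous fun b : Fin n → ℝ => (n : ℝ) ^ (p - 1) * ∑ k, b k ^ p := by
    refine continuous_const.mul (continuous_finsetSum _ fun k _ => ?_)
    exact (continuous_apply k).rpow_const fun _ => Or.inr (by linarith)
  have hmem : ∀ b ∈ stdSimplex ℝ (Fin n), ∀ i j : Fin n, Φ * b j ≤ b i → b ∈ K :=
    fun b hb i j hij => ⟨hb, Set.mem_iUnion₂.2 ⟨i, j, hij⟩⟩
  rcases K.eq_empty_or_nonempty with hE | hne
  · refine ⟨2, one_lt_two, fun b hb i j hij => ?_⟩
    have := hmem b hb i j hij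
    simp [hE] at this
  · obtain ⟨c, hc, hmin⟩ := hK.exists_isMinOn hne hF.continuousOn
    obtain ⟨i, j, hij⟩ := Set.mem_iUnion₂.1 hc.2
    exact ⟨_, one_lt_of_not_flat hp hn hΦ hc.1 hij,
      fun b hb i j hij => hmin (hmem b hb i j hij)⟩

/-- Lemma 3.1 ("flat" lemma): a vector in `ℝ^n` whose `ℓ_1` norm nearly attains the extremal
bound `n^{1−1/p}‖a‖_{ℓ_p}` must be nearly flat: `max_i |a_i| ≤ Φ·min_i |a_i|`. -/
theorem flat_lemma (p : ℝ) (hp : 1 < p) (n : ℕ) (hn : 0 < n) (Φ : ℝ) (hΦ : 1 < Φ) :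
    ∃ φ : ℝ, 0 < φ ∧ φ < 1 ∧
      ∀ a : Fin n → ℝ,
        (∑ i, |a i|) ^ p > φ * (n : ℝ) ^ (p - 1) * ∑ i, |a i| ^ p →
        ∀ i j : Fin n, |a i| ≤ Φ * |a j| := by
  obtain ⟨m, hm, H⟩ := exists_gap hp hn hΦ
  have hm0 : 0 < m := by linarith
  refine ⟨m⁻¹, inv_pos.2 hm0, inv_lt_one_of_one_lt₀ hm, fun a ha i j => ?_⟩
  by_contra! hij
  have hai : 0 < |a i| := lt_of_le_of_lt (by positivity) hij
  set S := ∑ i, |a i| with hS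
  have hS0 : 0 < S :=
    hai.trans_le (single_le_sum (fun k _ => abs_nonneg (a k)) (mem_univ i))
  have hSp : 0 < S ^ p := Real.rpow_pos_of_pos hS0 p
  have hb : (fun k => |a k| / S) ∈ stdSimplex ℝ (Fin n) :=
    ⟨fun k => by positivity, by rw [← sum_div, ← hS, div_self hS0.ne']⟩
  have h := H _ hb i j (by rw [← mul_div_assoc]; gcongr)
  have hsum : ∑ k, (|a k| / S) ^ p = (∑ k, |a k| ^ p) / S ^ p := by
    rw [sum_div]
    exact sum_congr rfl fun k _ => Real.div_rpow (abs_nonneg _) hS0.le p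
  rw [hsum, ← mul_div_assoc, le_div_iff₀ hSp] at h
  rw [gt_iff_lt, mul_assoc, inv_mul_lt_iff₀ hm0] at ha
  linarith
end
end

section
/- Fix 1 < p < ∞. Let (Ω, 𝒜, ℙ) be a probability space, let D_Y, D_X, E_Y, E_X : Ω → [0,∞) be measurable functions with E_X integrable, let λ, Θ > 0 and a, b, ν, μ ∈ (0,1), and assume: (i) pointwise everywhere on Ω: D_Y ≤ E_Y, D_X ≤ E_X, D_Y ≤ λ^p·D_X, E_Y ≤ λ^p·E_X, and D_Y ≤ (1+ν)Θ^p·E_X; (ii) 𝔼D_Y > (1−ν)Θ^p·𝔼E_X, 𝔼D_Y > (1−μ)·𝔼E_Y, and 𝔼D_X > (1−μ)·𝔼E_X; (iii) λ^p(2μ/a + 2ν/b) < Θ^p(1−ν). Then there exists ω ∈ Ω such that D_Y(ω) > (1−a)·E_Y(ω), D_X(ω) > (1−a)·E_X(ω), and D_Y(ω) > (1−b)Θ^p·E_X(ω). -/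
/-!
Write `L = lam ^ p` and `T = Θ ^ p`. If every point violated one of the three conclusions, then at
every point `DY` would be bounded by one of the nonnegative quantities `(EY - DY) / a`,
`L (EX - DX) / a`, `L ((1 + ν) T EX - DY) / (b T)`, hence by their sum. Integrating, the
expectation hypotheses bound `𝔼 DY` by `L (2 μ / a + 2 ν / b) 𝔼 EX ≤ (1 - ν) T 𝔼 EX`,
which contradicts the lower bound on `𝔼 DY`.
-/

open MeasureTheory

noncomputable section

/-- Lemma 3.2: existence of a point where all three expectational inequalities localize. -/
theorem expect_lemma (p : ℝ) (hp : 1 < p)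
    {Ω : Type} [MeasurableSpace Ω] (P : Measure Ω) [IsProbabilityMeasure P]
    (DY DX EY EX : Ω → ℝ)
    (hDYm : Measurable DY) (hDXm : Measurable DX)
    (hEYm : Measurable EY) (hEXm : Measurable EX)
    (hEXint : Integrable EX P)
    (hDY0 : ∀ ω, 0 ≤ DY ω) (hDX0 : ∀ ω, 0 ≤ DX ω)
    (hEY0 : ∀ ω, 0 ≤ EY ω) (hEX0 : ∀ ω, 0 ≤ EX ω)
    (lam Θ : ℝ) (hlam : 0 < lam) (hΘ : 0 < Θ)
    (a b ν μ : ℝ) (ha : 0 < a) (ha1 : a < 1) (hb : 0 < b) (hb1 : b < 1)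
    (hν : 0 < ν) (hν1 : ν < 1) (hμ : 0 < μ) (hμ1 : μ < 1)
    (h1 : ∀ ω, DY ω ≤ EY ω) (h2 : ∀ ω, DX ω ≤ EX ω)
    (h3 : ∀ ω, DY ω ≤ lam ^ p * DX ω) (h4 : ∀ ω, EY ω ≤ lam ^ p * EX ω)
    (h5 : ∀ ω, DY ω ≤ (1 + ν) * Θ ^ p * EX ω)
    (h6 : (∫ ω, DY ω ∂P) > (1 - ν) * Θ ^ p * ∫ ω, EX ω ∂P)
    (h7 : (∫ ω, DY ω ∂P) > (1 - μ) * ∫ ω, EY ω ∂P)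
    (h8 : (∫ ω, DX ω ∂P) > (1 - μ) * ∫ ω, EX ω ∂P)
    (h9 : lam ^ p * (2 * μ / a + 2 * ν / b) < Θ ^ p * (1 - ν)) :
    ∃ ω : Ω, DY ω > (1 - a) * EY ω ∧ DX ω > (1 - a) * EX ω ∧
      DY ω > (1 - b) * Θ ^ p * EX ω := by
  have hL : 0 < lam ^ p := Real.rpow_pos_of_pos hlam p
  have hT : 0 < Θ ^ p := Real.rpow_pos_of_pos hΘ p
  generalize lam ^ p = L at *
  generalize Θ ^ p = T at *
  have hEYint : Integrable EY P :=
    (hEXint.const_mul L).mono' hEYm.aestronglyMeasurable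
      (.of_forall fun ω => by simpa [abs_of_nonneg (hEY0 ω)] using h4 ω)
  have hDYint : Integrable DY P :=
    hEYint.mono' hDYm.aestronglyMeasurable
      (.of_forall fun ω => by simpa [abs_of_nonneg (hDY0 ω)] using h1 ω)
  have hDXint : Integrable DX P :=
    hEXint.mono' hDXm.aestronglyMeasurable
      (.of_forall fun ω => by simpa [abs_of_nonneg (hDX0 ω)] using h2 ω)
  by_contra! hcon
  have key : ∀ ω, DY ω ≤ a⁻¹ * (EY ω - DY ω) + (L / a) * (EX ω - DX ω)
      + (L / (b * T)) * ((1 + ν) * T * EX ω - DY ω) := by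
    intro ω
    have n1 : 0 ≤ a⁻¹ * (EY ω - DY ω) :=
      mul_nonneg (by positivity) (sub_nonneg.2 (h1 ω))
    have n2 : 0 ≤ (L / a) * (EX ω - DX ω) :=
      mul_nonneg (by positivity) (sub_nonneg.2 (h2 ω))
    have n3 : 0 ≤ (L / (b * T)) * ((1 + ν) * T * EX ω - DY ω) :=
      mul_nonneg (by positivity) (sub_nonneg.2 (h5 ω))
    have hLX : DY ω ≤ L * EX ω := (h1 ω).trans (h4 ω)
    by_cases c1 : DY ω > (1 - a) * EY ω
    · by_cases c2 : DX ω > (1 - a) * EX ω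
      · have c3 := hcon ω c1 c2
        have e : L * EX ω = (L / (b * T)) * (b * T * EX ω) := by field_simp
        have m : (L / (b * T)) * (b * T * EX ω)
            ≤ (L / (b * T)) * ((1 + ν) * T * EX ω - DY ω) := by
          have : 0 ≤ ν * T * EX ω := by have := hEX0 ω; positivity
          gcongr
          linarith
        linarith
      · have e : L * EX ω = (L / a) * (a * EX ω) := by field_simp
        have m : (L / a) * (a * EX ω) ≤ (L / a) * (EX ω - DX ω) := by
          gcongr
          linarith
        linarith
    · have e : EY ω = a⁻¹ * (a * EY ω) := by field_simp
      have m : a⁻¹ * (a * EY ω) ≤ a⁻¹ * (EY ω - DY ω) := by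
        gcongr
        linarith
      linarith [h1 ω]
  have i1 : Integrable (fun ω => a⁻¹ * (EY ω - DY ω)) P := (hEYint.sub hDYint).const_mul _
  have i2 : Integrable (fun ω => (L / a) * (EX ω - DX ω)) P := (hEXint.sub hDXint).const_mul _
  have i3 : Integrable (fun ω => (L / (b * T)) * ((1 + ν) * T * EX ω - DY ω)) P :=
    ((hEXint.const_mul _).sub hDYint).const_mul _
  have hint := integral_mono hDYint ((i1.add i2).add i3) key
  rw [integral_add' (i1.add i2) i3, integral_add' i1 i2, integral_const_mul, integral_const_mul,
    integral_const_mul, integral_sub hEYint hDYint, integral_sub hEXint hDXint,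
    integral_sub (hEXint.const_mul _) hDYint, integral_const_mul] at hint
  have hYX : ∫ ω, EY ω ∂P ≤ L * ∫ ω, EX ω ∂P := by
    rw [← integral_const_mul]
    exact integral_mono hEYint (hEXint.const_mul L) h4
  have hX0 : 0 ≤ ∫ ω, EX ω ∂P := integral_nonneg hEX0
  generalize ∫ ω, DY ω ∂P = dy at *
  generalize ∫ ω, DX ω ∂P = dx at *
  generalize ∫ ω, EY ω ∂P = ey at *
  generalize ∫ ω, EX ω ∂P = ex at *
  have b1 : a⁻¹ * (ey - dy) ≤ a⁻¹ * (μ * (L * ex)) := by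
    have : μ * ey ≤ μ * (L * ex) := by gcongr
    gcongr
    linarith
  have b2 : (L / a) * (ex - dx) ≤ (L / a) * (μ * ex) := by
    gcongr
    linarith
  have b3 : (L / (b * T)) * ((1 + ν) * T * ex - dy) ≤ (L / (b * T)) * (2 * ν * T * ex) := by
    gcongr
    linarith
  have e : a⁻¹ * (μ * (L * ex)) + (L / a) * (μ * ex) + (L / (b * T)) * (2 * ν * T * ex)
      = L * (2 * μ / a + 2 * ν / b) * ex := by
    field_simp
    ring
  have := mul_le_mul_of_nonneg_right h9.le hX0
  linarith
end
end

section
/- Fix 1 < p < ∞, natural numbers l_1,…,l_d, 0 < μ < 1, λ, Θ > 0, and M > λ/Θ. Then for any 0 < η₁ < 1 there exists 0 < η < η₁ with the following property: for any natural number l_{d+1}, if T is the (l_1,…,l_{d+1}) interval tree with levels Λ_0,…,Λ_{d+1} and (r_I)_{I∈T}, (s_I)_{I∈T} are nonnegative real numbers such that (i) r_I ≤ λ·s_I for each I ∈ T; (ii) r_I ≤ ∑_{J⁻=I} r_J and s_I ≤ ∑_{J⁻=I} s_J for each I ∈ T \ Λ_{d+1}; (iii) r_I^p ≤ (1+η)Θ^p·l_{d+1}^{p−1}·∑_{J⁻=I}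 s_J^p for each I ∈ Λ_d; and (iv) r_{[L]}^p > (1−η)Θ^p·(∏_{i=1}^{d+1} l_i^{p−1})·∑_{I∈Λ_{d+1}} s_I^p, where [L] is the root; then for every 0 ≤ j ≤ d, max_{I∈Λ_j} s_I ≤ M·min_{I∈Λ_j} s_I, and for every 0 ≤ i < d and every I₁ ∈ Λ_i, r_{I₁}^p > (1−μ)·l_{i+1}^{p−1}·∑_{J⁻=I₁} r_J^p. -/
/-!
Write `N = levN l d`, `R = r_[L]`. The inequalities `r_I ≤ ∑_{J⁻=I} r_J` give `R ≤ ∑_{Λ_d} r_I`,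
while the upper bound for `r_I ^ p` on `Λ_d` (summed over `Λ_d`) and the lower bound for `R ^ p` give
`N ^ (p-1) * ∑_{Λ_d} r_I ^ p ≤ (1+η)/(1-η) * R ^ p`. So the power mean
inequality on `Λ_d` is almost an equality, and strict convexity of `t ↦ t ^ p` forces
`r_I ≤ (1+ε) R / N` on `Λ_d` (`flat_of_almost_eq`), with `ε → 0` as `η → 0`. This upper bound passes
to every level (`upper_levels`), and since the sum of `r` over `Λ_j` is at least `R`, it yields the
lower bound `r_I ≥ (1 - N ε) R / |Λ_j|` (`lower_level`). The two bounds give the second conclusion.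

For the first, the upper bound for `r_I ^ p` bounds each block `∑_{J⁻=I} s_J ^ p`, `I ∈ Λ_d`, from below by a multiple of
`r_I ^ p`, hence almost by its average; as the lower bound for `R ^ p` controls the sum of all blocks, no block can much exceed
the average. Hölder then bounds `s_I` on `Λ_d` by nearly `R / (Θ N)`, this passes to all levels, and
comparison with `s_I ≥ r_I / lam` gives the ratio `lam / Θ < M` up to a factor near `1`. The parameters
`ε`, `η` come from continuity at `(0, 0)` (`exists_params`).
-/

open Finset

noncomputable section

/-!
The `(l 1, …, l (d+1))` interval tree is encoded as follows: the nodes at level `j`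
(for `0 ≤ j ≤ d+1`) are indexed by the natural numbers `k < levN l j`, where
`levN l j = l 1 * ⋯ * l j` is the cardinality of the `j`-th level `Λ_j`.  The children of the
node `k` at level `j` are the nodes `k * l (j+1) + t`, `t < l (j+1)`, at level `j+1`, and the
root (the interval `[L]`) is the node `0` at level `0`.  A family `(x_I)_{I ∈ T}` of reals
indexed by the tree is encoded as `x : ℕ → ℕ → ℝ`, with `x j k` the value at node `k` of
level `j`.
-/

/-- Cardinality of the `j`-th level `Λ_j` of the interval tree. -/
def levN (l : ℕ → ℕ) (j : ℕ) : ℕ := ∏ i ∈ Finset.Icc 1 j, l i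

/-- `∑_{J⁻ = I} x_J`, the sum of `x` over the children of node `k` at level `j`. -/
def childSum (l : ℕ → ℕ) (x : ℕ → ℕ → ℝ) (j k : ℕ) : ℝ :=
  ∑ t ∈ Finset.range (l (j + 1)), x (j + 1) (k * l (j + 1) + t)

/-- `∑_{J⁻ = I} x_J ^ p`, the sum of `x^p` over the children of node `k` at level `j`. -/
def childSumPow (l : ℕ → ℕ) (x : ℕ → ℕ → ℝ) (p : ℝ) (j k : ℕ) : ℝ :=
  ∑ t ∈ Finset.range (l (j + 1)), x (j + 1) (k * l (j + 1) + t) ^ p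

lemma levN_succ (l : ℕ → ℕ) (j : ℕ) : levN l (j + 1) = levN l j * l (j + 1) := by
  unfold levN
  rw [Finset.prod_Icc_succ_top (by omega)]

lemma sum_blocks (f : ℕ → ℝ) (a b : ℕ) :
    ∑ k ∈ range a, ∑ t ∈ range b, f (k * b + t) = ∑ m ∈ range (a * b), f m := by
  induction a with
  | zero => simp
  | succ a ih => rw [Finset.sum_range_succ, ih, Nat.succ_mul, Finset.sum_range_add]

lemma child_lt {a b k t : ℕ} (hk : k < a) (ht : t < b) : k * b + t < a * b := by
  nlinarith

/-- The gap `t ^ p - 1 - p (t - 1)` in Bernoulli's inequality is nondecreasing on `t ≥ 1`. -/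
lemma gap_mono {p ε t : ℝ} (hp : 1 < p) (hε : 0 < ε) (ht : 1 + ε ≤ t) :
    (1 + ε) ^ p - 1 - p * ε ≤ t ^ p - 1 - p * (t - 1) := by
  have h1 : (0 : ℝ) < 1 + ε := by linarith
  have hb := one_add_mul_self_le_rpow_one_add (s := t / (1 + ε) - 1)
    (by have : 0 ≤ t / (1 + ε) := div_nonneg (by linarith) h1.le
        linarith) hp.le
  have e1 : (1 + (t / (1 + ε) - 1)) = t / (1 + ε) := by ring
  rw [e1, Real.div_rpow (by linarith) h1.le, le_div_iff₀ (by positivity)] at hb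
  have e2 : (1 + ε) ^ p = (1 + ε) ^ (p - 1) * (1 + ε) := by
    rw [← Real.rpow_add_one h1.ne']; congr 1; ring
  have e3 : (1 + p * (t / (1 + ε) - 1)) * (1 + ε) ^ p
      = (1 + ε) ^ p + p * ((1 + ε) ^ (p - 1) * (t - (1 + ε))) := by
    rw [e2]; field_simp
  have e4 : (1 : ℝ) ≤ (1 + ε) ^ (p - 1) := Real.one_le_rpow (by linarith) (by linarith)
  have e5 : t - (1 + ε) ≤ (1 + ε) ^ (p - 1) * (t - (1 + ε)) :=
    le_mul_of_one_le_left (by linarith) e4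
  have e6 := mul_le_mul_of_nonneg_left e5 (by linarith : (0 : ℝ) ≤ p)
  linarith

/-- Stability of the power mean inequality: if it is an equality up to a factor `1 + κ`, with `κ`
small in terms of `N` and `ε`, then no term exceeds `1 + ε` times the average. -/
lemma flat_of_almost_eq {p ε κ R : ℝ} (hp : 1 < p) (hε : 0 < ε) (hR : 0 < R) {N : ℕ} (hN : 0 < N)
    (x : ℕ → ℝ) (hx : ∀ k < N, 0 ≤ x k) (hsum : R ≤ ∑ k ∈ range N, x k)
    (hpow : (N : ℝ) ^ (p - 1) * ∑ k ∈ range N, x k ^ p ≤ (1 + κ) * R ^ p)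
    (hκ : N * κ < (1 + ε) ^ p - 1 - p * ε) :
    ∀ k < N, x k ≤ (1 + ε) * R / N := by
  intro k hk
  by_contra! hlt
  have hN' : (0 : ℝ) < N := by exact_mod_cast hN
  set t : ℕ → ℝ := fun i => N / R * x i with htdef
  have ht0 : ∀ i < N, 0 ≤ t i := fun i hi => mul_nonneg (by positivity) (hx i hi)
  have htk : 1 + ε ≤ t k := by
    rw [div_lt_iff₀ hN'] at hlt
    simp only [htdef]
    rw [div_mul_eq_mul_div, le_div_iff₀ hR]
    linarith
  have hgap : ∀ i ∈ range N, 0 ≤ t i ^ p - 1 - p * (t i - 1) := by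
    intro i hi
    have := one_add_mul_self_le_rpow_one_add (s := t i - 1)
      (by have := ht0 i (mem_range.1 hi); linarith) hp.le
    have e : 1 + (t i - 1) = t i := by ring
    rw [e] at this
    linarith
  have h1 := Finset.single_le_sum hgap (mem_range.2 hk)
  have h2 : ∑ i ∈ range N, (t i ^ p - 1 - p * (t i - 1))
      = ∑ i ∈ range N, t i ^ p - N - p * (∑ i ∈ range N, t i - N) := by
    simp [Finset.sum_sub_distrib, ← Finset.mul_sum]
  have h3 : (N : ℝ) ≤ ∑ i ∈ range N, t i := by
    simp only [htdef]
    rw [← Finset.mul_sum, div_mul_eq_mul_div, le_div_iff₀ hR]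
    exact mul_le_mul_of_nonneg_left hsum hN'.le
  have h4 : ∑ i ∈ range N, t i ^ p ≤ N * (1 + κ) := by
    have : ∑ i ∈ range N, t i ^ p = N / R ^ p * ((N : ℝ) ^ (p - 1) * ∑ k ∈ range N, x k ^ p) := by
      rw [Finset.mul_sum, Finset.mul_sum]
      refine Finset.sum_congr rfl fun i hi => ?_
      simp only [htdef]
      rw [Real.mul_rpow (by positivity) (hx i (mem_range.1 hi)), Real.div_rpow hN'.le hR.le]
      have : (N : ℝ) ^ p = N ^ (p - 1) * N := by
        rw [← Real.rpow_add_one hN'.ne']; congr 1; ring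
      rw [this]; ring
    rw [this, div_mul_eq_mul_div, div_le_iff₀ (by positivity), mul_assoc]
    exact mul_le_mul_of_nonneg_left hpow hN'.le
  have h5 := gap_mono hp hε htk
  have h6 : 0 ≤ p * (∑ i ∈ range N, t i - N) := mul_nonneg (by linarith) (by linarith)
  rw [h2] at h1
  linarith

/-- An upper bound `K / |Λ_d|` on level `d` of a family with `x_I ≤ ∑_{J⁻=I} x_J` propagates to
the bound `K / |Λ_j|` on each level `j ≤ d`. -/
lemma upper_levels (l : ℕ → ℕ) (d : ℕ) (hl : ∀ j < d, 0 < l (j + 1)) (x : ℕ → ℕ → ℝ) (K : ℝ)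
    (hx : ∀ j < d, ∀ k < levN l j, x j k ≤ childSum l x j k)
    (hd : ∀ k < levN l d, x d k ≤ K / levN l d) :
    ∀ j ≤ d, ∀ k < levN l j, x j k ≤ K / levN l j := by
  intro j hj
  induction hj using Nat.decreasingInduction with
  | self => exact hd
  | of_succ j hj ih =>
    intro k hk
    refine (hx j hj k hk).trans ?_
    have hb : childSum l x j k ≤ ∑ t ∈ range (l (j + 1)), K / levN l (j + 1) := by
      refine Finset.sum_le_sum fun t ht => ih _ ?_
      rw [levN_succ]
      exact child_lt hk (mem_range.1 ht)
    refine hb.trans (le_of_eq ?_)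
    have h1 : (l (j + 1) : ℝ) ≠ 0 := by exact_mod_cast (hl j hj).ne'
    have h2 : (levN l j : ℝ) ≠ 0 := by
      have : levN l j ≠ 0 := by omega
      exact_mod_cast this
    rw [Finset.sum_const, card_range, levN_succ, nsmul_eq_mul]
    push_cast
    field_simp

lemma root_le_level (l : ℕ → ℕ) (d : ℕ) (x : ℕ → ℕ → ℝ)
    (hx : ∀ j < d, ∀ k < levN l j, x j k ≤ childSum l x j k) :
    ∀ j ≤ d, x 0 0 ≤ ∑ k ∈ range (levN l j), x j k := by
  intro j
  induction j with
  | zero => intro _; simp [levN]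
  | succ j ih =>
    intro hj
    refine (ih (by omega)).trans ?_
    rw [levN_succ, ← sum_blocks]
    exact Finset.sum_le_sum fun k hk => hx j (by omega) k (mem_range.1 hk)

/-- If every term is at most `1 + ε` times `R / n` while the sum is at least `R`, then no term is
much smaller than `R / n`. -/
lemma lower_level {ε R : ℝ} (hε : 0 < ε) (hR : 0 < R) {n N : ℕ} (hnN : n ≤ N) (x : ℕ → ℝ)
    (hsum : R ≤ ∑ k ∈ range n, x k) (hx : ∀ k < n, x k ≤ (1 + ε) * R / n) :
    ∀ k < n, (1 - N * ε) * R / n ≤ x k := by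
  intro k hk
  have hn : (0 : ℝ) < n := by exact_mod_cast (by omega : 0 < n)
  have hnN' : (n : ℝ) ≤ N := by exact_mod_cast hnN
  have h1 : ∑ i ∈ range n, ((1 + ε) * R / n - x i) ≤ n * ((1 + ε) * R / n) - R := by
    rw [Finset.sum_sub_distrib, Finset.sum_const, card_range, nsmul_eq_mul]
    linarith
  have h2 := Finset.single_le_sum (f := fun i => (1 + ε) * R / n - x i)
    (fun i hi => sub_nonneg.2 (hx i (mem_range.1 hi))) (mem_range.2 hk)
  have h3 : n * ((1 + ε) * R / n) = (1 + ε) * R := by field_simp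
  have h4 : (1 - N * ε) * R / n ≤ (1 + ε) * R / n - ε * R := by
    have : (1 + ε) * R / n - ε * R = ((1 + ε) * R - n * (ε * R)) / n := by field_simp
    rw [this]
    refine div_le_div_of_nonneg_right ?_ hn.le
    nlinarith [mul_pos hε hR]
  linarith

open Filter Topology in
/-- Choice of `ε` and then `η`, by continuity at `(0, 0)`; `Q` stands for `M * Θ / lam`. -/
lemma exists_params (p : ℝ) (hp : 1 < p) (N : ℕ) (μ Q : ℝ) (hμ : 0 < μ) (hQ : 1 < Q)
    (η₁ : ℝ) (hη₁ : 0 < η₁) (hη₁' : η₁ < 1) :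
    ∃ ε η : ℝ, 0 < ε ∧ 0 < η ∧ η < η₁ ∧ N * ε < 1 ∧
      (1 - μ) * (1 + ε) ^ p < (1 - N * ε) ^ p ∧
      N / (1 - η) - (N - 1) * (1 - N * ε) ^ p / (1 + η) < (Q * (1 - N * ε)) ^ p ∧
      N * ((1 + η) / (1 - η) - 1) < (1 + ε) ^ p - 1 - p * ε := by
  have hp0 : 0 ≤ p := by linarith
  have c0 : Continuous fun ε : ℝ => (1 - N * ε) ^ p :=
    Continuous.rpow_const (by fun_prop) fun _ => Or.inr hp0
  have c1 : Continuous fun ε : ℝ => (1 - μ) * (1 + ε) ^ p :=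
    continuous_const.mul (Continuous.rpow_const (by fun_prop) fun _ => Or.inr hp0)
  have c2 : Continuous fun ε : ℝ => (Q * (1 - N * ε)) ^ p :=
    Continuous.rpow_const (by fun_prop) fun _ => Or.inr hp0
  have a1 : ∀ᶠ ε : ℝ in 𝓝 0, N * ε < 1 :=
    ContinuousAt.eventually_lt (f := fun ε : ℝ => N * ε) (g := fun _ => (1 : ℝ))
      (by fun_prop) (by fun_prop) (by simp)
  have a2 : ∀ᶠ ε : ℝ in 𝓝 0, (1 - μ) * (1 + ε) ^ p < (1 - N * ε) ^ p :=
    c1.continuousAt.eventually_lt c0.continuousAt (by simp [hμ])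
  have a3 : ∀ᶠ ε : ℝ in 𝓝 0, N - (N - 1) * (1 - N * ε) ^ p < (Q * (1 - N * ε)) ^ p := by
    refine ContinuousAt.eventually_lt (f := fun ε : ℝ => N - (N - 1) * (1 - N * ε) ^ p)
      (continuous_const.sub (continuous_const.mul c0)).continuousAt c2.continuousAt ?_
    simpa using Real.one_lt_rpow hQ (by linarith)
  obtain ⟨ε, ⟨⟨b1, b2⟩, b3⟩, hε⟩ := ((((a1.and a2).and a3).filter_mono
    (nhdsWithin_le_nhds (s := Set.Ioi 0))).and self_mem_nhdsWithin).exists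
  have hε : 0 < ε := hε
  have hgap : 0 < (1 + ε) ^ p - 1 - p * ε := by
    have := one_add_mul_self_lt_rpow_one_add (s := ε) (by linarith) hε.ne' hp
    linarith
  have a4 : ∀ᶠ η : ℝ in 𝓝 0,
      N / (1 - η) - (N - 1) * (1 - N * ε) ^ p / (1 + η) < (Q * (1 - N * ε)) ^ p := by
    refine ContinuousAt.eventually_lt
      (f := fun η : ℝ => N / (1 - η) - (N - 1) * (1 - N * ε) ^ p / (1 + η)) ?_
      continuousAt_const (by simpa using b3)
    refine ContinuousAt.sub ?_ ?_ <;> refine ContinuousAt.div (by fun_prop) (by fun_prop) (by simp)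
  have a5 : ∀ᶠ η : ℝ in 𝓝 0, N * ((1 + η) / (1 - η) - 1) < (1 + ε) ^ p - 1 - p * ε := by
    refine ContinuousAt.eventually_lt (f := fun η : ℝ => N * ((1 + η) / (1 - η) - 1)) ?_
      continuousAt_const (by simpa using hgap)
    refine continuousAt_const.mul (ContinuousAt.sub ?_ continuousAt_const)
    exact ContinuousAt.div (by fun_prop) (by fun_prop) (by simp)
  obtain ⟨η, ⟨⟨d1, d2⟩, d3⟩, hη⟩ := ((((a4.and a5).and (gt_mem_nhds hη₁)).filter_mono
    (nhdsWithin_le_nhds (s := Set.Ioi 0))).and self_mem_nhdsWithin).exists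
  exact ⟨ε, η, hε, hη, d3, b1, b2, d1, d2⟩

/-- Lemma 3.3: choice of `η` forcing flatness of `(s_I)` on levels and near-equality
for `(r_I)` between consecutive levels. -/
theorem eta_lemma (p : ℝ) (hp : 1 < p) (d : ℕ) (l : ℕ → ℕ)
    (hl : ∀ i ∈ Finset.Icc 1 d, 0 < l i)
    (μ : ℝ) (hμ : 0 < μ) (hμ1 : μ < 1)
    (lam Θ M : ℝ) (hlam : 0 < lam) (hΘ : 0 < Θ) (hM : lam / Θ < M) :
    ∀ η₁ : ℝ, 0 < η₁ → η₁ < 1 →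
      ∃ η : ℝ, 0 < η ∧ η < η₁ ∧
        ∀ l' : ℕ → ℕ, (∀ i ∈ Finset.Icc 1 d, l' i = l i) → 0 < l' (d + 1) →
        ∀ r s : ℕ → ℕ → ℝ,
          (∀ j ≤ d + 1, ∀ k < levN l' j, 0 ≤ r j k ∧ 0 ≤ s j k) →
          (∀ j ≤ d + 1, ∀ k < levN l' j, r j k ≤ lam * s j k) →
          (∀ j ≤ d, ∀ k < levN l' j,
            r j k ≤ childSum l' r j k ∧ s j k ≤ childSum l' s j k) →
          (∀ k < levN l' d,
            r d k ^ p ≤ (1 + η) * Θ ^ p * (l' (d + 1) : ℝ) ^ (p - 1) * childSumPow l' s p d k) →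
          (r 0 0 ^ p > (1 - η) * Θ ^ p * (∏ i ∈ Finset.Icc 1 (d + 1), (l' i : ℝ) ^ (p - 1)) *
            ∑ k ∈ Finset.range (levN l' (d + 1)), s (d + 1) k ^ p) →
          (∀ j ≤ d, ∀ k < levN l' j, ∀ k' < levN l' j, s j k ≤ M * s j k') ∧
          (∀ i < d, ∀ k < levN l' i,
            r i k ^ p > (1 - μ) * (l' (i + 1) : ℝ) ^ (p - 1) * childSumPow l' r p i k) := by
  intro η₁ hη₁ hη₁'
  have hM0 : 0 < M := (div_pos hlam hΘ).trans hM
  have hQ : 1 < M * Θ / lam := by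
    rw [div_lt_iff₀ hΘ] at hM
    rwa [one_lt_div hlam]
  obtain ⟨ε, η, hε, hη, hηlt, hNε, hpar2, hpar1, hpar3⟩ :=
    exists_params p hp (levN l d) μ (M * Θ / lam) hμ hQ η₁ hη₁ hη₁'
  refine ⟨η, hη, hηlt, ?_⟩
  intro l' hl' hn r s h0 hrs hsup hiii hiv
  have hNeq : levN l' d = levN l d := Finset.prod_congr rfl hl'
  rw [← hNeq] at hNε hpar2 hpar1 hpar3
  have hlpos : ∀ j < d, 0 < l' (j + 1) := fun j hj => by
    have hm : j + 1 ∈ Finset.Icc 1 d := by simp; omega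
    rw [hl' _ hm]; exact hl _ hm
  have hlev : ∀ j ≤ d, 0 < levN l' j := fun j hj =>
    Finset.prod_pos fun i hi => by
      have hm : i ∈ Finset.Icc 1 d := by simp at hi ⊢; omega
      rw [hl' _ hm]; exact hl _ hm
  have hlevle : ∀ j ≤ d, levN l' j ≤ levN l' d := by
    intro j hj
    refine Finset.prod_le_prod_of_subset_of_one_le' (Finset.Icc_subset_Icc_right hj) ?_
    intro i hi _
    rw [hl' _ hi]; exact hl _ hi
  have h1η : 0 < 1 - η := by linarith
  have h1η' : 0 < 1 + η := by linarith
  have hp0 : 0 < p := by linarith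
  set N := levN l' d with hN
  have hNpos : 0 < N := hlev d le_rfl
  have hN' : (0 : ℝ) < N := by exact_mod_cast hNpos
  set n := l' (d + 1) with hndef
  have hn' : (0 : ℝ) < n := by exact_mod_cast hn
  set R := r 0 0 with hRdef
  have hR0 : 0 ≤ R := (h0 0 (by omega) 0 (hlev 0 (by omega))).1
  -- `S k` is `Θ ^ p` times the normalised block `∑_{J⁻ = I} s_J ^ p` for the `k`-th node `I` of `Λ_d`
  set S : ℕ → ℝ := fun k => Θ ^ p * (n : ℝ) ^ (p - 1) * childSumPow l' s p d k with hS
  have hchild : ∀ k < N, ∀ t < n, k * n + t < levN l' (d + 1) := fun k hk t ht => by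
    rw [levN_succ]; exact child_lt hk ht
  have hiv' : (1 - η) * ((N : ℝ) ^ (p - 1) * ∑ k ∈ range N, S k) < R ^ p := by
    refine lt_of_eq_of_lt ?_ hiv
    have e1 : ∏ i ∈ Finset.Icc 1 (d + 1), (l' i : ℝ) ^ (p - 1)
        = (N : ℝ) ^ (p - 1) * (n : ℝ) ^ (p - 1) := by
      rw [Finset.prod_Icc_succ_top (by omega),
        Real.finsetProd_rpow _ _ (fun i _ => Nat.cast_nonneg _), hN, levN]
      push_cast; rfl
    have e2 : ∑ k ∈ range (levN l' (d + 1)), s (d + 1) k ^ p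
        = ∑ k ∈ range N, childSumPow l' s p d k := by
      rw [levN_succ, ← sum_blocks]; rfl
    rw [e1, e2]
    simp only [hS]
    rw [← Finset.mul_sum]
    ring
  have hS0 : ∀ k < N, 0 ≤ S k := fun k hk => by
    refine mul_nonneg (by positivity) (Finset.sum_nonneg fun t ht => ?_)
    exact Real.rpow_nonneg (h0 (d + 1) le_rfl _ (hchild k hk t (mem_range.1 ht))).2 _
  have hRpos : 0 < R := by
    rcases hR0.eq_or_lt with h | h
    · exfalso
      rw [← h, Real.zero_rpow hp0.ne'] at hiv'
      have : 0 ≤ ∑ k ∈ range N, S k := Finset.sum_nonneg fun k hk => hS0 k (mem_range.1 hk)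
      have : 0 ≤ (1 - η) * ((N : ℝ) ^ (p - 1) * ∑ k ∈ range N, S k) := by positivity
      linarith
    · exact h
  have hiii' : ∀ k < N, r d k ^ p ≤ (1 + η) * S k := fun k hk => by
    refine (hiii k hk).trans (le_of_eq ?_)
    simp only [hS]; ring
  have hrsup : ∀ j < d, ∀ k < levN l' j, r j k ≤ childSum l' r j k :=
    fun j hj k hk => (hsup j hj.le k hk).1
  have hroot := root_le_level l' d r hrsup
  have hflat : ∀ k < N, r d k ≤ (1 + ε) * R / N := by
    refine flat_of_almost_eq (κ := (1 + η) / (1 - η) - 1) hp hε hRpos hNpos (r d)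
      (fun k hk => (h0 d (by omega) k hk).1) (hroot d le_rfl) ?_ hpar3
    have h1 : ∑ k ∈ range N, r d k ^ p ≤ (1 + η) * ∑ k ∈ range N, S k := by
      rw [Finset.mul_sum]
      exact Finset.sum_le_sum fun k hk => hiii' k (mem_range.1 hk)
    have h2 : (N : ℝ) ^ (p - 1) * ∑ k ∈ range N, S k ≤ R ^ p / (1 - η) := by
      rw [le_div_iff₀ h1η]; linarith
    calc (N : ℝ) ^ (p - 1) * ∑ k ∈ range N, r d k ^ p
        ≤ (N : ℝ) ^ (p - 1) * ((1 + η) * ∑ k ∈ range N, S k) := by gcongr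
      _ = (1 + η) * ((N : ℝ) ^ (p - 1) * ∑ k ∈ range N, S k) := by ring
      _ ≤ (1 + η) * (R ^ p / (1 - η)) := by gcongr
      _ = _ := by ring
  have hup : ∀ j ≤ d, ∀ k < levN l' j, r j k ≤ (1 + ε) * R / levN l' j :=
    upper_levels l' d hlpos r _ hrsup hflat
  have hlow : ∀ j ≤ d, ∀ k < levN l' j, (1 - N * ε) * R / levN l' j ≤ r j k :=
    fun j hj => lower_level hε hRpos (hlevle j hj) (r j) (hroot j hj) (hup j hj)
  have h1Nε : 0 < 1 - N * ε := by linarith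
  set ρ := R / N with hρ
  have hρpos : 0 < ρ := by positivity
  have hSlow : ∀ k < N, (1 - N * ε) ^ p / (1 + η) * ρ ^ p ≤ S k := fun k hk => by
    have h1 : ((1 - N * ε) * ρ) ^ p ≤ r d k ^ p := by
      refine Real.rpow_le_rpow (by positivity) ?_ hp0.le
      have := hlow d le_rfl k hk
      rwa [mul_div_assoc] at this
    rw [Real.mul_rpow h1Nε.le hρpos.le] at h1
    rw [div_mul_eq_mul_div, div_le_iff₀ h1η']
    linarith [hiii' k hk]
  have hStot : ∑ k ∈ range N, S k ≤ N / (1 - η) * ρ ^ p := by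
    have e : (N : ℝ) ^ (p - 1) * N = N ^ p := by
      rw [← Real.rpow_add_one hN'.ne']; congr 1; ring
    have e' : R ^ p = N ^ (p - 1) * (N * ρ ^ p) := by
      rw [hρ, Real.div_rpow hR0 hN'.le, ← mul_assoc, e]; field_simp
    have h := hiv'.le
    rw [e', mul_left_comm] at h
    have h' := le_of_mul_le_mul_left h (by positivity)
    rw [div_mul_eq_mul_div, le_div_iff₀ h1η]
    linarith
  have hSup : ∀ k < N, S k ≤ (M * Θ / lam * (1 - N * ε)) ^ p * ρ ^ p := fun k hk => by
    have h1 : ∑ i ∈ (range N).erase k, (1 - N * ε) ^ p / (1 + η) * ρ ^ p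
        ≤ ∑ i ∈ (range N).erase k, S i :=
      Finset.sum_le_sum fun i hi => hSlow i (mem_range.1 (Finset.mem_of_mem_erase hi))
    rw [Finset.sum_const, Finset.card_erase_of_mem (mem_range.2 hk), card_range, nsmul_eq_mul,
      Nat.cast_sub hNpos, Nat.cast_one] at h1
    have h2 := Finset.add_sum_erase (range N) S (mem_range.2 hk)
    have h3 := mul_le_mul_of_nonneg_right hpar1.le (Real.rpow_nonneg hρpos.le p)
    have h4 : (N / (1 - η) - (N - 1) * (1 - N * ε) ^ p / (1 + η)) * ρ ^ p
      = N / (1 - η) * ρ ^ p - (N - 1) * ((1 - N * ε) ^ p / (1 + η) * ρ ^ p) := by ring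
    linarith
  have hsd : ∀ k < N, s d k ≤ M / lam * (1 - N * ε) * R / N := fun k hk => by
    have hs0 : ∀ t ∈ range n, 0 ≤ s (d + 1) (k * n + t) := fun t ht =>
      (h0 (d + 1) le_rfl _ (hchild k hk t (mem_range.1 ht))).2
    have h1 : s d k ≤ childSum l' s d k := (hsup d le_rfl k hk).2
    have hsk : 0 ≤ s d k := (h0 d (by omega) k hk).2
    have h2 : s d k ^ p ≤ (n : ℝ) ^ (p - 1) * childSumPow l' s p d k := by
      refine (Real.rpow_le_rpow hsk h1 hp0.le).trans ?_
      have := Real.rpow_sum_le_const_mul_sum_rpow_of_nonneg (range n) hp.le hs0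
      rwa [card_range] at this
    have h3 : (Θ * s d k) ^ p ≤ (M * Θ / lam * (1 - N * ε) * ρ) ^ p := by
      rw [Real.mul_rpow hΘ.le hsk, Real.mul_rpow (by positivity) hρpos.le]
      refine le_trans ?_ (hSup k hk)
      simp only [hS]
      rw [mul_assoc]
      gcongr
    have h4 := (Real.rpow_le_rpow_iff (by positivity) (by positivity) hp0).1 h3
    have h5 : M * Θ / lam * (1 - N * ε) * ρ = Θ * (M / lam * (1 - N * ε) * R / N) := by
      rw [hρ]; ring
    rw [h5] at h4
    exact le_of_mul_le_mul_left h4 hΘ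
  have hsup' := upper_levels l' d hlpos s _ (fun j hj k hk => (hsup j hj.le k hk).2) hsd
  refine ⟨fun j hj k hk k' hk' => ?_, fun i hi k hk => ?_⟩
  · calc s j k ≤ M / lam * (1 - N * ε) * R / levN l' j := hsup' j hj k hk
      _ = M / lam * ((1 - N * ε) * R / levN l' j) := by ring
      _ ≤ M / lam * (lam * s j k') := by
          refine mul_le_mul_of_nonneg_left ?_ (by positivity)
          exact (hlow j hj k' hk').trans (hrs j (by omega) k' hk')
      _ = M * s j k' := by field_simp
  · have hm : (0 : ℝ) < l' (i + 1) := by exact_mod_cast hlpos i hi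
    have hNi : (0 : ℝ) < levN l' i := by exact_mod_cast hlev i hi.le
    set m := l' (i + 1) with hmdef
    set σ := R / levN l' i with hσ
    have hσpos : 0 < σ := by positivity
    have h1 : childSumPow l' r p i k ≤ m * ((1 + ε) * σ / m) ^ p := by
      have : childSumPow l' r p i k ≤ ∑ t ∈ range m, ((1 + ε) * σ / m) ^ p := by
        refine Finset.sum_le_sum fun t ht => ?_
        have hlt : k * m + t < levN l' (i + 1) := by
          rw [levN_succ]; exact child_lt hk (mem_range.1 ht)
        refine Real.rpow_le_rpow (h0 _ (by omega) _ hlt).1 ?_ hp0.le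
        refine (hup (i + 1) hi _ hlt).trans (le_of_eq ?_)
        rw [levN_succ, ← hmdef, hσ]; push_cast; field_simp
      rwa [Finset.sum_const, card_range, nsmul_eq_mul] at this
    have h2 : (m : ℝ) ^ (p - 1) * childSumPow l' r p i k ≤ (1 + ε) ^ p * σ ^ p := by
      refine (mul_le_mul_of_nonneg_left h1 (by positivity)).trans (le_of_eq ?_)
      have e : (m : ℝ) ^ (p - 1) * m = m ^ p := by
        rw [← Real.rpow_add_one hm.ne']; congr 1; ring
      rw [← mul_assoc, e, Real.div_rpow (by positivity) hm.le,
        Real.mul_rpow (by positivity) hσpos.le]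
      field_simp
    have h3 : (1 - N * ε) ^ p * σ ^ p ≤ r i k ^ p := by
      rw [← Real.mul_rpow h1Nε.le hσpos.le]
      refine Real.rpow_le_rpow (by positivity) ?_ hp0.le
      have := hlow i hi.le k hk
      rwa [mul_div_assoc] at this
    have h4 : (1 - μ) * (1 + ε) ^ p * σ ^ p < (1 - N * ε) ^ p * σ ^ p :=
      mul_lt_mul_of_pos_right hpar2 (by positivity)
    have h5 := mul_le_mul_of_nonneg_left h2 (by linarith : (0 : ℝ) ≤ 1 - μ)
    have h6 : (1 - μ) * (m : ℝ) ^ (p - 1) * childSumPow l' r p i k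
        = (1 - μ) * ((m : ℝ) ^ (p - 1) * childSumPow l' r p i k) := by ring
    rw [gt_iff_lt, h6]
    linarith
end
end
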